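/- Let G be a finite group whose Sylow 2-subgroup P is isomorphic to a generalized quaternion group, i.e. P ≅ QuaternionGroup(2^{n-2}) of order 2^n for some n ≥ 3. Then for every irreducible complex character χ of G, the restriction χ_P is a sum of characters of the form λ^P induced from irreducible characters λ of subgroups Q ≤ P with χ(1)_2 = |P : Q|. -/

import Mathlib

open scoped Classical

/-- The induced character (as a class function formula): for `f` a function on a
subgroup `H` of a finite group `G`, `inducedChar H f g = (1/|H|) ∑_{x ∈ G, xgx⁻¹ ∈ H} f (xgx⁻¹)`. -/
noncomputable def inducedChar {G : Type*} [Group G] [Fintype G] (H : Subgroup G)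
    (f : H → ℂ) : G → ℂ :=
  fun g => (Fintype.card H : ℂ)⁻¹ *
    ∑ x : G, if h : x * g * x⁻¹ ∈ H then f ⟨x * g * x⁻¹, h⟩ else 0

/-- `χ` is the character of an irreducible complex representation of `G`. -/
def IsIrreducibleCharacter {G : Type} [Group G] (χ : G → ℂ) : Prop :=
  ∃ V : FDRep ℂ G, CategoryTheory.Simple V ∧ χ = FDRep.character V

/-- The restriction of `χ` (a character of degree `d` of the ambient group `G`) to the
subgroup `P` is a sum of characters `λ^P` induced from irreducible characters `λ` of
subgroups `Q ≤ P` satisfying `d_p = |P : Q|` (the `p`-part of the degree equals the index). -/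
def SumInducedProperty (p : ℕ) {G : Type} [Group G] [Fintype G] (P : Subgroup G)
    (χ : G → ℂ) (d : ℕ) : Prop :=
  ∃ (n : ℕ) (Q : Fin n → Subgroup ↥P) (lam : (i : Fin n) → ↥(Q i) → ℂ),
    (∀ i, IsIrreducibleCharacter (lam i)) ∧
    (∀ i, p ^ (d.factorization p) = (Q i).index) ∧
    (∀ x : ↥P, χ ↑x = ∑ i, inducedChar (Q i) (lam i) x)

/-!
Let `P ≅ Q_{2^{k+2}}` and let `2^c` be the `2`-part of `χ(1)`; then `c ≤ k + 2`.

Vanishing: if `g` has order divisible by `2^r` with `r ≥ 2` and `r + c ≥ k + 3`, then `χ(g) = 0`.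
Write `g = vκ` with `v` a `2`-element and `κ` in the normal `2`-complement `K` of `C(v)`. The
average of `|χ|²` over `vK` is an algebraic integer divisible by a power of `2`, so by AM–GM over
its Galois conjugates it is either zero or large on average, while the orthogonality relations and
the fact that conjugates of `vK` hardly overlap give a contradictory upper bound.

If `c = 0`, decompose `χ_P` into irreducibles. If `c = k + 2`, then `χ` has defect zero and vanishes
on `P ∖ {1}`; involutions are treated separately, by an idempotent of the group ring. If
`c = k + 1`, then `χ_P` is supported on the centre of `P`.

In the remaining case `c = b + 1` with `b < k`, put `u = a^{2^b}`, where `a` generates the cyclic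
maximal subgroup of `P`, and let `K` be the normal `2`-complement of `C(u)`, which `P` normalizes.
Split `χ_P` into the parts `f_O` belonging to the `P`-orbits `O` on `Irr(K)`. Each `f_O` vanishes on
the `a^i` with `2^b ∤ i`, and `2^{b+1}` divides its degree. If no element of `P ∖ ⟨a⟩` fixes a point
of `O`, then `f_O` also vanishes on `P ∖ ⟨a⟩`. Otherwise `|O| ≤ 2^b`, and comparing divisibility
with a Cauchy–Schwarz bound shows that the eigenvalues `1` and `-1` of `u` on the `O`-part of `χ`
have equal multiplicity. Either way `f_O` is a sum of characters induced from index `2^{b+1}`.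
-/

open CategoryTheory Module Representation

/-! ### Characters of complex representations -/

section Traces

variable {V : Type*} [AddCommGroup V] [Module ℂ V] [FiniteDimensional ℂ V]

theorem trace_eq_add_trace_restrict {W W' : Submodule ℂ V} (h : IsCompl W W') {f : V →ₗ[ℂ] V}
    (hW : ∀ w ∈ W, f w ∈ W) (hW' : ∀ w ∈ W', f w ∈ W') :
    LinearMap.trace ℂ V f =
      LinearMap.trace ℂ W (f.restrict hW) + LinearMap.trace ℂ W' (f.restrict hW') := by
  let e := Submodule.prodEquivOfIsCompl W W' h
  have hf : f = e.conj ((f.restrict hW).prodMap (f.restrict hW')) := by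
    ext v
    obtain ⟨⟨a, b⟩, rfl⟩ := e.surjective v
    simp [LinearEquiv.conj_apply, e]
  rw [← LinearMap.trace_prodMap', ← LinearMap.trace_conj' _ e, ← hf]

theorem iSup_eigenspace_eq_top_of_pow_eq_one {n : ℕ} (hn : n ≠ 0) {X : End ℂ V} (hX : X ^ n = 1) :
    ⨆ μ, X.eigenspace μ = ⊤ := by
  have hsep : (Polynomial.X ^ n - Polynomial.C (1 : ℂ)).Separable :=
    Polynomial.separable_X_pow_sub_C 1 (by exact_mod_cast hn) one_ne_zero
  have hss : X.IsSemisimple :=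
    End.isSemisimple_of_squarefree_aeval_eq_zero hsep.squarefree (by simp [hX])
  simpa only [hss.isFinitelySemisimple.maxGenEigenspace_eq_eigenspace]
    using X.iSup_maxGenEigenspace_eq_top

theorem trace_pow_eq_sum_nthRootsFinset {n : ℕ} (hn : n ≠ 0) {X : End ℂ V} (hX : X ^ n = 1)
    (i : ℕ) :
    LinearMap.trace ℂ V (X ^ i) =
      ∑ μ ∈ Polynomial.nthRootsFinset n (1 : ℂ), (finrank ℂ (X.eigenspace μ) : ℂ) * μ ^ i := by
  have hpow : ∀ (j : ℕ) (μ : ℂ), ∀ v ∈ X.eigenspace μ, (X ^ j) v = μ ^ j • v := by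
    intro j μ v hv
    induction j with
    | zero => simp
    | succ j ih =>
      rw [pow_succ, End.mul_apply, End.mem_eigenspace_iff.mp hv, map_smul, ih, smul_smul, pow_succ']
  have hmaps : ∀ μ, Set.MapsTo (X ^ i) (X.eigenspace μ) (X.eigenspace μ) := fun μ v hv ↦ by
    rw [hpow i μ v hv]
    exact Submodule.smul_mem _ _ hv
  have hint : DirectSum.IsInternal X.eigenspace :=
    (DirectSum.isInternal_submodule_iff_iSupIndep_and_iSup_eq_top _).mpr
      ⟨X.eigenspaces_iSupIndep, iSup_eigenspace_eq_top_of_pow_eq_one hn hX⟩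
  have hroot : ∀ μ, X.eigenspace μ ≠ ⊥ → μ ∈ Polynomial.nthRootsFinset n (1 : ℂ) := by
    intro μ hμ
    obtain ⟨v, hv, hv0⟩ := Submodule.exists_mem_ne_zero_of_ne_bot hμ
    have h1 := hpow n μ v hv
    rw [hX, End.one_apply] at h1
    rw [Polynomial.mem_nthRootsFinset (Nat.pos_of_ne_zero hn)]
    exact smul_left_injective ℂ hv0 (by simpa using h1.symm)
  have hfin : {μ | X.eigenspace μ ≠ ⊥}.Finite :=
    (Finset.finite_toSet _).subset fun μ hμ ↦ hroot μ hμ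
  rw [LinearMap.trace_eq_sum_trace_restrict' hint hfin hmaps]
  refine Finset.sum_subset_zero_on_sdiff (fun μ hμ ↦ hroot μ (hfin.mem_toFinset.mp hμ)) ?_ ?_
  · intro μ hμ
    have hbot : X.eigenspace μ = ⊥ := by simpa using (Finset.mem_sdiff.mp hμ).2
    simp [hbot]
  · intro μ _
    have hscalar : (X ^ i).restrict (hmaps μ) = μ ^ i • LinearMap.id := by
      ext v
      exact hpow i μ v v.2
    rw [hscalar, map_smul, LinearMap.trace_id, smul_eq_mul, mul_comm]

end Traces

section Characters

variable {G V : Type*} [Group G] [AddCommGroup V] [Module ℂ V] (ρ : Representation ℂ G V)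

theorem character_conj_inv (g h : G) : ρ.character (h⁻¹ * g * h) = ρ.character g := by
  simpa using ρ.char_conj g h⁻¹

theorem isCompl_toSubmodule {σ τ : Subrepresentation ρ} (h : IsCompl σ τ) :
    IsCompl σ.toSubmodule τ.toSubmodule := by
  constructor
  · rw [disjoint_iff, ← Subrepresentation.toSubmodule_inf, h.inf_eq_bot]
    rfl
  · rw [codisjoint_iff, ← Subrepresentation.toSubmodule_sup, h.sup_eq_top]
    rfl

variable [FiniteDimensional ℂ V]

theorem character_pow_eq_sum_nthRootsFinset {g : G} {n : ℕ} (hn : n ≠ 0) (hg : g ^ n = 1) (i : ℕ) :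
    ρ.character (g ^ i) =
      ∑ μ ∈ Polynomial.nthRootsFinset n (1 : ℂ),
        (finrank ℂ (End.eigenspace (ρ g) μ) : ℂ) * μ ^ i := by
  rw [← trace_pow_eq_sum_nthRootsFinset hn (by rw [← map_pow, hg, map_one]), ← map_pow]
  rfl

theorem character_eq_sum_nthRootsFinset {g : G} {n : ℕ} (hn : n ≠ 0) (hg : g ^ n = 1) :
    ρ.character g =
      ∑ μ ∈ Polynomial.nthRootsFinset n (1 : ℂ), (finrank ℂ (End.eigenspace (ρ g) μ) : ℂ) * μ := by
  simpa using character_pow_eq_sum_nthRootsFinset ρ hn hg 1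

theorem character_inv [Finite G] (g : G) : ρ.character g⁻¹ = star (ρ.character g) := by
  have hn := (orderOf_pos g).ne'
  have hinv : g⁻¹ = g ^ (orderOf g - 1) := by
    rw [eq_comm, eq_inv_iff_mul_eq_one, ← pow_succ, Nat.sub_add_cancel (orderOf_pos g),
      pow_orderOf_eq_one]
  rw [hinv, character_pow_eq_sum_nthRootsFinset ρ hn (pow_orderOf_eq_one g),
    character_eq_sum_nthRootsFinset ρ hn (pow_orderOf_eq_one g), star_sum]
  refine Finset.sum_congr rfl fun μ hμ ↦ ?_
  have hμ1 : μ ^ orderOf g = 1 := (Polynomial.mem_nthRootsFinset (orderOf_pos g) _).mp hμ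
  have hconj : star μ = μ ^ (orderOf g - 1) := by
    rw [Complex.star_def, ← Complex.inv_eq_conj (Complex.norm_eq_one_of_pow_eq_one hμ1 hn), eq_comm]
    exact eq_inv_of_mul_eq_one_left (by rw [← pow_succ, Nat.sub_add_cancel (orderOf_pos g), hμ1])
  rw [star_mul', star_natCast, hconj]

theorem isIntegral_character [Finite G] (g : G) : IsIntegral ℤ (ρ.character g) := by
  rw [character_eq_sum_nthRootsFinset ρ (orderOf_pos g).ne' (pow_orderOf_eq_one g)]
  refine IsIntegral.sum _ fun μ hμ ↦
    (isIntegral_natCast _).mul (IsIntegral.of_pow (orderOf_pos g) ?_)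
  rw [(Polynomial.mem_nthRootsFinset (orderOf_pos g) _).mp hμ]
  exact isIntegral_one

theorem character_eq_add_of_isCompl {σ τ : Subrepresentation ρ} (h : IsCompl σ τ) :
    ρ.character = σ.toRepresentation.character + τ.toRepresentation.character :=
  funext fun g ↦ trace_eq_add_trace_restrict (isCompl_toSubmodule ρ h)
    (fun _ hw ↦ σ.apply_mem_toSubmodule g hw) (fun _ hw ↦ τ.apply_mem_toSubmodule g hw)

/-- The subrepresentation on the range of an endomorphism commuting with the action. -/
noncomputable def rangeSubrepresentation (e : V →ₗ[ℂ] V) (he : ∀ g, Commute (ρ g) e) :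
    Subrepresentation ρ where
  toSubmodule := LinearMap.range e
  apply_mem_toSubmodule g := by
    rintro _ ⟨v, rfl⟩
    exact ⟨ρ g v, (LinearMap.congr_fun (he g).eq v).symm⟩

theorem character_rangeSubrepresentation {e : V →ₗ[ℂ] V} (he : ∀ g, Commute (ρ g) e)
    (hidem : IsIdempotentElem e) (g : G) :
    (rangeSubrepresentation ρ e he).toRepresentation.character g =
      LinearMap.trace ℂ V (ρ g * e) := by
  have hfix : ∀ w ∈ LinearMap.range e, e w = w := by
    rintro _ ⟨v, rfl⟩
    exact LinearMap.congr_fun hidem.eq v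
  have hsplit : ρ g * e = (ρ g ∘ₗ (LinearMap.range e).subtype) ∘ₗ e.rangeRestrict := rfl
  rw [hsplit, LinearMap.trace_comp_comm']
  refine congrArg (LinearMap.trace ℂ _) (LinearMap.ext fun w ↦ Subtype.ext ?_)
  calc ρ g w = ρ g (e w) := by rw [hfix w w.2]
    _ = e (ρ g w) := LinearMap.congr_fun (he g).eq w

end Characters

section Irreducible

variable {G V : Type*} [Group G] [AddCommGroup V] [Module ℂ V] {ρ : Representation ℂ G V}

noncomputable instance invertibleNatCard (G : Type*) [Group G] [Finite G] :
    Invertible (Nat.card G : ℂ) :=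
  invertibleOfNonzero (by exact_mod_cast Nat.card_pos.ne')

theorem nontrivial_of_isIrreducible (hρ : ρ.IsIrreducible) : Nontrivial V := by
  by_contra hV
  rw [not_nontrivial_iff_subsingleton] at hV
  obtain ⟨σ, τ, hne⟩ := hρ.exists_pair_ne
  refine hne (Subrepresentation.toSubmodule_injective ?_)
  rw [Submodule.eq_bot_of_subsingleton (p := σ.toSubmodule),
    Submodule.eq_bot_of_subsingleton (p := τ.toSubmodule)]

theorem isIrreducible_of_eq_bot_or_eq_top [Nontrivial V]
    (h : ∀ σ : Subrepresentation ρ, σ.toSubmodule = ⊥ ∨ σ.toSubmodule = ⊤) : ρ.IsIrreducible where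
  exists_pair_ne := ⟨⊥, ⊤, fun heq ↦
    bot_ne_top (α := Submodule ℂ V) (congrArg Subrepresentation.toSubmodule heq)⟩
  eq_bot_or_eq_top σ := (h σ).imp (fun hσ ↦ Subrepresentation.toSubmodule_injective hσ)
    fun hσ ↦ Subrepresentation.toSubmodule_injective hσ

theorem commute_projection {σ τ : Subrepresentation ρ} (h : IsCompl σ τ) (g : G) :
    Commute (ρ g) (σ.toSubmodule.projection τ.toSubmodule (isCompl_toSubmodule ρ h)) := by
  have hc := isCompl_toSubmodule ρ h
  refine LinearMap.ext fun v ↦ ?_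
  obtain ⟨s, t, rfl⟩ : ∃ (s : σ.toSubmodule) (t : τ.toSubmodule), (s : V) + t = v :=
    let ⟨s, t, hst, _⟩ := Submodule.existsUnique_add_of_isCompl hc v
    ⟨s, t, hst⟩
  simp only [End.mul_apply, map_add, Submodule.projection_apply_left,
    Submodule.projection_apply_right, map_zero, add_zero]
  rw [Submodule.projection_apply_of_mem_left hc (σ.apply_mem_toSubmodule g s.2),
    (Submodule.projection_apply_eq_zero_iff hc).mpr (τ.apply_mem_toSubmodule g t.2), add_zero]

theorem isIrreducible_of_commute_imp_scalar [Finite G] [Nontrivial V]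
    (h : ∀ T : V →ₗ[ℂ] V, (∀ g, Commute (ρ g) T) → ∃ c : ℂ, T = c • 1) : ρ.IsIrreducible := by
  refine isIrreducible_of_eq_bot_or_eq_top fun σ ↦ ?_
  obtain ⟨τ, hστ⟩ := exists_isCompl σ
  obtain ⟨c, hproj⟩ := h _ (commute_projection hστ)
  have hrange := Submodule.range_projection (isCompl_toSubmodule ρ hστ)
  rw [hproj] at hrange
  rcases eq_or_ne c 0 with rfl | hc
  · exact .inl (hrange.symm.trans (by rw [zero_smul, LinearMap.range_zero]))
  · exact .inr (hrange.symm.trans (by rw [LinearMap.range_smul _ _ hc]; exact LinearMap.range_id))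

variable [FiniteDimensional ℂ V]

theorem exists_eq_smul_one_of_commute (hρ : ρ.IsIrreducible) {T : V →ₗ[ℂ] V}
    (hT : ∀ g, Commute (ρ g) T) : ∃ c : ℂ, T = c • 1 := by
  obtain ⟨c, hc⟩ := IsIrreducible.algebraMap_intertwiningMap_bijective_of_isAlgClosed.surjective
    (LinearMap.intertwiningMap_of_isIntertwiningMap ρ ρ T
      fun g v ↦ (LinearMap.congr_fun (hT g).eq v).symm)
  exact ⟨c, LinearMap.ext fun v ↦ (DFunLike.congr_fun hc v).symm⟩

theorem finrank_ne_zero_of_isIrreducible (hρ : ρ.IsIrreducible) : finrank ℂ V ≠ 0 :=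
  have := nontrivial_of_isIrreducible hρ
  finrank_pos.ne'

theorem sum_character_mul_character_inv [Fintype G] (hρ : ρ.IsIrreducible) :
    ∑ g, ρ.character g * ρ.character g⁻¹ = Nat.card G := by
  have h := card_inv_mul_sum_char_mul_char_eq_finrank ρ ρ
  rw [IsIrreducible.finrank_intertwiningMap_self, Nat.cast_one] at h
  exact (inv_mul_eq_one₀ (by exact_mod_cast Nat.card_pos.ne')).mp h |>.symm

theorem sum_norm_character_sq [Fintype G] (hρ : ρ.IsIrreducible) :
    ∑ g, ‖ρ.character g‖ ^ 2 = Nat.card G := by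
  have h := sum_character_mul_character_inv hρ
  simp_rw [character_inv, Complex.star_def, Complex.mul_conj'] at h
  exact_mod_cast h

theorem isIrreducible_of_simple {G : Type} [Group G] [Finite G] (V : FDRep ℂ G) [Simple V] :
    IsIrreducible V.ρ := by
  have hid : 𝟙 V ≠ 0 := id_nonzero V
  have : Nontrivial V := by
    by_contra hV
    rw [not_nontrivial_iff_subsingleton] at hV
    exact hid (by ext v; exact Subsingleton.elim (α := V) _ _)
  refine isIrreducible_of_commute_imp_scalar fun T hT ↦ ?_
  let f : V ⟶ V := ⟨InducedCategory.homMk (ModuleCat.ofHom T), fun g ↦ by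
    ext v
    exact (LinearMap.congr_fun (hT g).eq v).symm⟩
  obtain ⟨c, hc⟩ :=
    (finrank_eq_one_iff_of_nonzero' _ hid).mp (finrank_endomorphism_simple_eq_one ℂ V) f
  exact ⟨c, (congrArg (fun q : V ⟶ V ↦ q.hom.hom.hom) hc).symm⟩

theorem isIrreducibleCharacter_character {G V : Type} [Group G] [Finite G] [AddCommGroup V]
    [Module ℂ V] [FiniteDimensional ℂ V] {ρ : Representation ℂ G V} (hρ : ρ.IsIrreducible) :
    IsIrreducibleCharacter ρ.character := by
  have := Fintype.ofFinite G
  exact ⟨FDRep.of ρ, (FDRep.simple_iff_char_is_norm_one _).mpr (sum_character_mul_character_inv hρ),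
    rfl⟩

theorem exists_isIrreducible_of_isIrreducibleCharacter {G : Type} [Group G] [Finite G] {φ : G → ℂ}
    (hφ : IsIrreducibleCharacter φ) :
    ∃ (V : Type) (_ : AddCommGroup V) (_ : Module ℂ V) (_ : FiniteDimensional ℂ V)
      (ρ : Representation ℂ G V), ρ.IsIrreducible ∧ ρ.character = φ :=
  let ⟨V, _, hV⟩ := hφ
  ⟨V, inferInstance, inferInstance, inferInstance, V.ρ, isIrreducible_of_simple V, hV.symm⟩

theorem sum_mul_inv_of_isIrreducibleCharacter {G : Type} [Group G] [Fintype G] {φ ψ : G → ℂ}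
    (hφ : IsIrreducibleCharacter φ) (hψ : IsIrreducibleCharacter ψ) :
    ∑ g, φ g * ψ g⁻¹ = if φ = ψ then (Nat.card G : ℂ) else 0 := by
  obtain ⟨V, _, _, _, ρ, hρ, rfl⟩ := exists_isIrreducible_of_isIrreducibleCharacter hφ
  obtain ⟨W, _, _, _, σ, hσ, rfl⟩ := exists_isIrreducible_of_isIrreducibleCharacter hψ
  split_ifs with heq
  · rw [← heq, sum_character_mul_character_inv hρ]
  · have hempty : ¬ Nonempty (σ.Equiv ρ) := fun ⟨i⟩ ↦ heq (char_iso i).symm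
    have h := char_orthonormal ρ σ
    rw [if_neg hempty] at h
    exact (mul_eq_zero.mp h).resolve_left
      (inv_ne_zero (by exact_mod_cast Nat.card_pos.ne'))

theorem character_mem_closure_isIrreducibleCharacter {G V : Type} [Group G] [Finite G]
    [AddCommGroup V] [Module ℂ V] [FiniteDimensional ℂ V] (ρ : Representation ℂ G V) :
    ρ.character ∈ AddSubmonoid.closure {φ : G → ℂ | IsIrreducibleCharacter φ} := by
  induction hn : finrank ℂ V using Nat.strong_induction_on generalizing V with
  | _ n ih =>
  rcases subsingleton_or_nontrivial V with hV | hV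
  · have hzero : ρ.character = 0 := funext fun g ↦ by
      rw [Representation.character, Subsingleton.elim (ρ g) 0, map_zero, Pi.zero_apply]
    exact hzero ▸ zero_mem _
  by_cases hρ : ρ.IsIrreducible
  · exact AddSubmonoid.subset_closure (isIrreducibleCharacter_character hρ)
  obtain ⟨σ, hbot, htop⟩ : ∃ σ : Subrepresentation ρ, σ.toSubmodule ≠ ⊥ ∧ σ.toSubmodule ≠ ⊤ := by
    by_contra! hall
    exact hρ (isIrreducible_of_eq_bot_or_eq_top fun σ ↦ or_iff_not_imp_left.mpr (hall σ))
  obtain ⟨τ, hστ⟩ := exists_isCompl σ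
  have hadd := Submodule.finrank_add_eq_of_isCompl (isCompl_toSubmodule ρ hστ)
  have hσlt := Submodule.finrank_lt htop
  have hσpos : 0 < finrank ℂ σ.toSubmodule :=
    finrank_pos_iff.mpr (Submodule.nontrivial_iff_ne_bot.mpr hbot)
  rw [character_eq_add_of_isCompl ρ hστ]
  exact add_mem (ih _ (by omega) _ rfl) (ih _ (by omega) _ rfl)

end Irreducible

/-! ### `p`-integral complex numbers and central characters -/

section PIntegers

/-- The complex numbers that become algebraic integers after multiplication by some natural number
coprime to `p`. -/
noncomputable def pIntegers (p : ℕ) : Subring ℂ where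
  carrier := {z | ∃ m : ℕ, p.Coprime m ∧ IsIntegral ℤ ((m : ℂ) * z)}
  mul_mem' := by
    rintro a b ⟨m, hm, ha⟩ ⟨n, hn, hb⟩
    refine ⟨m * n, hm.mul_right hn, ?_⟩
    have hmul : ((m * n : ℕ) : ℂ) * (a * b) = m * a * (n * b) := by
      push_cast
      ring
    exact hmul ▸ ha.mul hb
  one_mem' := ⟨1, p.coprime_one_right, by simpa using isIntegral_one⟩
  add_mem' := by
    rintro a b ⟨m, hm, ha⟩ ⟨n, hn, hb⟩
    refine ⟨m * n, hm.mul_right hn, ?_⟩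
    have hadd : ((m * n : ℕ) : ℂ) * (a + b) = n * (m * a) + m * (n * b) := by
      push_cast
      ring
    exact hadd ▸ ((isIntegral_natCast n).mul ha).add ((isIntegral_natCast m).mul hb)
  zero_mem' := ⟨1, p.coprime_one_right, by simpa using isIntegral_zero⟩
  neg_mem' := by
    rintro a ⟨m, hm, ha⟩
    exact ⟨m, hm, by simpa using ha.neg⟩

variable {p : ℕ}

theorem mem_pIntegers_of_isIntegral {z : ℂ} (hz : IsIntegral ℤ z) : z ∈ pIntegers p :=
  ⟨1, p.coprime_one_right, by simpa using hz⟩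

theorem natCast_inv_mem_pIntegers {m : ℕ} (hm : p.Coprime m) : (m : ℂ)⁻¹ ∈ pIntegers p := by
  rcases eq_or_ne m 0 with rfl | hm0
  · simp
  · exact ⟨m, hm, by rw [mul_inv_cancel₀ (by exact_mod_cast hm0)]; exact isIntegral_one⟩

theorem pow_dvd_of_div_mem_pIntegers (hp : p ≠ 0) {k : ℤ} {t : ℕ}
    (h : (k : ℂ) / p ^ t ∈ pIntegers p) : (p : ℤ) ^ t ∣ k := by
  obtain ⟨m, hm, hint⟩ := h
  have hcast : (m : ℂ) * (k / p ^ t) = algebraMap ℚ ℂ ((m : ℚ) * (k / p ^ t)) := by simp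
  rw [hcast, isIntegral_algebraMap_iff (algebraMap ℚ ℂ).injective] at hint
  obtain ⟨j, hj⟩ := IsIntegrallyClosed.algebraMap_eq_of_integral hint
  have hmul : (m : ℤ) * k = p ^ t * j := by
    have hj' : (j : ℚ) = m * (k / p ^ t) := by simpa using hj
    have hp' : (p : ℚ) ^ t ≠ 0 := by positivity
    have : (m : ℚ) * k = p ^ t * j := by
      rw [hj']
      field_simp
    exact_mod_cast this
  exact (Nat.isCoprime_iff_coprime.mpr hm).pow_left.dvd_of_dvd_mul_left ⟨j, hmul⟩

theorem pow_dvd_of_natCast_div_mem_pIntegers (hp : p ≠ 0) {k t : ℕ}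
    (h : (k : ℂ) / p ^ t ∈ pIntegers p) : p ^ t ∣ k :=
  Int.natCast_dvd_natCast.mp
    (by simpa using pow_dvd_of_div_mem_pIntegers (k := k) hp (by simpa using h))

theorem exists_coprime_forall_isIntegral_mul {ι : Type*} (s : Finset ι) {B : ι → ℂ}
    (hB : ∀ i, B i ∈ pIntegers p) :
    ∃ M : ℕ, p.Coprime M ∧ ∀ i ∈ s, IsIntegral ℤ ((M : ℂ) * B i) := by
  choose m hm hint using hB
  refine ⟨∏ i ∈ s, m i, Nat.Coprime.prod_right fun i _ ↦ hm i, fun i hi ↦ ?_⟩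
  rw [← Finset.prod_erase_mul s m hi, Nat.cast_mul, mul_assoc]
  exact (isIntegral_natCast _).mul (hint i)

end PIntegers

section CentralCharacter

variable {G V : Type*} [Group G] [Fintype G] [AddCommGroup V] [Module ℂ V]
  {ρ : Representation ℂ G V} {p : ℕ}

theorem isIntegral_of_sum_smul_eq_smul_one [Nontrivial V] {B : G → ℂ}
    (hB : ∀ g, IsIntegral ℤ (B g)) {c : ℂ} (h : ∑ g, B g • ρ g = c • 1) : IsIntegral ℤ c := by
  let O := integralClosure ℤ ℂ
  obtain ⟨v, hv⟩ := exists_ne (0 : V)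
  let N : Submodule O V := Submodule.span O (Set.range fun g ↦ ρ g v)
  have hmem : ∀ g, ρ g v ∈ N := fun g ↦ Submodule.subset_span ⟨g, rfl⟩
  have hN : N ≠ ⊥ := fun hN ↦ hv (by simpa [hN] using hmem 1)
  have hsmul : ∀ n ∈ N, c • n ∈ N := by
    intro n hn
    induction hn using Submodule.span_induction with
    | mem x hx =>
      obtain ⟨k, rfl⟩ := hx
      have hck : c • ρ k v = ∑ g, (⟨B g, hB g⟩ : O) • ρ (g * k) v := by
        have := LinearMap.congr_fun h (ρ k v)
        simp only [LinearMap.sum_apply, LinearMap.smul_apply, End.one_apply] at this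
        simp only [← this, map_mul]
        rfl
      exact hck ▸ N.sum_mem fun g _ ↦ N.smul_mem _ (hmem _)
    | zero => simp
    | add x y _ _ hx hy => simpa only [smul_add] using N.add_mem hx hy
    | smul a x _ hx => simpa only [smul_comm c a] using N.smul_mem _ hx
  have hc : IsIntegral O c :=
    isIntegral_of_smul_mem_submodule N hN (Submodule.fg_span (Set.finite_range _)) c hsmul
  exact isIntegral_trans (R := ℤ) c hc

theorem mem_pIntegers_of_sum_smul_eq_smul_one [Nontrivial V] {B : G → ℂ}
    (hB : ∀ g, B g ∈ pIntegers p) {c : ℂ} (h : ∑ g, B g • ρ g = c • 1) : c ∈ pIntegers p := by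
  obtain ⟨M, hM, hint⟩ := exists_coprime_forall_isIntegral_mul Finset.univ hB
  refine ⟨M, hM, isIntegral_of_sum_smul_eq_smul_one (ρ := ρ)
    (fun g ↦ hint g (Finset.mem_univ g)) ?_⟩
  simp_rw [mul_smul, ← h, Finset.smul_sum]

variable [FiniteDimensional ℂ V]

theorem exists_sum_smul_eq_smul_one (hρ : ρ.IsIrreducible) {B : G → ℂ}
    (hB : ∀ g h, B (h * g * h⁻¹) = B g) :
    ∃ c : ℂ, ∑ g, B g • ρ g = c • 1 ∧ c * finrank ℂ V = ∑ g, B g * ρ.character g := by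
  obtain ⟨c, hc⟩ := exists_eq_smul_one_of_commute hρ (T := ∑ g, B g • ρ g) fun h ↦ by
    rw [Commute, SemiconjBy, Finset.mul_sum, Finset.sum_mul]
    refine Fintype.sum_equiv (MulAut.conj h).toEquiv _ _ fun g ↦ ?_
    have hconj : (MulAut.conj h).toEquiv g = h * g * h⁻¹ := rfl
    rw [hconj, hB, mul_smul_comm, smul_mul_assoc, ← map_mul, ← map_mul, inv_mul_cancel_right]
  refine ⟨c, hc, ?_⟩
  have htrace := congrArg (LinearMap.trace ℂ V) hc
  simp only [map_sum, map_smul, smul_eq_mul, LinearMap.trace_one] at htrace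
  exact htrace.symm

theorem sum_mul_character_div_finrank_mem_pIntegers (hρ : ρ.IsIrreducible) {B : G → ℂ}
    (hB : ∀ g h, B (h * g * h⁻¹) = B g) (hBp : ∀ g, B g ∈ pIntegers p) :
    (∑ g, B g * ρ.character g) / finrank ℂ V ∈ pIntegers p := by
  have := nontrivial_of_isIrreducible hρ
  obtain ⟨c, hc, htrace⟩ := exists_sum_smul_eq_smul_one hρ hB
  rw [← htrace, mul_div_cancel_right₀ c (by exact_mod_cast finrank_ne_zero_of_isIrreducible hρ)]
  exact mem_pIntegers_of_sum_smul_eq_smul_one hBp hc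

/-- Averaging `b` over the conjugates by a transversal of `Q` makes it a class function. -/
theorem sum_mul_character_mul_index_div_finrank_mem_pIntegers (hρ : ρ.IsIrreducible)
    (Q : Subgroup G) {b : G → ℂ} (hb : ∀ g, b g ∈ pIntegers p)
    (hinv : ∀ q ∈ Q, ∀ g, b (q * g * q⁻¹) = b g) :
    (∑ g, b g * ρ.character g) * Q.index / finrank ℂ V ∈ pIntegers p := by
  let B : G → ℂ := fun g ↦ ∑ c : G ⧸ Q, b (c.out⁻¹ * g * c.out)
  have hout : ∀ g x : G, b ((x : G ⧸ Q).out⁻¹ * g * (x : G ⧸ Q).out) = b (x⁻¹ * g * x) := by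
    intro g x
    obtain ⟨q, hq⟩ := QuotientGroup.mk_out_eq_mul Q x
    rw [hq, ← hinv q q.2]
    congr 1
    group
  have hB : ∀ g h, B (h * g * h⁻¹) = B g := by
    intro g h
    refine Fintype.sum_equiv (MulAction.toPerm h⁻¹) _ _ fun c ↦ ?_
    obtain ⟨x, rfl⟩ := QuotientGroup.mk_surjective c
    have hperm : (MulAction.toPerm h⁻¹ : Equiv.Perm (G ⧸ Q)) x = ((h⁻¹ * x : G) : G ⧸ Q) := rfl
    rw [hperm, hout, hout]
    congr 1
    group
  have hsum : ∑ g, B g * ρ.character g = (∑ g, b g * ρ.character g) * Q.index := by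
    have hterm : ∀ c : G ⧸ Q, ∑ g, b (c.out⁻¹ * g * c.out) * ρ.character g =
        ∑ g, b g * ρ.character g := fun c ↦
      Fintype.sum_equiv (MulAut.conj c.out⁻¹).toEquiv _ _ fun g ↦ by
        simp [character_conj_inv]
    simp_rw [B, Finset.sum_mul]
    rw [Finset.sum_comm, Finset.sum_congr rfl fun c _ ↦ hterm c, Finset.sum_const, nsmul_eq_mul,
      mul_comm, Finset.card_univ, ← Nat.card_eq_fintype_card, Subgroup.index, Finset.sum_mul]
  rw [← hsum]
  exact sum_mul_character_div_finrank_mem_pIntegers hρ hB fun g ↦ sum_mem fun c _ ↦ hb _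

end CentralCharacter

theorem card_div_finrank_mem_pIntegers {G V : Type*} [Group G] [Finite G] [AddCommGroup V]
    [Module ℂ V] [FiniteDimensional ℂ V] {ρ : Representation ℂ G V} {p : ℕ} (hρ : ρ.IsIrreducible) :
    (Nat.card G : ℂ) / finrank ℂ V ∈ pIntegers p := by
  have := Fintype.ofFinite G
  have h := sum_mul_character_div_finrank_mem_pIntegers (p := p) hρ (B := fun g ↦ ρ.character g⁻¹)
    (fun g h ↦ by simpa [mul_assoc] using ρ.char_conj g⁻¹ h)
    fun g ↦ mem_pIntegers_of_isIntegral (isIntegral_character ρ _)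
  simpa only [mul_comm, sum_character_mul_character_inv hρ] using h

/-! ### Generalized quaternion groups -/

section Quaternion

open QuaternionGroup

variable {n : ℕ}

theorem a_inv (i : ZMod (2 * n)) : (a i : QuaternionGroup n)⁻¹ = a (-i) := rfl

theorem xa_inv (i : ZMod (2 * n)) : (xa i : QuaternionGroup n)⁻¹ =
    xa ((n : ZMod (2 * n)) + i) := rfl

theorem two_mul_natCast_eq_zero : (2 * n : ZMod (2 * n)) = 0 := by
  exact_mod_cast ZMod.natCast_self (2 * n)

theorem a_conj_a (i j : ZMod (2 * n)) : (a j * a i * (a j)⁻¹ : QuaternionGroup n) = a i := by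
  simp [a_inv]

theorem xa_conj_a (i j : ZMod (2 * n)) : (xa j * a i * (xa j)⁻¹ : QuaternionGroup n) = a (-i) := by
  rw [xa_inv, xa_mul_a, xa_mul_xa]
  congr 1
  linear_combination two_mul_natCast_eq_zero (n := n)

theorem a_conj_xa (i j : ZMod (2 * n)) :
    (a j * xa i * (a j)⁻¹ : QuaternionGroup n) = xa (i - 2 * j) := by
  rw [a_inv, a_mul_xa, xa_mul_a]
  congr 1
  ring

theorem xa_conj_xa (i j : ZMod (2 * n)) :
    (xa j * xa i * (xa j)⁻¹ : QuaternionGroup n) = xa (2 * j - i) := by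
  rw [xa_inv, xa_mul_xa, a_mul_xa]
  congr 1
  ring

theorem a_natCast (i : ℕ) : (a i : QuaternionGroup n) = a 1 ^ i := (a_one_pow i).symm

theorem a_mem_zpowers_a_one [NeZero n] (i : ZMod (2 * n)) :
    (a i : QuaternionGroup n) ∈ Subgroup.zpowers (a 1) := by
  rw [← ZMod.natCast_zmod_val i, a_natCast]
  exact Subgroup.npow_mem_zpowers _ _

theorem eq_zero_or_eq_natCast_of_two_mul_eq_zero [NeZero n] {i : ZMod (2 * n)} (h : 2 * i = 0) :
    i = 0 ∨ i = n := by
  obtain ⟨v, hv, rfl⟩ : ∃ v < 2 * n, (v : ZMod (2 * n)) = i :=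
    ⟨i.val, ZMod.val_lt i, ZMod.natCast_zmod_val i⟩
  obtain ⟨c, rfl⟩ : n ∣ v := by
    have h' : ((2 * v : ℕ) : ZMod (2 * n)) = 0 := by exact_mod_cast h
    exact Nat.dvd_of_mul_dvd_mul_left two_pos ((ZMod.natCast_eq_zero_iff _ _).mp h')
  have hc : c < 2 := by nlinarith [NeZero.pos n]
  interval_cases c <;> simp

theorem exists_forall_commute_mem_zpowers [NeZero n] {v : QuaternionGroup n} (hv : v ^ 2 ≠ 1) :
    ∃ c : QuaternionGroup n, ∀ w, Commute w v → w ∈ Subgroup.zpowers c := by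
  rcases v with i | i
  · refine ⟨a 1, ?_⟩
    rintro (j | j) h
    · exact a_mem_zpowers_a_one j
    · refine absurd ?_ hv
      rw [Commute, SemiconjBy, xa_mul_a, a_mul_xa, xa.injEq] at h
      rw [sq, a_mul_a, ← a_zero, a.injEq]
      linear_combination h
  · refine ⟨xa i, ?_⟩
    have ha : ∀ j : ZMod (2 * n), 2 * j = 0 → a j ∈ Subgroup.zpowers (xa i) := by
      intro j hj
      rcases eq_zero_or_eq_natCast_of_two_mul_eq_zero hj with rfl | rfl
      · exact a_zero (n := n) ▸ one_mem _
      · exact xa_sq i ▸ Subgroup.npow_mem_zpowers _ _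
    rintro (j | j) h
    · rw [Commute, SemiconjBy, xa_mul_a, a_mul_xa, xa.injEq] at h
      exact ha j (by linear_combination -h)
    · rw [Commute, SemiconjBy, xa_mul_xa, xa_mul_xa, a.injEq] at h
      have hj : xa j = xa i * a (j - i) := by rw [xa_mul_a, add_sub_cancel]
      rw [hj]
      exact mul_mem (Subgroup.mem_zpowers _) (ha _ (by linear_combination -h))

theorem conj_eq_or_eq_inv_of_mem_zpowers [NeZero n] {v w : QuaternionGroup n}
    (h : w * v * w⁻¹ ∈ Subgroup.zpowers v) : w * v * w⁻¹ = v ∨ w * v * w⁻¹ = v⁻¹ := by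
  rcases v with i | i
  · rcases w with j | j
    · exact .inl (a_conj_a i j)
    · exact .inr (by rw [xa_conj_a, a_inv])
  · obtain ⟨l, hl⟩ : ∃ l, w * xa i * w⁻¹ = xa l := by
      rcases w with j | j
      · exact ⟨_, a_conj_xa i j⟩
      · exact ⟨_, xa_conj_xa i j⟩
    obtain ⟨t, ht, hpow⟩ : ∃ t < 4, xa i ^ t = w * xa i * w⁻¹ := by
      simpa [mem_zpowers_iff_mem_range_orderOf, orderOf_xa] using h
    rw [← hpow] at hl ⊢
    interval_cases t
    · rw [pow_zero, one_def] at hl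
      cases hl
    · exact .inl (pow_one _)
    · rw [xa_sq] at hl
      cases hl
    · exact .inr (eq_inv_of_mul_eq_one_left ((pow_succ _ 3).symm.trans (xa_pow_four i)))

theorem quaternionGroup_pow_eq_one {k : ℕ} (hk : k ≠ 0) (g : QuaternionGroup (2 ^ k)) :
    g ^ 2 ^ (k + 1) = 1 := by
  have hlcm : lcm (2 ^ k) 2 = 2 ^ k := Nat.lcm_eq_left (dvd_pow_self 2 hk)
  have h := Monoid.pow_exponent_eq_one g
  rwa [QuaternionGroup.exponent, hlcm, ← pow_succ'] at h

end Quaternion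

/-! ### Centralizers and normalizers of 2-elements -/

section Exponents

theorem pow_mul_pow_chineseRemainder {G : Type*} [Group G] {m n : ℕ} (h : m.Coprime n) {x y : G}
    (hxy : Commute x y) (hx : x ^ m = 1) (hy : y ^ n = 1) :
    (x * y) ^ (Nat.chineseRemainder h 1 0 : ℕ) = x := by
  obtain ⟨hone, hzero⟩ := (Nat.chineseRemainder h 1 0).2
  rw [hxy.mul_pow, pow_eq_pow_iff_modEq.mpr (hone.of_dvd (orderOf_dvd_of_pow_eq_one hx)),
    pow_eq_pow_iff_modEq.mpr (hzero.of_dvd (orderOf_dvd_of_pow_eq_one hy)), pow_one, pow_zero,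
    mul_one]

theorem exists_pow_mul_pow_eq {G : Type*} [Group G] {m n : ℕ} (h : m.Coprime n) {g : G}
    (hg : g ^ (m * n) = 1) :
    ∃ i j : ℕ, g ^ i * g ^ j = g ∧ (g ^ i) ^ m = 1 ∧ (g ^ j) ^ n = 1 := by
  obtain ⟨hi₁, hi₀⟩ := (Nat.chineseRemainder h 1 0).2
  obtain ⟨hj₀, hj₁⟩ := (Nat.chineseRemainder h 0 1).2
  refine ⟨Nat.chineseRemainder h 1 0, Nat.chineseRemainder h 0 1, ?_, ?_, ?_⟩
  · rw [← pow_add]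
    refine (pow_eq_pow_iff_modEq.mpr ?_).trans (pow_one g)
    exact ((Nat.modEq_and_modEq_iff_modEq_mul h).mp ⟨hi₁.add hj₀, hi₀.add hj₁⟩).of_dvd
      (orderOf_dvd_of_pow_eq_one hg)
  · obtain ⟨c, hc⟩ := Nat.modEq_zero_iff_dvd.mp hi₀
    rw [← pow_mul, hc, mul_right_comm, mul_comm n m, pow_mul, hg, one_pow]
  · obtain ⟨c, hc⟩ := Nat.modEq_zero_iff_dvd.mp hj₀
    rw [← pow_mul, hc, mul_right_comm, pow_mul, hg, one_pow]

theorem isPGroup_zpowers {G : Type*} [Group G] {p r : ℕ} [Fact p.Prime] {v : G}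
    (hv : v ^ p ^ r = 1) : IsPGroup p (Subgroup.zpowers v) := by
  obtain ⟨s, -, hs⟩ := (Nat.dvd_prime_pow Fact.out).mp (orderOf_dvd_of_pow_eq_one hv)
  exact IsPGroup.of_card (n := s) ((Nat.card_zpowers v).trans hs)

end Exponents

section TwoElements

variable {G : Type*} [Group G] [Finite G]

theorem exists_injective_of_isPGroup {p : ℕ} [Fact p.Prime] {Q : Type*} [Group Q] {P : Sylow p G}
    (e : P ≃* Q) {S : Subgroup G} (hS : IsPGroup p S) :
    ∃ f : S →* Q, Function.Injective f := by
  obtain ⟨R, hR⟩ := hS.exists_le_sylow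
  exact ⟨(e.toMonoidHom.comp (R.equiv P).toMonoidHom).comp (Subgroup.inclusion hR),
    (e.injective.comp (R.equiv P).injective).comp (Subgroup.inclusion_injective hR)⟩

theorem exists_normal_complement_of_isCyclic_sylow {S : Sylow 2 G} (hS : IsCyclic S)
    (heven : 2 ∣ Nat.card G) :
    ∃ N : Subgroup G, (∀ g, g ∈ N ↔ Odd (orderOf g)) ∧ Nat.card N * Nat.card S = Nat.card G := by
  have hmin := (Nat.minFac_eq_two_iff _).mpr heven
  have hle := hS.normalizer_le_centralizer hmin
  refine ⟨(MonoidHom.transferSylow S hle).ker, fun g ↦ ⟨fun hg ↦ ?_, fun hg ↦ ?_⟩,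
    (hS.isComplement' hmin).card_mul_card⟩
  · have hodd := MonoidHom.not_dvd_card_ker_transferSylow S hle
    rw [← even_iff_two_dvd, Nat.not_even_iff_odd] at hodd
    exact hodd.of_dvd_nat (Subgroup.orderOf_dvd_natCard _ hg)
  · obtain ⟨q, hq⟩ := S.isPGroup'.exists_card_eq
    have hdvd := orderOf_map_dvd (MonoidHom.transferSylow S hle) g
    have hcard := hq ▸ orderOf_dvd_natCard (MonoidHom.transferSylow S hle g)
    exact orderOf_eq_one_iff.mp
      (Nat.eq_one_of_dvd_coprimes ((Nat.coprime_two_left.mpr hg).pow_left q) hcard hdvd)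

theorem mem_normalizer_zpowers {v h : G} (hh : h * v * h⁻¹ ∈ Subgroup.zpowers v) :
    h ∈ Subgroup.normalizer (Subgroup.zpowers v : Set G) := by
  refine Subgroup.mem_normalizer_fintype ?_
  rintro _ ⟨z, rfl⟩
  simpa only [SetLike.mem_coe, conj_zpow] using zpow_mem hh z

theorem commute_of_odd_of_mem_normalizer {v h : G} {r : ℕ} (hv : orderOf v = 2 ^ r)
    (hodd : Odd (orderOf h)) (hh : h ∈ Subgroup.normalizer (Subgroup.zpowers v : Set G)) :
    Commute h v := by
  let f := (Subgroup.zpowers v).normalizerMonoidHom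
  have hcard : Nat.card (MulAut (Subgroup.zpowers v)) ∣ 2 ^ r := by
    rw [IsCyclic.card_mulAut, Nat.card_zpowers, hv]
    rcases r with _ | r
    · simp
    · rw [Nat.totient_prime_pow_succ Nat.prime_two, Nat.add_one_sub_one, mul_one]
      exact pow_dvd_pow 2 r.le_succ
  have hf : orderOf (f ⟨h, hh⟩) = 1 :=
    Nat.eq_one_of_dvd_coprimes ((Nat.coprime_two_left.mpr hodd).pow_left r)
      ((orderOf_dvd_natCard _).trans hcard)
      ((orderOf_map_dvd f _).trans (Subgroup.orderOf_mk h hh).dvd)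
  have hker : (⟨h, hh⟩ : Subgroup.normalizer (Subgroup.zpowers v : Set G)) ∈ f.ker :=
    orderOf_eq_one_iff.mp hf
  rw [Subgroup.normalizerMonoidHom_ker, Subgroup.mem_subgroupOf, Subgroup.mem_centralizer_iff]
    at hker
  exact (hker v (Subgroup.mem_zpowers v)).symm

theorem card_filter_conj_eq_le {G : Type*} [Group G] [Fintype G] (v g : G) :
    ({h | h * v * h⁻¹ = g} : Finset G).card ≤ Nat.card (Subgroup.centralizer {v}) := by
  rw [Nat.card_eq_fintype_card, Fintype.card_subtype]
  rcases Finset.eq_empty_or_nonempty ({h | h * v * h⁻¹ = g} : Finset G) with hempty | ⟨h₀, hh₀⟩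
  · simp [hempty]
  refine Finset.card_le_card_of_injOn (h₀⁻¹ * ·) (fun h hh ↦ ?_)
    (mul_right_injective h₀⁻¹).injOn
  simp only [Finset.coe_filter, Finset.mem_filter, Finset.mem_univ, true_and, Set.mem_ofPred_eq,
    Subgroup.mem_centralizer_singleton_iff] at hh hh₀ ⊢
  rw [← hh, eq_comm, mul_inv_eq_iff_eq_mul] at hh₀
  rw [mul_assoc, inv_mul_eq_iff_eq_mul, hh₀]
  group

end TwoElements

section QuaternionSylow

variable {G : Type*} [Group G] [Finite G] {P : Sylow 2 G} {k : ℕ}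

theorem conj_eq_or_eq_inv_of_pow_eq_one (e : P ≃* QuaternionGroup (2 ^ k)) {v w : G} {r s : ℕ}
    (hv : v ^ 2 ^ r = 1) (hw : w ^ 2 ^ s = 1)
    (hn : w ∈ Subgroup.normalizer (Subgroup.zpowers v : Set G)) :
    w * v * w⁻¹ = v ∨ w * v * w⁻¹ = v⁻¹ := by
  have hp := IsPGroup.to_sup_of_normal_right' (isPGroup_zpowers hw) (isPGroup_zpowers hv)
    (Subgroup.zpowers_le.mpr hn)
  obtain ⟨f, hf⟩ := exists_injective_of_isPGroup e hp
  let v' : ↥(Subgroup.zpowers w ⊔ Subgroup.zpowers v) :=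
    ⟨v, Subgroup.mem_sup_right (Subgroup.mem_zpowers v)⟩
  let w' : ↥(Subgroup.zpowers w ⊔ Subgroup.zpowers v) :=
    ⟨w, Subgroup.mem_sup_left (Subgroup.mem_zpowers w)⟩
  obtain ⟨z, hz⟩ := (Subgroup.mem_normalizer_iff.mp hn v).mp (Subgroup.mem_zpowers v)
  have hconj : v' ^ z = w' * v' * w'⁻¹ := Subtype.ext (by simpa [v', w'] using hz)
  have hmem : f w' * f v' * (f w')⁻¹ ∈ Subgroup.zpowers (f v') :=
    ⟨z, by simp only [← map_zpow, ← map_mul, ← map_inv, hconj]⟩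
  rcases conj_eq_or_eq_inv_of_mem_zpowers hmem with h | h <;>
    simp only [← map_inv, ← map_mul] at h
  · exact .inl (congrArg Subtype.val (hf h))
  · exact .inr (congrArg Subtype.val (hf h))

theorem conj_eq_or_eq_inv_of_mem_normalizer (e : P ≃* QuaternionGroup (2 ^ k)) {v h : G} {r : ℕ}
    (hv : orderOf v = 2 ^ r) (hh : h ∈ Subgroup.normalizer (Subgroup.zpowers v : Set G)) :
    h * v * h⁻¹ = v ∨ h * v * h⁻¹ = v⁻¹ := by
  obtain ⟨s, o, ho, hcard⟩ := Nat.exists_eq_two_pow_mul_odd (orderOf_pos h).ne'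
  obtain ⟨i, j, hij, hi, hj⟩ := exists_pow_mul_pow_eq ((Nat.coprime_two_left.mpr ho).pow_left s)
    (hcard ▸ pow_orderOf_eq_one h)
  have hcomm : Commute (h ^ j) v := commute_of_odd_of_mem_normalizer hv
    (ho.of_dvd_nat (orderOf_dvd_of_pow_eq_one hj)) (pow_mem hh j)
  have hconj : h * v * h⁻¹ = h ^ i * v * (h ^ i)⁻¹ := by
    conv_lhs => rw [← hij]
    rw [mul_assoc (h ^ i), hcomm.eq]
    group
  rw [hconj]
  exact conj_eq_or_eq_inv_of_pow_eq_one e (hv ▸ pow_orderOf_eq_one v) hi (pow_mem hh i)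

theorem card_normalizer_zpowers_le (e : P ≃* QuaternionGroup (2 ^ k)) {v : G} {r : ℕ}
    (hv : orderOf v = 2 ^ r) :
    Nat.card (Subgroup.normalizer (Subgroup.zpowers v : Set G)) ≤
      2 * Nat.card (Subgroup.centralizer {v}) := by
  have := Fintype.ofFinite G
  have hmaps : ∀ h ∈ ({h | h ∈ Subgroup.normalizer (Subgroup.zpowers v : Set G)} : Finset G),
      h * v * h⁻¹ ∈ ({v, v⁻¹} : Finset G) := fun h hh ↦ by
    simpa using conj_eq_or_eq_inv_of_mem_normalizer e hv (Finset.mem_filter.mp hh).2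
  rw [Nat.card_eq_fintype_card, Fintype.card_subtype, mul_comm]
  refine (Finset.card_le_mul_card_image_of_maps_to hmaps _ fun g _ ↦ ?_).trans
    (Nat.mul_le_mul_left _ Finset.card_le_two)
  exact (Finset.card_le_card (Finset.filter_subset_filter _ (Finset.subset_univ _))).trans
    (card_filter_conj_eq_le v g)

theorem isCyclic_of_commute (e : P ≃* QuaternionGroup (2 ^ k)) {S : Subgroup G} (hS : IsPGroup 2 S)
    {v : G} (hvS : v ∈ S) (hv : v ^ 2 ≠ 1) (hcomm : ∀ g ∈ S, Commute g v) : IsCyclic S := by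
  obtain ⟨f, hf⟩ := exists_injective_of_isPGroup e hS
  have hfv : f ⟨v, hvS⟩ ^ 2 ≠ 1 := by
    rw [← map_pow, ← map_one f, hf.ne_iff]
    exact fun h ↦ hv (congrArg Subtype.val h)
  obtain ⟨c, hc⟩ := exists_forall_commute_mem_zpowers hfv
  have hmem : ∀ g, f g ∈ Subgroup.zpowers c := fun g ↦
    hc _ ((show Commute g ⟨v, hvS⟩ from Subtype.ext (hcomm g g.2)).map f)
  exact isCyclic_of_injective (f.codRestrict _ hmem) fun g h hgh ↦ hf (congrArg Subtype.val hgh)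

theorem card_dvd_of_isCyclic (e : P ≃* QuaternionGroup (2 ^ k)) (hk : k ≠ 0) {S : Subgroup G}
    (hS : IsPGroup 2 S) [IsCyclic S] : Nat.card S ∣ 2 ^ (k + 1) := by
  obtain ⟨f, hf⟩ := exists_injective_of_isPGroup e hS
  obtain ⟨g, hg⟩ := IsCyclic.exists_ofOrder_eq_natCard (α := S)
  rw [← hg]
  exact orderOf_dvd_of_pow_eq_one (hf (by rw [map_pow, map_one, quaternionGroup_pow_eq_one hk]))

theorem exists_normal_complement_centralizer (e : P ≃* QuaternionGroup (2 ^ k)) (hk : k ≠ 0)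
    {v : G} {r : ℕ} (hr : 2 ≤ r) (hv : orderOf v = 2 ^ r) :
    ∃ (K : Subgroup G) (q : ℕ), (∀ g, g ∈ K ↔ Commute g v ∧ Odd (orderOf g)) ∧
      Nat.card (Subgroup.centralizer {v}) = Nat.card K * 2 ^ q ∧ r ≤ q ∧ q ≤ k + 1 := by
  let C := Subgroup.centralizer {v}
  have hvC : v ∈ C := Subgroup.mem_centralizer_singleton_iff.mpr rfl
  obtain ⟨S, hS⟩ := (isPGroup_zpowers (p := 2) (v := (⟨v, hvC⟩ : C)) (r := r)
    (Subtype.ext (hv ▸ pow_orderOf_eq_one v))).exists_le_sylow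
  obtain ⟨q, hq⟩ := S.isPGroup'.exists_card_eq
  have hSmap : Nat.card ((S : Subgroup C).map C.subtype) = 2 ^ q :=
    (Subgroup.card_map_of_injective C.subtype_injective).trans hq
  have hvS : v ∈ (S : Subgroup C).map C.subtype := ⟨⟨v, hvC⟩, hS (Subgroup.mem_zpowers _), rfl⟩
  have hpow : v ^ 2 ≠ 1 := fun h ↦ by
    have := Nat.le_of_dvd two_pos (hv ▸ orderOf_dvd_of_pow_eq_one h)
    have := Nat.pow_le_pow_right two_pos hr
    omega
  have hcyc : IsCyclic ((S : Subgroup C).map C.subtype) := by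
    refine isCyclic_of_commute e (S.isPGroup'.map _) hvS hpow ?_
    rintro _ ⟨g, -, rfl⟩
    exact Subgroup.mem_centralizer_singleton_iff.mp g.2
  have hScyc : IsCyclic S := isCyclic_of_surjective
    ((S : Subgroup C).equivMapOfInjective C.subtype C.subtype_injective).symm
    (MulEquiv.surjective _)
  have hrq : 2 ^ r ∣ 2 ^ q := hv ▸ hSmap ▸ Subgroup.orderOf_dvd_natCard _ hvS
  have hqk : 2 ^ q ∣ 2 ^ (k + 1) := hSmap ▸ card_dvd_of_isCyclic e hk (S.isPGroup'.map _)
  have heven : 2 ∣ Nat.card C :=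
    (dvd_pow_self 2 (by omega)).trans (hv ▸ Subgroup.orderOf_dvd_natCard _ hvC)
  obtain ⟨N, hN, hcard⟩ := exists_normal_complement_of_isCyclic_sylow hScyc heven
  refine ⟨N.map C.subtype, q, fun g ↦ ⟨?_, fun hg ↦ ?_⟩, ?_,
    (Nat.pow_dvd_pow_iff_le_right one_lt_two).mp hrq,
    (Nat.pow_dvd_pow_iff_le_right one_lt_two).mp hqk⟩
  · rintro ⟨n, hn, rfl⟩
    exact ⟨Subgroup.mem_centralizer_singleton_iff.mp n.2, by simpa using (hN n).mp hn⟩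
  · have hgC : g ∈ C := Subgroup.mem_centralizer_singleton_iff.mpr hg.1
    exact ⟨⟨g, hgC⟩, (hN _).mpr (by simpa [Subgroup.orderOf_mk] using hg.2), rfl⟩
  · rw [Subgroup.card_map_of_injective C.subtype_injective, ← hcard, ← hq]

end QuaternionSylow

/-! ### Vanishing of characters at elements of large 2-power order -/

section NormBound

variable {G V : Type*} [Group G]

theorem mem_zpowers_pow_of_coprime {v : G} {i : ℕ} (hi : (orderOf v).Coprime i) :
    v ∈ Subgroup.zpowers (v ^ i) := by
  obtain ⟨m, hm⟩ := exists_pow_eq_self_of_coprime hi.symm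
  exact ⟨m, by simpa using hm⟩

theorem pow_mul_pow_chineseRemainder_card {v : G} {K : Subgroup G} (hK : K ≤ .centralizer {v})
    (hcop : (orderOf v).Coprime (Nat.card K)) (i : ℕ) (κ : K) :
    (v ^ i * κ) ^ (Nat.chineseRemainder hcop 1 0 : ℕ) = v ^ i :=
  pow_mul_pow_chineseRemainder hcop
    (Commute.pow_left (Subgroup.mem_centralizer_singleton_iff.mp (hK κ.2)).symm i)
    (by rw [pow_right_comm, pow_orderOf_eq_one, one_pow])
    (orderOf_dvd_iff_pow_eq_one.mp (Subgroup.orderOf_dvd_natCard K κ.2))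

theorem card_mul_sum_eq_sum_card_mul [Fintype G] {f : G → ℝ} (hf : ∀ g h, f (h * g * h⁻¹) = f g)
    (X : Finset G) :
    Fintype.card G * ∑ x ∈ X, f x = ∑ g, ({h | h⁻¹ * g * h ∈ X} : Finset G).card * f g := by
  have hconj : ∀ h : G, ∑ x ∈ X, f x = ∑ g, if h⁻¹ * g * h ∈ X then f g else 0 := by
    intro h
    rw [← Equiv.sum_comp (MulAut.conj h).toEquiv]
    have hcancel (g : G) : h⁻¹ * (h * g * h⁻¹) * h = g := by group
    simp [hf, hcancel]
  rw [← nsmul_eq_mul, ← Finset.card_univ, ← Finset.sum_const,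
    Finset.sum_congr rfl fun h _ ↦ hconj h, Finset.sum_comm]
  simp [← Finset.sum_filter]

theorem card_filter_conj_mem_le [Fintype G] {X : Finset G} {N : Subgroup G}
    (hX : ∀ x ∈ X, ∀ h, h * x * h⁻¹ ∈ X → h ∈ N) (g : G) :
    ({h | h⁻¹ * g * h ∈ X} : Finset G).card ≤ Nat.card N := by
  rw [Nat.card_eq_fintype_card, Fintype.card_subtype]
  rcases Finset.eq_empty_or_nonempty ({h | h⁻¹ * g * h ∈ X} : Finset G) with hempty | ⟨h₀, hh₀⟩
  · simp [hempty]
  · refine Finset.card_le_card_of_injOn (h₀⁻¹ * ·) (fun h hh ↦ ?_)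
      (mul_right_injective h₀⁻¹).injOn
    simp only [Finset.coe_filter, Finset.mem_filter, Finset.mem_univ, true_and,
      Set.mem_ofPred_eq] at hh hh₀ ⊢
    refine hX _ hh _ ?_
    simpa only [mul_inv_rev, inv_inv, mul_assoc, mul_inv_cancel_left] using hh₀

variable [AddCommGroup V] [Module ℂ V] [FiniteDimensional ℂ V] {ρ : Representation ℂ G V}

theorem sum_norm_character_sq_lt_card [Finite G] (hρ : ρ.IsIrreducible) {X : Finset G}
    {N : Subgroup G} (hX : ∀ x ∈ X, ∀ h, h * x * h⁻¹ ∈ X → h ∈ N) (hone : 1 ∉ X) :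
    ∑ x ∈ X, ‖ρ.character x‖ ^ 2 < Nat.card N := by
  have := Fintype.ofFinite G
  have hsum := card_mul_sum_eq_sum_card_mul (f := fun g ↦ ‖ρ.character g‖ ^ 2)
    (fun g h ↦ by simp only [char_conj]) X
  have hle : ∑ g, ({h | h⁻¹ * g * h ∈ X} : Finset G).card * ‖ρ.character g‖ ^ 2 ≤
      Nat.card N * (Fintype.card G - ‖ρ.character 1‖ ^ 2) := by
    rw [← Nat.card_eq_fintype_card, ← sum_norm_character_sq hρ,
      ← Finset.sum_erase_eq_sub (Finset.mem_univ 1), Finset.mul_sum,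
      ← Finset.sum_erase_add _ _ (Finset.mem_univ (1 : G))]
    simp only [mul_one, inv_mul_cancel, hone, Finset.filter_false, Finset.card_empty,
      Nat.cast_zero, zero_mul, add_zero]
    gcongr with g
    exact card_filter_conj_mem_le hX g
  have hdim : 0 < ‖ρ.character 1‖ ^ 2 := by
    have := finrank_ne_zero_of_isIrreducible hρ
    rw [char_one, Complex.norm_natCast]
    positivity
  have hN : (0 : ℝ) < Nat.card N := by exact_mod_cast Nat.card_pos
  refine lt_of_mul_lt_mul_left (a := (Fintype.card G : ℝ)) ?_ (Nat.cast_nonneg _)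
  nlinarith

theorem sum_sum_norm_character_sq_lt [Fintype G] (hρ : ρ.IsIrreducible) {v : G} (hv : v ≠ 1)
    {K : Subgroup G} (hK : K ≤ .centralizer {v}) (hcop : (orderOf v).Coprime (Nat.card K)) :
    ∑ i ∈ Finset.range (orderOf v) with (orderOf v).Coprime i,
        ∑ κ : K, ‖ρ.character (v ^ i * κ)‖ ^ 2 <
      Nat.card (Subgroup.normalizer (Subgroup.zpowers v : Set G)) := by
  set I := {i ∈ Finset.range (orderOf v) | (orderOf v).Coprime i}
  have hpow := pow_mul_pow_chineseRemainder_card hK hcop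
  have hinj : Set.InjOn (fun x : ℕ × K ↦ v ^ x.1 * (x.2 : G))
      (I ×ˢ (.univ : Finset K) : Finset (ℕ × K)) := by
    rintro ⟨i, κ⟩ hi ⟨j, κ'⟩ hj h
    simp only [Finset.mem_coe, Finset.mem_product, Finset.mem_univ, and_true, I, Finset.mem_filter,
      Finset.mem_range] at hi hj h
    have hij := congrArg (· ^ (Nat.chineseRemainder hcop 1 0 : ℕ)) h
    simp only [hpow] at hij
    obtain rfl := pow_injOn_Iio_orderOf hi.1 hj.1 hij
    exact Prod.ext rfl (Subtype.ext (mul_left_cancel h))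
  rw [← Finset.sum_product', ← Finset.sum_image (f := fun x ↦ ‖ρ.character x‖ ^ 2) hinj]
  refine sum_norm_character_sq_lt_card hρ ?_ ?_
  · simp only [Finset.mem_image, Finset.mem_product, Prod.exists, forall_exists_index, and_imp]
    rintro _ i κ hi - rfl h j κ' - - hconj
    have hconj := congrArg (· ^ (Nat.chineseRemainder hcop 1 0 : ℕ)) hconj
    simp only [conj_pow, hpow] at hconj
    obtain ⟨z, hz⟩ := mem_zpowers_pow_of_coprime (Finset.mem_filter.mp hi).2
    refine mem_normalizer_zpowers ?_
    simp only at hz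
    rw [← hz, ← conj_zpow, ← hconj, hz]
    exact zpow_mem (Subgroup.npow_mem_zpowers v j) z
  · simp only [Finset.mem_image, Finset.mem_product, Prod.exists, not_exists, not_and]
    rintro i κ ⟨hi, -⟩ hone
    have hvi := congrArg (· ^ (Nat.chineseRemainder hcop 1 0 : ℕ)) hone
    simp only [hpow, one_pow] at hvi
    have := mem_zpowers_pow_of_coprime (Finset.mem_filter.mp hi).2
    rw [hvi, Subgroup.zpowers_one_eq_bot, Subgroup.mem_bot] at this
    exact hv this

end NormBound

section CyclotomicBound

open Polynomial

variable {n : ℕ}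

theorem aeval_eq_zero_of_isPrimitiveRoot (hn : 0 < n) {ζ ξ : ℂ} (hζ : IsPrimitiveRoot ζ n)
    (hξ : IsPrimitiveRoot ξ n) {f : ℤ[X]} (h : aeval ζ f = 0) : aeval ξ f = 0 := by
  obtain ⟨q, rfl⟩ := minpoly.isIntegrallyClosed_dvd (hζ.isIntegral hn) h
  rw [map_mul, ← cyclotomic_eq_minpoly hζ hn, cyclotomic_eq_minpoly hξ hn, minpoly.aeval, zero_mul]

theorem exists_prod_primitiveRoots_aeval_eq_intCast [NeZero (n : ℂ)] (f : ℤ[X]) :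
    ∃ k : ℤ, ∏ ξ ∈ primitiveRoots n ℂ, aeval ξ f = k := by
  refine ⟨resultant (cyclotomic n ℤ) f (cyclotomic n ℤ).natDegree f.natDegree, ?_⟩
  have hres := resultant_eq_prod_eval (cyclotomic n ℂ) (f.map (Int.castRingHom ℂ)) f.natDegree
    natDegree_map_le (IsAlgClosed.splits _)
  have hmap := resultant_map_map (cyclotomic n ℤ) f (cyclotomic n ℤ).natDegree f.natDegree
    (Int.castRingHom ℂ)
  rw [(cyclotomic.monic n ℂ).leadingCoeff, one_pow, one_mul,
    cyclotomic.roots_eq_primitiveRoots_val, natDegree_cyclotomic] at hres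
  rw [map_cyclotomic, natDegree_cyclotomic, hres, eq_intCast] at hmap
  rw [natDegree_cyclotomic, ← hmap]
  exact Finset.prod_congr rfl fun ξ _ ↦ by rw [aeval_def, Polynomial.eval_map]; rfl

theorem card_mul_le_sum_of_pow_le_prod {ι : Type*} {s : Finset ι} {S : ι → ℝ} {c : ℝ} (hc : 0 < c)
    (hS : ∀ i ∈ s, 0 ≤ S i) (h : c ^ s.card ≤ ∏ i ∈ s, S i) : s.card * c ≤ ∑ i ∈ s, S i := by
  have hprod : 1 ≤ ∏ i ∈ s, S i / c := by
    rwa [Finset.prod_div_distrib, Finset.prod_const, one_le_div (by positivity)]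
  have hpos : ∀ i ∈ s, 0 < S i / c := fun i hi ↦ (div_nonneg (hS i hi) hc.le).lt_of_ne' fun h0 ↦ by
    rw [Finset.prod_eq_zero hi h0] at hprod
    exact absurd hprod (by norm_num)
  have hlog := calc
    (0 : ℝ) ≤ Real.log (∏ i ∈ s, S i / c) := Real.log_nonneg hprod
    _ = ∑ i ∈ s, Real.log (S i / c) := Real.log_prod fun i hi ↦ (hpos i hi).ne'
    _ ≤ ∑ i ∈ s, (S i / c - 1) :=
      Finset.sum_le_sum fun i hi ↦ Real.log_le_sub_one_of_pos (hpos i hi)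
  rw [Finset.sum_sub_distrib, ← Finset.sum_div, Finset.sum_const, nsmul_one, sub_nonneg,
    le_div_iff₀ hc] at hlog
  exact hlog

/-- The product of the Galois conjugates of a nonzero cyclotomic integer divisible by `p ^ t` is at
least `p ^ (t * φ n)` in absolute value, and the arithmetic mean dominates the geometric one. -/
theorem totient_mul_pow_le_sum {p t : ℕ} (hp : p ≠ 0) {ζ : ℂ} (hn : n ≠ 0)
    (hζ : IsPrimitiveRoot ζ n) {f : ℤ[X]} {S : ℕ → ℝ} (hS : ∀ i, 0 ≤ S i)
    (hf : ∀ i, aeval (ζ ^ i) f = S i) (hSp : ∀ i, (S i : ℂ) / p ^ t ∈ pIntegers p) (hne : S 1 ≠ 0) :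
    (n.totient * p ^ t : ℝ) ≤ ∑ i ∈ Finset.range n with n.Coprime i, S i := by
  set I := {i ∈ Finset.range n | n.Coprime i}
  have hroots : primitiveRoots n ℂ = I.image (ζ ^ ·) := by
    ext ξ
    have : NeZero n := ⟨hn⟩
    rw [mem_primitiveRoots hn.bot_lt, hζ.isPrimitiveRoot_iff]
    simp [I, Nat.coprime_comm, and_assoc]
  have hinj : Set.InjOn (ζ ^ ·) I := fun i hi j hj ↦ hζ.pow_inj
    (Finset.mem_range.mp (Finset.mem_filter.mp hi).1)
    (Finset.mem_range.mp (Finset.mem_filter.mp hj).1)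
  have hI : I.card = n.totient := rfl
  have hpos : ∀ i ∈ I, 0 < S i := by
    refine fun i hi ↦ (hS i).lt_of_ne' fun h ↦ hne ?_
    have := aeval_eq_zero_of_isPrimitiveRoot hn.bot_lt
      (hζ.pow_of_coprime i (Finset.mem_filter.mp hi).2.symm) hζ (f := f) (by rw [hf, h]; simp)
    rw [← pow_one ζ, hf] at this
    exact_mod_cast this
  have : NeZero (n : ℂ) := ⟨by exact_mod_cast hn⟩
  obtain ⟨k, hk⟩ := exists_prod_primitiveRoots_aeval_eq_intCast (n := n) f
  simp only [hroots, Finset.prod_image hinj, hf] at hk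
  have hdvd : (p : ℤ) ^ (t * I.card) ∣ k := by
    refine pow_dvd_of_div_mem_pIntegers hp ?_
    rw [← hk, pow_mul, ← Finset.prod_const, ← Finset.prod_div_distrib]
    exact Subring.prod_mem _ fun i _ ↦ hSp i
  have hk' : ∏ i ∈ I, S i = k := by exact_mod_cast hk
  have hkpos : 0 < k := by exact_mod_cast hk' ▸ Finset.prod_pos hpos
  rw [← hI]
  refine card_mul_le_sum_of_pow_le_prod (by positivity) (fun i _ ↦ hS i) ?_
  rw [hk', ← pow_mul]
  exact_mod_cast Int.le_of_dvd hkpos hdvd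

end CyclotomicBound

section Average

variable {A K V : Type*} [Group A] [Group K] [Fintype K] [AddCommGroup V] [Module ℂ V]
  [FiniteDimensional ℂ V]

theorem exists_character_eq_inv_card_mul_sum (τ : Representation ℂ (K × A) V) :
    ∃ p : Subrepresentation (τ.comp (MonoidHom.inr K A)), ∀ a,
      p.toRepresentation.character a = (Nat.card K : ℂ)⁻¹ * ∑ κ, τ.character (κ, a) := by
  let σ : Representation ℂ K V := τ.comp (MonoidHom.inl K A)
  have haverage : averageMap σ = (Nat.card K : ℂ)⁻¹ • ∑ κ, σ κ := by
    simp [averageMap, GroupAlgebra.average, invOf_eq_inv]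
  have hcomm (a : A) : Commute ((τ.comp (MonoidHom.inr K A)) a) (averageMap σ) := by
    rw [haverage]
    refine (Commute.sum_right _ _ _ fun κ _ ↦ ?_).smul_right _
    exact ((MonoidHom.commute_inl_inr κ a).symm.map τ)
  refine ⟨rangeSubrepresentation _ _ hcomm, fun a ↦ ?_⟩
  rw [character_rangeSubrepresentation _ hcomm (isProj_averageMap σ).isIdempotentElem, haverage,
    mul_smul_comm, map_smul, Finset.mul_sum, map_sum, smul_eq_mul]
  congr! 2 with κ
  rw [MonoidHom.comp_apply, MonoidHom.comp_apply, ← map_mul]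
  simp [Representation.character]

open Polynomial in
theorem exists_polynomial_aeval_eq_character_pow {ζ : ℂ} {n : ℕ} (hn : n ≠ 0)
    (hζ : IsPrimitiveRoot ζ n) (ρ : Representation ℂ A V) {a : A} (ha : a ^ n = 1) :
    ∃ f : ℤ[X], ∀ i, aeval (ζ ^ i) f = ρ.character (a ^ i) := by
  have hpow : ∀ μ ∈ nthRootsFinset n (1 : ℂ), ∃ j, ζ ^ j = μ := fun μ hμ ↦ by
    have : NeZero n := ⟨hn⟩
    obtain ⟨j, -, hj⟩ := hζ.eq_pow_of_pow_eq_one ((mem_nthRootsFinset hn.bot_lt _).mp hμ)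
    exact ⟨j, hj⟩
  choose! j hj using hpow
  refine ⟨∑ μ ∈ nthRootsFinset n (1 : ℂ),
    C (finrank ℂ (End.eigenspace (ρ a) μ) : ℤ) * X ^ j μ, fun i ↦ ?_⟩
  rw [character_pow_eq_sum_nthRootsFinset ρ hn ha, map_sum]
  refine Finset.sum_congr rfl fun μ hμ ↦ ?_
  rw [map_mul, aeval_C, map_pow, aeval_X, ← pow_mul, mul_comm i, pow_mul, hj μ hμ]
  simp

end Average

section NormAverage

variable {G V : Type*} [Group G] [AddCommGroup V] [Module ℂ V] [FiniteDimensional ℂ V]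

/-- The homomorphism `(κ, c) ↦ κ * c`, along which a representation of `G` is viewed as a
representation of the direct product of `K` and its centralizer. -/
def mulCentralizerHom (K : Subgroup G) : K × Subgroup.centralizer (K : Set G) →* G :=
  K.subtype.noncommCoprod (Subgroup.centralizer (K : Set G)).subtype
    fun κ c ↦ Subgroup.mem_centralizer_iff.mp c.2 κ κ.2

theorem norm_character_sq [Finite G] (ρ : Representation ℂ G V) (g : G) :
    ((‖ρ.character g‖ ^ 2 : ℝ) : ℂ) = ρ.character g⁻¹ * ρ.character g := by
  rw [character_inv, ← starRingEnd_apply, Complex.conj_mul', Complex.ofReal_pow]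

open Polynomial in
theorem exists_polynomial_aeval_eq_average_norm_character_sq [Fintype G] {ζ : ℂ} {n : ℕ}
    (hn : n ≠ 0) (hζ : IsPrimitiveRoot ζ n) (ρ : Representation ℂ G V) {v : G} (hv : v ^ n = 1)
    {K : Subgroup G} (hK : K ≤ .centralizer {v}) :
    ∃ f : ℤ[X], ∀ i, aeval (ζ ^ i) f =
      (((Nat.card K : ℝ)⁻¹ * ∑ κ : K, ‖ρ.character (v ^ i * κ)‖ ^ 2 : ℝ) : ℂ) := by
  have hvK : v ∈ Subgroup.centralizer (K : Set G) := Subgroup.mem_centralizer_iff.mpr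
    fun κ hκ ↦ Subgroup.mem_centralizer_singleton_iff.mp (hK hκ)
  obtain ⟨p, hp⟩ := exists_character_eq_inv_card_mul_sum
    ((linHom ρ ρ).comp (mulCentralizerHom K))
  obtain ⟨f, hf⟩ := exists_polynomial_aeval_eq_character_pow hn hζ p.toRepresentation
    (a := ⟨v, hvK⟩) (Subtype.ext hv)
  refine ⟨f, fun i ↦ ?_⟩
  rw [hf, hp, Complex.ofReal_mul, Complex.ofReal_sum]
  push_cast
  congr! 2 with κ
  rw [← Complex.ofReal_pow, norm_character_sq, ← char_linHom]
  have hcomm : (κ : G) * v ^ i = v ^ i * κ :=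
    (Commute.pow_right (Subgroup.mem_centralizer_singleton_iff.mp (hK κ.2)) i).eq
  rw [← hcomm]
  rfl

variable {ρ : Representation ℂ G V} {p : ℕ}

theorem character_mul_index_div_finrank_mem_pIntegers [Finite G] (hρ : ρ.IsIrreducible)
    {Q : Subgroup G} {g : G} (hQ : ∀ q ∈ Q, Commute q g) :
    ρ.character g * Q.index / finrank ℂ V ∈ pIntegers p := by
  have := Fintype.ofFinite G
  have h := sum_mul_character_mul_index_div_finrank_mem_pIntegers (p := p) hρ Q
    (b := fun x ↦ if x = g then 1 else 0)
    (fun x ↦ by split_ifs; exacts [one_mem _, zero_mem _])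
    fun q hq x ↦ by
      congr 1
      rw [mul_inv_eq_iff_eq_mul, ← (hQ q hq).eq, mul_right_inj]
  simpa using h

theorem sum_norm_character_sq_mul_index_mem_pIntegers [Finite G] (hρ : ρ.IsIrreducible)
    {X : Finset G} {A Q : Subgroup G} (hA : ∀ x ∈ X, ∀ a ∈ A, Commute a x)
    (hQ : ∀ q ∈ Q, ∀ x, q * x * q⁻¹ ∈ X ↔ x ∈ X) :
    ((∑ x ∈ X, ‖ρ.character x‖ ^ 2 : ℝ) : ℂ) * A.index * Q.index / finrank ℂ V ^ 2 ∈
      pIntegers p := by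
  have := Fintype.ofFinite G
  have h := sum_mul_character_mul_index_div_finrank_mem_pIntegers (p := p) hρ Q
    (b := fun x ↦ if x ∈ X then ρ.character x⁻¹ * A.index / finrank ℂ V else 0)
    (fun x ↦ by
      split_ifs with hx
      · exact character_mul_index_div_finrank_mem_pIntegers hρ fun a ha ↦ (hA x hx a ha).inv_right
      · exact zero_mem _)
    fun q hq x ↦ by
      have hinv : (q * x * q⁻¹)⁻¹ = q * x⁻¹ * q⁻¹ := by group
      simp only [hQ q hq, hinv, char_conj]
  convert h using 1
  simp only [ite_mul, zero_mul, Finset.sum_ite_mem, Finset.univ_inter]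
  rw [Complex.ofReal_sum, Finset.sum_mul, Finset.sum_mul, Finset.sum_mul, Finset.sum_div,
    Finset.sum_div]
  refine Finset.sum_congr rfl fun x _ ↦ ?_
  rw [norm_character_sq]
  ring

theorem average_norm_character_sq_mul_card_mem_pIntegers [Fintype G] (hρ : ρ.IsIrreducible) {v : G}
    {K : Subgroup G} (hK : K ≤ .centralizer {v})
    (hnormal : ∀ h ∈ Subgroup.centralizer {v}, ∀ κ ∈ K, h * κ * h⁻¹ ∈ K) (i : ℕ) :
    (((Nat.card K : ℝ)⁻¹ * ∑ κ : K, ‖ρ.character (v ^ i * κ)‖ ^ 2 : ℝ) : ℂ) * Nat.card K *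
      (Subgroup.zpowers v).index * (Subgroup.centralizer {v}).index / finrank ℂ V ^ 2 ∈
      pIntegers p := by
  have hKcard : (Nat.card K : ℂ) ≠ 0 := by exact_mod_cast Nat.card_pos.ne'
  have hsum : ∑ κ : K, ‖ρ.character (v ^ i * κ)‖ ^ 2 =
      ∑ x with (v ^ i)⁻¹ * x ∈ K, ‖ρ.character x‖ ^ 2 := by
    rw [← Finset.sum_subtype (Finset.univ.filter (· ∈ K)) (by simp)
      (fun κ ↦ ‖ρ.character (v ^ i * κ)‖ ^ 2), Finset.sum_filter, Finset.sum_filter]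
    exact Fintype.sum_equiv (Equiv.mulLeft (v ^ i)) _ _ fun x ↦ by simp
  have h := sum_norm_character_sq_mul_index_mem_pIntegers (p := p) hρ
    (X := {x | (v ^ i)⁻¹ * x ∈ K}) (A := .zpowers v) (Q := .centralizer {v}) ?_ ?_
  · rwa [Complex.ofReal_mul, hsum, Complex.ofReal_inv, Complex.ofReal_natCast, mul_right_comm _ _
      (Nat.card K : ℂ), inv_mul_cancel₀ hKcard, one_mul]
  · rintro x hx _ ⟨z, rfl⟩
    have hcomm : Commute v ((v ^ i)⁻¹ * x) :=
      (Subgroup.mem_centralizer_singleton_iff.mp (hK (Finset.mem_filter.mp hx).2)).symm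
    have hx : Commute v x := by
      simpa using ((Commute.refl v).pow_right i).mul_right hcomm
    exact hx.zpow_left z
  · intro q hq x
    have hqv : Commute q ((v ^ i)⁻¹) :=
      (Commute.pow_right (Subgroup.mem_centralizer_singleton_iff.mp hq) i).inv_right
    have hconj : (v ^ i)⁻¹ * (q * x * q⁻¹) = q * ((v ^ i)⁻¹ * x) * q⁻¹ := by
      rw [← mul_assoc q, hqv.eq]
      group
    simp only [Finset.mem_filter, Finset.mem_univ, true_and, hconj]
    refine ⟨fun h ↦ ?_, hnormal q hq _⟩
    simpa [mul_assoc] using hnormal q⁻¹ (inv_mem hq) _ h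

end NormAverage

section Vanishing

variable {G V : Type*} [Group G]

theorem odd_index [Finite G] (P : Sylow 2 G) : Odd P.index :=
  Nat.not_even_iff_odd.mp fun h ↦ P.not_dvd_index h.two_dvd

theorem card_eq_two_pow_mul_index {P : Sylow 2 G} {k : ℕ} (e : P ≃* QuaternionGroup (2 ^ k)) :
    Nat.card G = 2 ^ (k + 2) * P.index := by
  rw [← (P : Subgroup G).card_mul_index, Nat.card_congr e.toEquiv, Nat.card_eq_fintype_card,
    QuaternionGroup.card]
  ring

section OddCentralizer

variable {v : G} {K : Subgroup G}

theorem le_centralizer_of_mem_iff (hmem : ∀ g, g ∈ K ↔ Commute g v ∧ Odd (orderOf g)) :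
    K ≤ .centralizer {v} := fun κ hκ ↦
  Subgroup.mem_centralizer_singleton_iff.mpr ((hmem κ).mp hκ).1

theorem conj_mem_of_mem_iff (hmem : ∀ g, g ∈ K ↔ Commute g v ∧ Odd (orderOf g))
    {h : G} (hh : h ∈ Subgroup.centralizer {v}) {κ : G} (hκ : κ ∈ K) : h * κ * h⁻¹ ∈ K := by
  refine (hmem _).mpr ⟨Subgroup.mem_centralizer_singleton_iff.mp (mul_mem (mul_mem hh
    (le_centralizer_of_mem_iff hmem hκ)) (inv_mem hh)), ?_⟩
  rw [← MulAut.conj_apply, MulEquiv.orderOf_eq]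
  exact ((hmem κ).mp hκ).2

theorem odd_card_of_mem_iff [Finite G] (hmem : ∀ g, g ∈ K ↔ Commute g v ∧ Odd (orderOf g)) :
    Odd (Nat.card K) := by
  by_contra heven
  obtain ⟨κ, hκ⟩ := exists_prime_orderOf_dvd_card' 2 (Nat.not_odd_iff_even.mp heven).two_dvd
  have hodd := ((hmem κ).mp κ.2).2
  rw [Subgroup.orderOf_coe, hκ] at hodd
  exact absurd hodd (by decide)

end OddCentralizer

variable [AddCommGroup V] [Module ℂ V] [FiniteDimensional ℂ V]
  {ρ : Representation ℂ G V} {P : Sylow 2 G} {k : ℕ}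

theorem average_norm_character_sq_div_two_pow_mem_pIntegers [Fintype G] (hρ : ρ.IsIrreducible)
    (e : P ≃* QuaternionGroup (2 ^ k)) {v : G} {r q a t : ℕ} (hv : orderOf v = 2 ^ r)
    (ha : 2 ^ a ∣ finrank ℂ V) {K : Subgroup G} (hK : K ≤ .centralizer {v})
    (hnormal : ∀ h ∈ Subgroup.centralizer {v}, ∀ κ ∈ K, h * κ * h⁻¹ ∈ K)
    (hcard : Nat.card (Subgroup.centralizer {v}) = Nat.card K * 2 ^ q)
    (ht : 2 * (k + 2) + t = q + r + 2 * a) (i : ℕ) :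
    (((Nat.card K : ℝ)⁻¹ * ∑ κ : K, ‖ρ.character (v ^ i * κ)‖ ^ 2 : ℝ) : ℂ) / (2 : ℕ) ^ t ∈
      pIntegers 2 := by
  have hmem := average_norm_character_sq_mul_card_mem_pIntegers (p := 2) hρ hK hnormal i
  set S : ℂ := (((Nat.card K : ℝ)⁻¹ * ∑ κ : K, ‖ρ.character (v ^ i * κ)‖ ^ 2 : ℝ) : ℂ)
  obtain ⟨d, hd⟩ := ha
  have hdim := finrank_ne_zero_of_isIrreducible hρ
  have hG := card_eq_two_pow_mul_index e
  have hindex := congrArg (Nat.cast (R := ℂ)) ((Subgroup.zpowers v).card_mul_index.trans hG)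
  have hindex' := congrArg (Nat.cast (R := ℂ))
    ((Subgroup.centralizer {v}).card_mul_index.trans hG)
  rw [Nat.card_zpowers, hv] at hindex
  rw [hcard] at hindex'
  rw [hd] at hmem hdim
  push_cast at hindex hindex' hmem hdim
  have hd0 : (d : ℂ) ≠ 0 := by exact_mod_cast right_ne_zero_of_mul hdim
  have ho0 : (P.index : ℂ) ≠ 0 := by exact_mod_cast (odd_index P).pos.ne'
  have hoinv := natCast_inv_mem_pIntegers (Nat.coprime_two_left.mpr (odd_index P))
  have hpow : (2 : ℂ) ^ (k + 2) * 2 ^ (k + 2) * 2 ^ t = 2 ^ q * 2 ^ r * (2 ^ a * 2 ^ a) := by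
    rw [← pow_add, ← pow_add, ← pow_add, ← pow_add, ← pow_add]
    congr 1
    omega
  convert mul_mem (mul_mem hmem (pow_mem hoinv 2))
    (pow_mem (mem_pIntegers_of_isIntegral (p := 2) (isIntegral_natCast (R := ℤ) d)) 2) using 1
  field_simp
  refine mul_left_cancel₀ (a := (2 : ℂ) ^ q * 2 ^ r) (by simp) ?_
  linear_combination (-S * P.index ^ 2) * hpow -
    S * 2 ^ t * (Nat.card K * 2 ^ q * (Subgroup.centralizer {v}).index) * hindex -
    S * 2 ^ t * (2 ^ (k + 2) * P.index) * hindex'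

theorem sum_average_norm_character_sq_lt [Fintype G] (hρ : ρ.IsIrreducible)
    (e : P ≃* QuaternionGroup (2 ^ k)) {v : G} {r q : ℕ} (hr : r ≠ 0) (hv : orderOf v = 2 ^ r)
    {K : Subgroup G} (hK : K ≤ .centralizer {v}) (hKodd : Odd (Nat.card K))
    (hcard : Nat.card (Subgroup.centralizer {v}) = Nat.card K * 2 ^ q) :
    ∑ i ∈ Finset.range (2 ^ r) with (2 ^ r).Coprime i,
      (Nat.card K : ℝ)⁻¹ * ∑ κ : K, ‖ρ.character (v ^ i * κ)‖ ^ 2 < 2 ^ (q + 1) := by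
  have hKpos : (0 : ℝ) < Nat.card K := by exact_mod_cast hKodd.pos
  have hv1 : v ≠ 1 := fun h ↦ by simp [h, (Nat.one_lt_two_pow hr).ne] at hv
  rw [← Finset.mul_sum, inv_mul_lt_iff₀ hKpos, ← hv]
  calc _ < (Nat.card (Subgroup.normalizer (Subgroup.zpowers v : Set G)) : ℝ) :=
        sum_sum_norm_character_sq_lt hρ hv1 hK
          (hv ▸ (Nat.coprime_two_left.mpr hKodd).pow_left r)
    _ ≤ (2 * Nat.card (Subgroup.centralizer {v}) : ℕ) :=
        Nat.cast_le.mpr (card_normalizer_zpowers_le e hv)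
    _ = Nat.card K * 2 ^ (q + 1) := by
        rw [hcard]
        push_cast
        ring

theorem character_mul_eq_zero [Finite G] (hρ : ρ.IsIrreducible)
    (e : P ≃* QuaternionGroup (2 ^ k)) (hk : k ≠ 0) {v : G} {r a : ℕ} (hr : 2 ≤ r)
    (hv : orderOf v = 2 ^ r) (ha : 2 ^ a ∣ finrank ℂ V) (hra : k + 3 ≤ r + a) {κ₀ : G}
    (hκ₀ : Commute κ₀ v) (hodd : Odd (orderOf κ₀)) :
    ρ.character (v * κ₀) = 0 := by
  have := Fintype.ofFinite G
  obtain ⟨K, q, hmem, hcard, hrq, -⟩ := exists_normal_complement_centralizer e hk hr hv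
  have hK := le_centralizer_of_mem_iff hmem
  have hKodd := odd_card_of_mem_iff hmem
  have hupper := sum_average_norm_character_sq_lt hρ e (by omega) hv hK hKodd hcard
  by_contra hne
  have hS1 : (Nat.card K : ℝ)⁻¹ * ∑ κ : K, ‖ρ.character (v ^ 1 * κ)‖ ^ 2 ≠ 0 := by
    have hpos : 0 < ‖ρ.character (v * κ₀)‖ ^ 2 := by positivity
    have hle := Finset.single_le_sum (f := fun κ : K ↦ ‖ρ.character (v ^ 1 * κ)‖ ^ 2)
      (fun κ _ ↦ by positivity) (Finset.mem_univ ⟨κ₀, (hmem κ₀).mpr ⟨hκ₀, hodd⟩⟩)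
    simp only [pow_one] at hle ⊢
    have hKpos : (0 : ℝ) < Nat.card K := by exact_mod_cast hKodd.pos
    exact (mul_pos (inv_pos.mpr hKpos) (hpos.trans_le hle)).ne'
  have hζ := Complex.isPrimitiveRoot_exp (2 ^ r) (by positivity)
  obtain ⟨f, hf⟩ := exists_polynomial_aeval_eq_average_norm_character_sq (by positivity) hζ ρ
    (hv ▸ pow_orderOf_eq_one v) hK
  obtain ⟨t, ht⟩ : ∃ t, 2 * (k + 2) + t = q + r + 2 * a :=
    ⟨q + r + 2 * a - 2 * (k + 2), by omega⟩
  have hlower := totient_mul_pow_le_sum two_ne_zero (by positivity) hζ (fun i ↦ by positivity) hf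
    (average_norm_character_sq_div_two_pow_mem_pIntegers hρ e hv ha hK
      (fun _ hh _ ↦ conj_mem_of_mem_iff hmem hh) hcard ht) hS1
  have hpow : (2 : ℝ) ^ (q + 1) ≤ 2 ^ (r - 1) * 2 ^ t := by
    rw [← pow_add]
    exact pow_le_pow_right₀ one_le_two (by omega)
  rw [Nat.totient_prime_pow Nat.prime_two (by omega)] at hlower
  push_cast at hlower
  linarith

theorem character_eq_zero_of_two_pow_dvd_orderOf [Finite G] (hρ : ρ.IsIrreducible)
    (e : P ≃* QuaternionGroup (2 ^ k)) (hk : k ≠ 0) {g : G} {r a : ℕ} (hr : 2 ≤ r)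
    (hg : 2 ^ r ∣ orderOf g) (ha : 2 ^ a ∣ finrank ℂ V) (hra : k + 3 ≤ r + a) :
    ρ.character g = 0 := by
  have := Fintype.ofFinite G
  obtain ⟨s, o, ho, horder⟩ := Nat.exists_eq_two_pow_mul_odd (orderOf_pos g).ne'
  have hcop : (2 ^ s).Coprime o := (Nat.coprime_two_left.mpr ho).pow_left s
  obtain ⟨i, j, hij, hi, hj⟩ := exists_pow_mul_pow_eq hcop (horder ▸ pow_orderOf_eq_one g)
  have hcomm : Commute (g ^ i) (g ^ j) := (Commute.refl g).pow_pow i j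
  have hodd : Odd (orderOf (g ^ j)) := ho.of_dvd_nat (orderOf_dvd_of_pow_eq_one hj)
  obtain ⟨t, -, ht⟩ := (Nat.dvd_prime_pow Nat.prime_two).mp (orderOf_dvd_of_pow_eq_one hi)
  have hrt : r ≤ t := by
    rw [← hij] at hg
    rw [← Nat.pow_dvd_pow_iff_le_right (x := 2) (by norm_num), ← ht]
    exact ((Nat.coprime_two_left.mpr hodd).pow_left r).dvd_of_dvd_mul_right
      (hg.trans hcomm.orderOf_mul_dvd_mul_orderOf)
  rw [← hij]
  exact character_mul_eq_zero hρ e hk (by omega) ht ha (by omega) hcomm.symm hodd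

end Vanishing

section Idempotents

variable {n R : Type*} [Fintype n] [CommRing R]

/-- The intertwiner `E * E' + (1 - E) * (1 - E')` of the two idempotents is congruent to `1`
modulo `2`. -/
theorem trace_mul_eq_trace_mul_of_eq_add_two_smul [IsDomain R] (hR : ∀ w : R, 1 + 2 * w ≠ 0)
    {E E' D Z : Matrix n n R} (hE : IsIdempotentElem E) (hE' : IsIdempotentElem E')
    (hD : E' = E + (2 : R) • D) (hEZ : Commute E Z) (hEZ' : Commute E' Z) :
    (E' * Z).trace = (E * Z).trace := by
  set U := E * E' + (1 - E) * (1 - E')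
  have hintertwine : E * U = U * E' := by
    simp only [U, mul_add, add_mul, ← mul_assoc, hE.eq, hE.mul_one_sub_self, zero_mul, add_zero]
    simp only [mul_assoc, hE'.eq, hE'.one_sub_mul_self, mul_zero, add_zero]
  have hcomm : Commute U Z := (hEZ.mul_left hEZ').add_left
    (((Commute.one_left Z).sub_left hEZ).mul_left ((Commute.one_left Z).sub_left hEZ'))
  have hone : U = 1 + (2 : R) • (E * D - (1 - E) * D) := by
    have hexpand : U = 1 + 2 * (E * E - E) + (2 : R) • (E * D - (1 - E) * D) := by
      simp only [U, hD, smul_sub, ← mul_smul_comm]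
      noncomm_ring
    rw [hexpand, hE.eq, sub_self, mul_zero, add_zero]
  have hdet : U.det ≠ 0 := by
    have hfactor : ∀ p q : R, 1 + p * 2 + q * 2 ^ 2 = 1 + 2 * (p + 2 * q) := fun p q ↦ by ring
    rw [hone, Matrix.det_one_add_smul, hfactor]
    exact hR _
  refine mul_left_cancel₀ hdet ?_
  calc U.det * (E' * Z).trace = (U.adjugate * (U * E' * Z)).trace := by
        rw [← mul_assoc, ← mul_assoc, Matrix.adjugate_mul]
        simp
    _ = (E * Z * (U * U.adjugate)).trace := by
        rw [← hintertwine, Matrix.trace_mul_comm, mul_assoc E, hcomm.eq]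
        simp only [mul_assoc]
    _ = U.det * (E * Z).trace := by
        rw [Matrix.mul_adjugate]
        simp

theorem trace_mul_eq_zero_of_neg_conj [IsDomain R] (htwo : (2 : R) ≠ 0)
    (hR : ∀ w : R, 1 + 2 * w ≠ 0) {E Z : Matrix n n R} (hE : IsIdempotentElem E) (hEZ : Commute E Z)
    {s : n → R} (hs : ∀ i, s i = 1 ∨ s i = -1)
    (hsZ : Matrix.diagonal s * Z = -(Z * Matrix.diagonal s)) : (E * Z).trace = 0 := by
  set S := Matrix.diagonal s
  have hSS : S * S = 1 := by
    rw [Matrix.diagonal_mul_diagonal, ← Matrix.diagonal_one]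
    congr! 2 with i
    rcases hs i with h | h <;> simp [h]
  have hpar : ∀ i j, ∃ d : R, s i * s j = 1 + 2 * d := by
    intro i j
    rcases hs i with hi | hi <;> rcases hs j with hj | hj <;> rw [hi, hj]
    exacts [⟨0, by ring⟩, ⟨-1, by ring⟩, ⟨-1, by ring⟩, ⟨0, by ring⟩]
  choose d hd using hpar
  have hconj : S * E * S * Z = -(S * (E * Z) * S) := by
    rw [mul_assoc _ S, hsZ]
    noncomm_ring
  have htrace := trace_mul_eq_trace_mul_of_eq_add_two_smul hR (E' := S * E * S)
    (D := .of fun i j ↦ d i j * E i j) (Z := Z) hE ?_ ?_ hEZ ?_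
  · rw [hconj, Matrix.trace_neg, Matrix.trace_mul_comm, ← mul_assoc, hSS, one_mul] at htrace
    exact (mul_eq_zero.mp (by linear_combination -htrace : 2 * (E * Z).trace = 0)).resolve_left htwo
  · rw [IsIdempotentElem, mul_assoc (S * E), ← mul_assoc S (S * E), ← mul_assoc S S, hSS, one_mul,
      mul_assoc S, ← mul_assoc E, hE.eq, mul_assoc]
  · ext i j
    simp only [S, Matrix.mul_diagonal, Matrix.diagonal_mul, Matrix.add_apply, Matrix.smul_apply,
      Matrix.of_apply, smul_eq_mul]
    linear_combination E i j * hd i j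
  · calc S * E * S * Z = -(S * Z) * E * S := by rw [hconj, hEZ.eq]; noncomm_ring
      _ = Z * (S * E * S) := by rw [hsZ]; noncomm_ring

end Idempotents

section Involution

variable {G : Type*} [Group G]

theorem exists_sign_mul_eq_neg (R : Type*) [Ring R] {z : G} (hz : orderOf z = 2) :
    ∃ s : G → R, (∀ g, s g = 1 ∨ s g = -1) ∧ ∀ g, s (g * z) = -s g := by
  have hz1 : z ≠ 1 := fun h ↦ by simp [h] at hz
  have hzz : z * z = 1 := by rw [← sq, ← hz, pow_orderOf_eq_one]
  let rep (g : G) : G := (g : G ⧸ Subgroup.zpowers z).out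
  refine ⟨fun g ↦ if g = rep g then 1 else -1, fun g ↦ ite_eq_or_eq _ _ _, fun g ↦ ?_⟩
  have hcoset : rep (g * z) = rep g := congrArg Quotient.out (QuotientGroup.eq.mpr (by simp))
  obtain ⟨⟨w, hw⟩, hrep⟩ := QuotientGroup.mk_out_eq_mul (Subgroup.zpowers z) g
  have hw : w = 1 ∨ w = z := by
    obtain ⟨j, rfl⟩ := Subgroup.mem_zpowers_iff.mp hw
    rcases Int.even_or_odd' j with ⟨i, rfl | rfl⟩
    · simp [zpow_mul, zpow_ofNat, sq, hzz]
    · simp [zpow_add, zpow_mul, zpow_ofNat, sq, hzz]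
  have hrep : rep g = g * w := hrep
  rcases hw with rfl | rfl <;> simp [hcoset, hrep, hz1]

theorem sum_conj_eq_zero_of_idempotent [Fintype G] {R : Type*} [CommRing R] [IsDomain R]
    (htwo : (2 : R) ≠ 0) (hR : ∀ w : R, 1 + 2 * w ≠ 0) {z : G} (hz : orderOf z = 2) {c : G → R}
    (hc : ∀ g, ∑ h, c h * c (h⁻¹ * g) = c g) : ∑ g, c (g * z * g⁻¹) = 0 := by
  obtain ⟨s, hs, hsz⟩ := exists_sign_mul_eq_neg R hz
  have hinv : z⁻¹ = z := inv_eq_of_mul_eq_one_left (by rw [← sq, ← hz, pow_orderOf_eq_one])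
  have hshift (g h : G) : h = g * z ↔ g = h * z := by
    rw [eq_comm, ← eq_mul_inv_iff_mul_eq, hinv]
  let Z : Matrix G G R := .of fun g h ↦ if h = g * z then 1 else 0
  have hmulZ (A : Matrix G G R) (g h : G) : (A * Z) g h = A g (h * z) := by
    simp [Z, Matrix.mul_apply, hshift]
  have hZmul (A : Matrix G G R) (g h : G) : (Z * A) g h = A (g * z) h := by
    simp [Z, Matrix.mul_apply]
  have htrace := trace_mul_eq_zero_of_neg_conj htwo hR (E := .of fun g h ↦ c (g * h⁻¹)) (Z := Z)
    ?_ ?_ hs ?_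
  · simpa [Matrix.trace, hmulZ, mul_assoc, hinv] using htrace
  · ext g l
    rw [Matrix.mul_apply, Matrix.of_apply, ← hc (g * l⁻¹)]
    exact Fintype.sum_equiv ((Equiv.inv G).trans (Equiv.mulLeft g)) _ _ fun h ↦ by
      simp [mul_assoc]
  · ext g l
    simp [hmulZ, hZmul, mul_assoc, hinv]
  · ext g l
    by_cases h : l = g * z <;> simp [hmulZ, hZmul, Matrix.diagonal_apply, hsz, ← hshift, eq_comm, h]

end Involution

section DefectZero

variable {G V : Type*} [Group G] [AddCommGroup V] [Module ℂ V] [FiniteDimensional ℂ V]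
  {ρ : Representation ℂ G V}

theorem sum_character_mul_character_inv_mul [Fintype G] (hρ : ρ.IsIrreducible) (g : G) :
    ∑ h, ρ.character h * ρ.character (h⁻¹ * g) =
      Nat.card G / finrank ℂ V * ρ.character g := by
  obtain ⟨c, hc, hdim⟩ := exists_sum_smul_eq_smul_one hρ (B := fun g ↦ ρ.character g⁻¹)
    fun g h ↦ by rw [mul_inv_rev, mul_inv_rev, inv_inv, ← mul_assoc, char_conj]
  have hfinrank : (finrank ℂ V : ℂ) ≠ 0 :=
    Nat.cast_ne_zero.mpr (finrank_ne_zero_of_isIrreducible hρ)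
  have hcard : c = Nat.card G / finrank ℂ V := by
    rw [eq_div_iff hfinrank, hdim, ← sum_character_mul_character_inv hρ]
    exact Finset.sum_congr rfl fun g _ ↦ mul_comm _ _
  have htrace := congrArg (fun T ↦ LinearMap.trace ℂ V (T * ρ g)) hc
  simp only [Finset.sum_mul, smul_mul_assoc, one_mul, map_sum, map_smul, smul_eq_mul,
    ← map_mul ρ] at htrace
  rw [← hcard]
  refine (Fintype.sum_equiv (Equiv.inv G) _ _ fun h ↦ ?_).trans htrace
  simp [Representation.character]

theorem one_add_two_mul_ne_zero_pIntegers (w : pIntegers 2) : 1 + 2 * w ≠ 0 := by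
  intro h
  have hw : (1 : ℂ) + 2 * w = 0 := congrArg Subtype.val h
  have hhalf : ((1 : ℤ) : ℂ) / (2 : ℕ) ^ 1 = -w := by
    push_cast
    linear_combination (1 / 2) * hw
  have := pow_dvd_of_div_mem_pIntegers two_ne_zero (hhalf ▸ neg_mem w.2)
  omega

theorem character_eq_zero_of_orderOf_eq_two [Finite G] (hρ : ρ.IsIrreducible)
    (hdim : (finrank ℂ V / Nat.card G : ℂ) ∈ pIntegers 2) {z : G} (hz : orderOf z = 2) :
    ρ.character z = 0 := by
  have := Fintype.ofFinite G
  have hfinrank : (finrank ℂ V : ℂ) ≠ 0 :=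
    Nat.cast_ne_zero.mpr (finrank_ne_zero_of_isIrreducible hρ)
  have hcard : (Nat.card G : ℂ) ≠ 0 := Nat.cast_ne_zero.mpr Nat.card_pos.ne'
  let c (g : G) : pIntegers 2 := ⟨finrank ℂ V / Nat.card G * ρ.character g,
    mul_mem hdim (mem_pIntegers_of_isIntegral (isIntegral_character ρ g))⟩
  have hidem (g : G) : ∑ h, c h * c (h⁻¹ * g) = c g := by
    apply Subtype.ext
    push_cast
    simp only [c, mul_mul_mul_comm _ (ρ.character _), ← Finset.mul_sum,
      sum_character_mul_character_inv_mul hρ]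
    field_simp
  have hsum := congrArg Subtype.val
    (sum_conj_eq_zero_of_idempotent two_ne_zero one_add_two_mul_ne_zero_pIntegers hz hidem)
  push_cast at hsum
  simpa [c, char_conj, hfinrank, hcard] using hsum

end DefectZero

/-! ### Sums of induced irreducible characters -/

theorem isIrreducibleCharacter_of_monoidHom {P : Type} [Group P] [Finite P] (lam : P →* ℂ) :
    IsIrreducibleCharacter lam := by
  let ρ : Representation ℂ P ℂ :=
    { toFun g := lam g • 1
      map_one' := by simp
      map_mul' g h := by ext; simp [mul_comm] }
  have hρ : ρ.IsIrreducible :=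
    isIrreducible_of_commute_imp_scalar fun T _ ↦ ⟨T 1, by ext; simp⟩
  have hchar : ρ.character = lam := by
    funext g
    change LinearMap.trace ℂ ℂ (lam g • 1) = lam g
    simp
  exact hchar ▸ isIrreducibleCharacter_character hρ

theorem isIrreducibleCharacter_comp_of_surjective {P H : Type} [Group P] [Group H] [Finite P]
    [Finite H] {φ : P →* H} (hφ : Function.Surjective φ) {χ : H → ℂ}
    (hχ : IsIrreducibleCharacter χ) : IsIrreducibleCharacter (χ ∘ φ) := by
  obtain ⟨V, _, _, _, ρ, hρ, rfl⟩ := exists_isIrreducible_of_isIrreducibleCharacter hχ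
  have := nontrivial_of_isIrreducible hρ
  refine isIrreducibleCharacter_character (ρ := ρ.comp φ)
    (isIrreducible_of_commute_imp_scalar fun T hT ↦ exists_eq_smul_one_of_commute hρ fun h ↦ ?_)
  obtain ⟨g, rfl⟩ := hφ h
  exact hT g

/-- The class functions on `P` that are sums of characters induced from irreducible characters of
subgroups of index `d`. -/
noncomputable def inducedCone (P : Type) [Group P] [Fintype P] (d : ℕ) : AddSubmonoid (P → ℂ) :=
  AddSubmonoid.closure {f | ∃ (Q : Subgroup P) (lam : Q → ℂ),
    IsIrreducibleCharacter lam ∧ d = Q.index ∧ f = inducedChar Q lam}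

section InducedCone

variable {P : Type} [Group P] [Fintype P] {d : ℕ}

theorem exists_fin_sum_of_mem_inducedCone {f : P → ℂ} (hf : f ∈ inducedCone P d) :
    ∃ (n : ℕ) (Q : Fin n → Subgroup P) (lam : (i : Fin n) → Q i → ℂ),
      (∀ i, IsIrreducibleCharacter (lam i)) ∧ (∀ i, d = (Q i).index) ∧
        ∀ x, f x = ∑ i, inducedChar (Q i) (lam i) x := by
  obtain ⟨l, hl, rfl⟩ := AddSubmonoid.exists_list_of_mem_closure hf
  choose Q lam hirr hindex heq using fun i : Fin l.length ↦ hl _ (List.getElem_mem i.isLt)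
  refine ⟨l.length, Q, lam, hirr, hindex, fun x ↦ ?_⟩
  have hsum : l.sum = ∑ i : Fin l.length, l[i] := by rw [← List.sum_ofFn]; simp
  rw [hsum, Finset.sum_apply]
  exact Finset.sum_congr rfl fun i _ ↦ congrFun (heq i) x

theorem inducedChar_mem_inducedCone (Q : Subgroup P) (lam : Q →* ℂ) :
    inducedChar Q lam ∈ inducedCone P Q.index :=
  AddSubmonoid.subset_closure ⟨Q, lam, isIrreducibleCharacter_of_monoidHom lam, rfl, rfl⟩

theorem mem_inducedCone_one_of_isIrreducibleCharacter {φ : P → ℂ} (hφ : IsIrreducibleCharacter φ) :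
    φ ∈ inducedCone P 1 := by
  obtain ⟨V, _, _, _, ρ, -, rfl⟩ := exists_isIrreducible_of_isIrreducibleCharacter hφ
  have hrestrict : IsIrreducibleCharacter (ρ.character ∘ (⊤ : Subgroup P).subtype) :=
    isIrreducibleCharacter_comp_of_surjective (fun x ↦ ⟨⟨x, trivial⟩, rfl⟩) hφ
  refine AddSubmonoid.subset_closure ⟨⊤, _, hrestrict, Subgroup.index_top.symm, ?_⟩
  funext g
  simp [inducedChar, char_conj]

theorem character_mem_inducedCone_one {V : Type} [AddCommGroup V] [Module ℂ V]
    [FiniteDimensional ℂ V] (ρ : Representation ℂ P V) : ρ.character ∈ inducedCone P 1 :=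
  AddSubmonoid.closure_le.mpr (fun _ ↦ mem_inducedCone_one_of_isIrreducibleCharacter)
    (character_mem_closure_isIrreducibleCharacter ρ)

theorem mem_inducedCone_card {f : P → ℂ} {w : ℕ} (h1 : f 1 = Nat.card P * w)
    (hf : ∀ x ≠ 1, f x = 0) : f ∈ inducedCone P (Nat.card P) := by
  have hmem := inducedChar_mem_inducedCone (⊥ : Subgroup P) 1
  rw [Subgroup.index_bot] at hmem
  have heq : f = w • inducedChar (⊥ : Subgroup P) (1 : (⊥ : Subgroup P) →* ℂ) := by
    funext x
    by_cases hx : x = 1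
    · simp [hx, h1, inducedChar, mul_comm]
    · simp [hx, hf x hx, inducedChar]
  exact heq ▸ AddSubmonoid.nsmul_mem _ hmem w

variable {H : Type} [Group H] [Fintype H]

theorem sum_comp_eq_card_ker_mul_sum {φ : P →* H} (hφ : Function.Surjective φ)
    (F : H → ℂ) : ∑ x, F (φ x) = Nat.card φ.ker * ∑ y, F y := by
  have hfiber (y : H) : (Finset.univ.filter fun x ↦ φ x = y).card = Nat.card φ.ker := by
    rw [MonoidHom.card_fiber_eq_of_mem_range φ (hφ y) (hφ 1), Nat.card_eq_fintype_card,
      Fintype.card_subtype]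
    simp only [MonoidHom.mem_ker]
  rw [← Finset.sum_fiberwise Finset.univ φ, Finset.mul_sum]
  refine Finset.sum_congr rfl fun y _ ↦ ?_
  rw [Finset.sum_congr rfl fun x hx ↦ congrArg F (Finset.mem_filter.mp hx).2, Finset.sum_const,
    hfiber, nsmul_eq_mul]

theorem inducedChar_comp {φ : P →* H} (hφ : Function.Surjective φ) (Q : Subgroup H)
    (lam : Q → ℂ) :
    inducedChar Q lam ∘ φ = inducedChar (Q.comap φ) (lam ∘ φ.subgroupComap Q) := by
  have hcard : (Fintype.card (Q.comap φ) : ℂ) = Nat.card φ.ker * Fintype.card Q := by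
    have h := sum_comp_eq_card_ker_mul_sum hφ fun y ↦ if y ∈ Q then 1 else 0
    simpa [Finset.sum_boole, Fintype.card_subtype] using h
  have hker : (Nat.card φ.ker : ℂ) ≠ 0 := by exact_mod_cast Nat.card_pos.ne'
  funext g
  have hsum := sum_comp_eq_card_ker_mul_sum hφ fun y ↦
    if h : y * φ g * y⁻¹ ∈ Q then lam ⟨y * φ g * y⁻¹, h⟩ else 0
  simp only [← map_mul, ← map_inv] at hsum
  simp only [inducedChar, Function.comp_apply, hcard]
  rw [mul_inv_rev, mul_assoc]
  congr 1
  rw [eq_inv_mul_iff_mul_eq₀ hker, ← hsum]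
  rfl

theorem comp_mem_inducedCone {φ : P →* H} (hφ : Function.Surjective φ) {f : H → ℂ}
    (hf : f ∈ inducedCone H d) : f ∘ φ ∈ inducedCone P d := by
  induction hf using AddSubmonoid.closure_induction with
  | mem f hf =>
    obtain ⟨Q, lam, hlam, rfl, rfl⟩ := hf
    exact AddSubmonoid.subset_closure ⟨Q.comap φ, lam ∘ φ.subgroupComap Q,
      isIrreducibleCharacter_comp_of_surjective
        (φ.subgroupComap_surjective_of_surjective Q hφ) hlam,
      (Subgroup.index_comap_of_surjective _ hφ).symm, inducedChar_comp hφ Q lam⟩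
  | zero => exact zero_mem _
  | add f₁ f₂ _ _ h₁ h₂ => exact add_mem h₁ h₂

end InducedCone

theorem card_mul_finrank_eigenspace {G V : Type*} [Group G] [AddCommGroup V] [Module ℂ V]
    [FiniteDimensional ℂ V] (ρ : Representation ℂ G V) {g : G} {n : ℕ} (hn : n ≠ 0)
    (hg : g ^ n = 1) {μ : ℂ} (hμ : μ ^ n = 1) :
    (n * finrank ℂ (End.eigenspace (ρ g) μ) : ℂ) =
      ∑ i ∈ Finset.range n, ρ.character (g ^ i) * μ⁻¹ ^ i := by
  have hμ0 : μ ≠ 0 := by rintro rfl; simp [hn] at hμ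
  have hgeom (ν : ℂ) (hν : ν ^ n = 1) :
      ∑ i ∈ Finset.range n, (ν * μ⁻¹) ^ i = if ν = μ then (n : ℂ) else 0 := by
    split_ifs with h
    · simp [h, hμ0]
    · have hne : ν * μ⁻¹ - 1 ≠ 0 := by
        rwa [sub_ne_zero, ne_eq, mul_inv_eq_one₀ hμ0]
      refine (mul_eq_zero.mp ?_).resolve_right hne
      rw [geom_sum_mul, mul_pow, inv_pow, hν, hμ, inv_one, mul_one, sub_self]
  simp_rw [character_pow_eq_sum_nthRootsFinset ρ hn hg, Finset.sum_mul]
  rw [Finset.sum_comm]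
  simp_rw [mul_assoc, ← mul_pow, ← Finset.mul_sum]
  have hmem {ν : ℂ} : ν ∈ Polynomial.nthRootsFinset n (1 : ℂ) ↔ ν ^ n = 1 :=
    Polynomial.mem_nthRootsFinset (Nat.pos_of_ne_zero hn) 1
  rw [Finset.sum_congr rfl fun ν hν ↦ by rw [hgeom ν (hmem.mp hν)]]
  simp [hmem.mpr hμ, mul_comm]

theorem exists_sum_character_mul_eq_card_mul {G V : Type} [Group G] [Fintype G] [AddCommGroup V]
    [Module ℂ V] [FiniteDimensional ℂ V] (ρ : Representation ℂ G V) {φ : G → ℂ}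
    (hφ : IsIrreducibleCharacter φ) :
    ∃ p : ℕ, ∑ g, ρ.character g * φ g⁻¹ = Nat.card G * p := by
  obtain ⟨W, _, _, _, σ, -, rfl⟩ := exists_isIrreducible_of_isIrreducibleCharacter hφ
  have h := card_inv_mul_sum_char_mul_char_eq_finrank σ ρ
  exact ⟨_, (inv_mul_eq_iff_eq_mul₀ (by exact_mod_cast Nat.card_pos.ne')).mp h⟩

section

variable {G V : Type*} [Group G] [AddCommGroup V] [Module ℂ V] (ρ : Representation ℂ G V)

theorem eigenspace_inv (g : G) (μ : ℂ) (hμ : μ ≠ 0) :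
    End.eigenspace (ρ g⁻¹) μ = End.eigenspace (ρ g) μ⁻¹ := by
  ext v
  rw [End.mem_eigenspace_iff, End.mem_eigenspace_iff]
  constructor <;> intro h
  · rw [eq_inv_smul_iff₀ hμ, ← map_smul, ← h, self_inv_apply]
  · rw [← inv_smul_eq_iff₀ hμ, ← map_smul, ← h, inv_self_apply]

variable [FiniteDimensional ℂ V]

theorem finrank_eigenspace_pow_pow {g : G} {D h : ℕ} (hD : D ≠ 0) (hh : h ≠ 0)
    (hg : g ^ (D * h) = 1) (hvan : ∀ i, ¬ D ∣ i → ρ.character (g ^ i) = 0) {ν : ℂ}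
    (hν : ν ^ (D * h) = 1) :
    finrank ℂ (End.eigenspace (ρ (g ^ D)) (ν ^ D)) = D * finrank ℂ (End.eigenspace (ρ g) ν) := by
  have hfull := card_mul_finrank_eigenspace ρ (mul_ne_zero hD hh) hg hν
  have hpow := card_mul_finrank_eigenspace ρ hh ((pow_mul g D h).symm.trans hg)
    ((pow_mul ν D h).symm.trans hν)
  have hsum : ∑ i ∈ Finset.range (D * h), ρ.character (g ^ i) * ν⁻¹ ^ i =
      ∑ i ∈ Finset.range h, ρ.character ((g ^ D) ^ i) * (ν ^ D)⁻¹ ^ i := by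
    rw [← Finset.sum_filter_of_ne (p := (D ∣ ·)) fun i _ hi ↦ by
      by_contra hdvd
      exact hi (by rw [hvan i hdvd, zero_mul])]
    symm
    refine Finset.sum_nbij' (D * ·) (· / D) ?_ ?_ ?_ ?_ ?_
    · intro i hi
      exact Finset.mem_filter.mpr ⟨Finset.mem_range.mpr <|
        Nat.mul_lt_mul_of_pos_left (Finset.mem_range.mp hi) (Nat.pos_of_ne_zero hD),
        dvd_mul_right D i⟩
    · intro i hi
      simp only [Finset.mem_filter, Finset.mem_range] at hi ⊢
      exact Nat.div_lt_of_lt_mul hi.1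
    · intro i _
      exact Nat.mul_div_cancel_left i (Nat.pos_of_ne_zero hD)
    · intro i hi
      exact Nat.mul_div_cancel' (Finset.mem_filter.mp hi).2
    · intro i _
      rw [pow_mul, pow_mul, inv_pow ν]
  rw [hsum, ← hpow] at hfull
  have hcast : h * (D * finrank ℂ (End.eigenspace (ρ g) ν)) =
      h * finrank ℂ (End.eigenspace (ρ (g ^ D)) (ν ^ D)) := by
    rw [← mul_assoc, mul_comm h]
    exact_mod_cast hfull
  exact (Nat.eq_of_mul_eq_mul_left (Nat.pos_of_ne_zero hh) hcast).symm

theorem sum_odd_character_pow {g : G} {h : ℕ} (hh : h ≠ 0) (hg : g ^ (2 * h) = 1) :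
    ∑ i ∈ Finset.range (2 * h) with Odd i, ρ.character (g ^ i) =
      h * (finrank ℂ (End.eigenspace (ρ g) 1) - finrank ℂ (End.eigenspace (ρ g) (-1))) := by
  have hone := card_mul_finrank_eigenspace ρ (by simpa) hg (one_pow (2 * h))
  have hneg := card_mul_finrank_eigenspace ρ (by simpa) hg
    (by rw [pow_mul, neg_one_sq, one_pow] : (-1 : ℂ) ^ (2 * h) = 1)
  have hdiff : ∑ i ∈ Finset.range (2 * h), ρ.character (g ^ i) * (1⁻¹ ^ i) -
      ∑ i ∈ Finset.range (2 * h), ρ.character (g ^ i) * (-1 : ℂ)⁻¹ ^ i =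
      2 * ∑ i ∈ Finset.range (2 * h) with Odd i, ρ.character (g ^ i) := by
    rw [← Finset.sum_sub_distrib, Finset.mul_sum, Finset.sum_filter]
    refine Finset.sum_congr rfl fun i _ ↦ ?_
    rw [inv_one, one_pow, inv_neg, inv_one]
    split_ifs with hi
    · rw [hi.neg_one_pow]
      ring
    · rw [(Nat.not_odd_iff_even.mp hi).neg_one_pow]
      ring
  rw [← hone, ← hneg] at hdiff
  push_cast at hdiff
  linear_combination -hdiff / 2

end

theorem sum_nthRootsFinset_two_mul {h : ℕ} (hh : h ≠ 0) (F : ℂ → ℂ) :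
    ∑ μ ∈ Polynomial.nthRootsFinset (2 * h) (1 : ℂ), F μ = F 1 + F (-1) +
      ∑ μ ∈ Polynomial.nthRootsFinset (2 * h) (1 : ℂ) with 0 < μ.im, (F μ + F μ⁻¹) := by
  set S := Polynomial.nthRootsFinset (2 * h) (1 : ℂ)
  have hmem (μ : ℂ) : μ ∈ S ↔ μ ^ (2 * h) = 1 := Polynomial.mem_nthRootsFinset (by omega) 1
  have hinv {μ : ℂ} (hμ : μ ∈ S) : μ⁻¹ ∈ S := by
    rw [hmem, inv_pow, (hmem μ).mp hμ, inv_one]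
  have hconj {μ : ℂ} (hμ : μ ∈ S) : μ⁻¹ = star μ :=
    Complex.inv_eq_conj (Complex.norm_eq_one_of_pow_eq_one ((hmem μ).mp hμ) (by simpa))
  have hlower : ∑ μ ∈ S with μ.im < 0, F μ = ∑ μ ∈ S with 0 < μ.im, F μ⁻¹ := by
    refine Finset.sum_nbij' (·⁻¹) (·⁻¹) ?_ ?_ (fun μ _ ↦ inv_inv μ) (fun μ _ ↦ inv_inv μ)
      fun μ _ ↦ by rw [inv_inv]
    all_goals
      intro μ hμ
      rw [Finset.mem_filter] at hμ ⊢
      exact ⟨hinv hμ.1, by simpa [hconj hμ.1] using hμ.2⟩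
  have hreal : S.filter (fun μ ↦ ¬ 0 < μ.im ∧ ¬ μ.im < 0) = {1, -1} := by
    ext μ
    simp only [Finset.mem_filter, Finset.mem_insert, Finset.mem_singleton]
    constructor
    · rintro ⟨hμ, hpos, hneg⟩
      have hself : μ⁻¹ = μ := by
        rw [hconj hμ]
        exact Complex.conj_eq_iff_im.mpr (le_antisymm (not_lt.mp hpos) (not_lt.mp hneg))
      have hμ0 : μ ≠ 0 := by rintro rfl; simp [hmem, hh] at hμ
      have hsq : (μ - 1) * (μ + 1) = 0 := by
        linear_combination mul_inv_cancel₀ hμ0 - μ * hself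
      exact (mul_eq_zero.mp hsq).imp sub_eq_zero.mp eq_neg_of_add_eq_zero_left
    · rintro (rfl | rfl) <;> simp [hmem, pow_mul]
  rw [← Finset.sum_filter_add_sum_filter_not S (0 < ·.im),
    ← Finset.sum_filter_add_sum_filter_not (S.filter (¬ 0 < ·.im)) (·.im < 0), Finset.filter_filter,
    Finset.filter_filter, hreal, Finset.sum_pair (by norm_num), Finset.sum_add_distrib, ← hlower,
    Finset.filter_congr fun μ _ ↦ and_iff_right_of_imp fun hneg : μ.im < 0 ↦ hneg.not_gt]
  ring

theorem exists_monoidHom_zpowers {G : Type*} [Group G] {g : G} {μ : ℂ} (hμ0 : μ ≠ 0)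
    (hμ : μ ^ orderOf g = 1) :
    ∃ lam : Subgroup.zpowers g →* ℂ,
      ∀ (x : Subgroup.zpowers g) (i : ℤ), (x : G) = g ^ i → lam x = μ ^ i := by
  let g' : Subgroup.zpowers g := ⟨g, Subgroup.mem_zpowers g⟩
  have hgen (x : Subgroup.zpowers g) : x ∈ Subgroup.zpowers g' := by
    obtain ⟨i, hi⟩ := Subgroup.mem_zpowers_iff.mp x.2
    exact ⟨i, Subtype.ext hi⟩
  have horder : orderOf (Units.mk0 μ hμ0) ∣ orderOf g' := by
    rw [Subgroup.orderOf_mk, orderOf_dvd_iff_pow_eq_one]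
    exact Units.ext hμ
  refine ⟨(Units.coeHom ℂ).comp (monoidHomOfForallMemZpowers hgen horder), fun x i hx ↦ ?_⟩
  obtain rfl : x = g' ^ i := Subtype.ext hx
  rw [map_zpow, MonoidHom.comp_apply, monoidHomOfForallMemZpowers_apply_gen]
  rfl

section

open QuaternionGroup

variable {m D h : ℕ}

theorem a_natCast_mul (D i : ℕ) : (a (D * i : ℕ) : QuaternionGroup m) = a D ^ i := by
  rw [a_natCast, a_natCast, pow_mul]

variable [NeZero m]

theorem sum_quaternionGroup (F : QuaternionGroup m → ℂ) :
    ∑ x, F x = ∑ i, F (a i) + ∑ i, F (xa i) := by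
  let equiv : ZMod (2 * m) ⊕ ZMod (2 * m) ≃ QuaternionGroup m :=
    { toFun := Sum.elim a xa
      invFun x := match x with
        | a i => .inl i
        | xa i => .inr i
      left_inv := by rintro (i | i) <;> rfl
      right_inv := by rintro (i | i) <;> rfl }
  rw [← Equiv.sum_comp equiv, Fintype.sum_sum_type]
  rfl

theorem a_natCast_mem_zpowers (hD : D ∣ 2 * m) (i : ℕ) :
    (a i : QuaternionGroup m) ∈ Subgroup.zpowers (a D) ↔ D ∣ i := by
  rw [← mem_powers_iff_mem_zpowers]
  constructor
  · rintro ⟨j, hj : a D ^ j = a i⟩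
    rw [← a_natCast_mul, a.injEq, ZMod.natCast_eq_natCast_iff] at hj
    exact (hj.of_dvd hD).dvd_iff dvd_rfl |>.mp (dvd_mul_right D j)
  · rintro ⟨j, rfl⟩
    exact ⟨j, (a_natCast_mul D j).symm⟩

theorem xa_notMem_zpowers (i : ZMod (2 * m)) (D : ℕ) :
    (xa i : QuaternionGroup m) ∉ Subgroup.zpowers (a D) := by
  rw [← mem_powers_iff_mem_zpowers]
  rintro ⟨j, hj : a D ^ j = xa i⟩
  simp [← a_natCast_mul] at hj

theorem orderOf_a_natCast (hDh : D * h = m) : orderOf (a D : QuaternionGroup m) = 2 * h := by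
  have hD : D ≠ 0 := by rintro rfl; exact NeZero.ne m (by simpa using hDh.symm)
  rw [a_natCast, orderOf_pow_of_dvd hD, orderOf_a_one, ← hDh, mul_left_comm,
    Nat.mul_div_cancel_left _ (Nat.pos_of_ne_zero hD)]
  rw [orderOf_a_one, ← hDh]
  exact ⟨2 * h, by ring⟩

theorem index_zpowers_a (hDh : D * h = m) :
    (Subgroup.zpowers (a D : QuaternionGroup m)).index = 2 * D := by
  have hcard := (Subgroup.zpowers (a D : QuaternionGroup m)).card_mul_index
  rw [Nat.card_zpowers, orderOf_a_natCast hDh, Nat.card_eq_fintype_card,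
    QuaternionGroup.card] at hcard
  have hh : h ≠ 0 := by rintro rfl; exact NeZero.ne m (by simpa using hDh.symm)
  exact Nat.eq_of_mul_eq_mul_left (by omega : 0 < 2 * h) (by rw [hcard, ← hDh]; ring)

theorem inducedChar_a (Q : Subgroup (QuaternionGroup m)) (f : Q → ℂ) (i : ZMod (2 * m)) :
    inducedChar Q f (a i) = (Fintype.card Q : ℂ)⁻¹ * ((2 * m : ℕ) *
      ((if hi : a i ∈ Q then f ⟨a i, hi⟩ else 0) +
        if hi : a (-i) ∈ Q then f ⟨a (-i), hi⟩ else 0)) := by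
  have hdite {x g : QuaternionGroup m} (hx : x = g) : (if h : x ∈ Q then f ⟨x, h⟩ else 0) =
      if h : g ∈ Q then f ⟨g, h⟩ else 0 := by
    subst hx
    rfl
  rw [inducedChar, sum_quaternionGroup, Finset.sum_congr rfl fun j _ ↦ hdite (a_conj_a i j),
    Finset.sum_congr rfl fun j _ ↦ hdite (xa_conj_a i j), Finset.sum_const, Finset.sum_const,
    Finset.card_univ, ZMod.card, nsmul_eq_mul, nsmul_eq_mul, ← mul_add]

theorem exists_mem_inducedCone_of_pow_eq_one (hDh : D * h = m) {μ : ℂ} (hμ : μ ^ (2 * h) = 1) :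
    ∃ I ∈ inducedCone (QuaternionGroup m) (2 * D),
      (∀ i : ℕ, I (a (D * i : ℕ)) = D * (μ ^ i + μ⁻¹ ^ i)) ∧
      (∀ i : ℕ, ¬ D ∣ i → I (a i) = 0) ∧ ∀ i, I (xa i) = 0 := by
  have hh : h ≠ 0 := by rintro rfl; exact NeZero.ne m (by simpa using hDh.symm)
  have hμ0 : μ ≠ 0 := by rintro rfl; simp [hh] at hμ
  set Q := Subgroup.zpowers (a D : QuaternionGroup m)
  obtain ⟨lam, hlam⟩ := exists_monoidHom_zpowers hμ0 ((orderOf_a_natCast hDh).symm ▸ hμ)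
  have hD : D ∣ 2 * m := ⟨2 * h, by rw [← hDh]; ring⟩
  refine ⟨inducedChar Q lam, index_zpowers_a hDh ▸ inducedChar_mem_inducedCone Q lam, ?_, ?_, ?_⟩
  · intro i
    have hmem : a (D * i : ℕ) ∈ Q := (a_natCast_mem_zpowers hD _).mpr (dvd_mul_right D i)
    have hinv : (a (-(D * i : ℕ)) : QuaternionGroup m) ∈ Q := a_inv (D * i : ℕ) ▸ inv_mem hmem
    have hcard : (Fintype.card Q : ℂ) = 2 * h := by
      rw [← Nat.card_eq_fintype_card, Nat.card_zpowers, orderOf_a_natCast hDh, Nat.cast_mul,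
        Nat.cast_two]
    have hpos : lam ⟨_, hmem⟩ = μ ^ i := by
      exact_mod_cast hlam ⟨_, hmem⟩ i (by rw [zpow_natCast, ← a_natCast_mul])
    have hneg : lam ⟨_, hinv⟩ = μ⁻¹ ^ i := by
      rw [hlam ⟨_, hinv⟩ (-i) (by rw [zpow_neg, zpow_natCast, ← a_natCast_mul, a_inv]), zpow_neg,
        zpow_natCast, inv_pow]
    have hh' : (h : ℂ) ≠ 0 := by exact_mod_cast hh
    rw [inducedChar_a, dif_pos hmem, dif_pos hinv, hcard, hpos, hneg, ← hDh]
    push_cast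
    field_simp
  · intro i hi
    have hnot : a i ∉ Q := (a_natCast_mem_zpowers hD i).not.mpr hi
    have hneg : a (-i) ∉ Q := by rwa [← a_inv, inv_mem_iff]
    rw [inducedChar_a, dif_neg hnot, dif_neg hneg, add_zero, mul_zero, mul_zero]
  · intro i
    simp only [inducedChar, sum_quaternionGroup, a_conj_xa, xa_conj_xa, Q, xa_notMem_zpowers,
      dite_false, Finset.sum_const_zero, add_zero, mul_zero]

end

theorem inducedChar_zpowers_of_orderOf_eq_two {G : Type*} [Group G] [Fintype G] [DecidableEq G]
    {t : G} (ht : orderOf t = 2) (lam : Subgroup.zpowers t →* ℂ) (g : G) :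
    inducedChar (Subgroup.zpowers t) lam g =
      2⁻¹ * ((Finset.univ.filter fun x ↦ x * g * x⁻¹ = 1).card +
        lam ⟨t, Subgroup.mem_zpowers t⟩ * (Finset.univ.filter fun x ↦ x * g * x⁻¹ = t).card) := by
  have ht1 : t ≠ 1 := by rintro rfl; simp at ht
  have hmem (x : G) : x ∈ Subgroup.zpowers t ↔ x = 1 ∨ x = t := by
    rw [mem_zpowers_iff_mem_range_orderOf, ht]
    simp [Finset.range_add_one, or_comm, eq_comm]
  have hterm (x : G) : (if h : x ∈ Subgroup.zpowers t then lam ⟨x, h⟩ else 0) =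
      (if x = 1 then 1 else 0) + if x = t then lam ⟨t, Subgroup.mem_zpowers t⟩ else 0 := by
    by_cases hx : x ∈ Subgroup.zpowers t
    · rcases (hmem x).mp hx with rfl | rfl
      · rw [dif_pos hx, if_pos rfl, if_neg ht1.symm, add_zero]
        exact map_one lam
      · simp [hx, ht1]
    · obtain ⟨h1, ht⟩ := not_or.mp (mt (hmem x).mpr hx)
      rw [dif_neg hx, if_neg h1, if_neg ht, add_zero]
  have hcard : (Fintype.card (Subgroup.zpowers t) : ℂ) = 2 := by
    rw [← Nat.card_eq_fintype_card, Nat.card_zpowers, ht, Nat.cast_two]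
  rw [inducedChar, hcard, Finset.sum_congr rfl fun x _ ↦ hterm (x * g * x⁻¹),
    Finset.sum_add_distrib, Finset.sum_boole, ← Finset.sum_filter, Finset.sum_const, nsmul_eq_mul,
    mul_comm (lam _)]

section

open DihedralGroup

variable {n : ℕ}

theorem even_natCast_zmod_two_mul (i : ℕ) : Even (i : ZMod (2 * n)) ↔ Even i := by
  rw [← ZMod.natCast_eq_zero_iff_even, even_iff_two_dvd]
  constructor
  · rintro ⟨j, hj⟩
    have h := congrArg (ZMod.castHom (dvd_mul_right 2 n) (ZMod 2)) hj
    rw [map_natCast, map_mul, map_ofNat] at h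
    rw [h, show (2 : ZMod 2) = 0 from rfl, zero_mul]
  · intro h
    exact_mod_cast Nat.cast_dvd_cast (α := ZMod (2 * n)) ((ZMod.natCast_eq_zero_iff i 2).mp h)

theorem sum_dihedralGroup [NeZero n] (F : DihedralGroup n → ℂ) :
    ∑ x, F x = ∑ i, F (r i) + ∑ i, F (sr i) := by
  let equiv : ZMod n ⊕ ZMod n ≃ DihedralGroup n :=
    { toFun := Sum.elim r sr
      invFun x := match x with
        | r i => .inl i
        | sr i => .inr i
      left_inv := by rintro (i | i) <;> rfl
      right_inv := by rintro (i | i) <;> rfl }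
  rw [← Equiv.sum_comp equiv, Fintype.sum_sum_type]
  rfl

theorem card_filter_two_mul_eq [NeZero n] (c : ZMod (2 * n)) :
    (Finset.univ.filter fun j : ZMod (2 * n) ↦ 2 * j = c).card = if Even c then 2 else 0 := by
  split_ifs with hc
  · obtain ⟨d, rfl⟩ := hc
    have hset : (Finset.univ.filter fun j : ZMod (2 * n) ↦ 2 * j = d + d) = {d, d + n} := by
      ext j
      simp only [Finset.mem_filter, Finset.mem_univ, true_and, Finset.mem_insert,
        Finset.mem_singleton]
      constructor
      · intro hj
        exact (eq_zero_or_eq_natCast_of_two_mul_eq_zero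
          (by linear_combination hj : 2 * (j - d) = 0)).imp sub_eq_zero.mp
            fun h ↦ by linear_combination h
      · rintro (rfl | rfl)
        · ring
        · linear_combination two_mul_natCast_eq_zero (n := n)
    refine hset ▸ Finset.card_pair fun h ↦ ?_
    have hdvd := (ZMod.natCast_eq_zero_iff n (2 * n)).mp (left_eq_add.mp h)
    have := Nat.le_of_dvd (NeZero.pos n) hdvd
    have := NeZero.pos n
    lia
  · rw [Finset.card_eq_zero, Finset.filter_eq_empty_iff]
    intro j _ hj
    exact hc ⟨j, hj.symm.trans (two_mul j)⟩

theorem conj_r_ne_sr (x : DihedralGroup n) (i j : ZMod n) : x * r i * x⁻¹ ≠ sr j := by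
  cases x <;> simp [DihedralGroup.inv_r, DihedralGroup.inv_sr]

theorem card_filter_conj_r_eq_one [NeZero n] (i : ZMod n) :
    (Finset.univ.filter fun x : DihedralGroup n ↦ x * r i * x⁻¹ = 1).card =
      if i = 0 then 2 * n else 0 := by
  have hr : r i = 1 ↔ i = 0 := by rw [DihedralGroup.one_def, r.injEq]
  simp only [conj_eq_one_iff, hr, Finset.filter_const]
  split_ifs
  · rw [Finset.card_univ, DihedralGroup.card]
  · rw [Finset.card_empty]

theorem card_filter_conj_sr_eq [NeZero n] (i j : ZMod (2 * n)) :
    (Finset.univ.filter fun x : DihedralGroup (2 * n) ↦ x * sr i * x⁻¹ = sr j).card =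
      if Even (i + j) then 4 else 0 := by
  have hr (l : ZMod (2 * n)) : r l * sr i * (r l)⁻¹ = sr j ↔ 2 * l = i - j := by
    simp [DihedralGroup.inv_r]
    grind
  have hsr (l : ZMod (2 * n)) : sr l * sr i * (sr l)⁻¹ = sr j ↔ 2 * l = i + j := by
    simp [DihedralGroup.inv_sr]
    grind
  have heven : Even (i - j) ↔ Even (i + j) := by
    exact ⟨fun ⟨d, hd⟩ ↦ ⟨d + j, by linear_combination hd⟩,
      fun ⟨d, hd⟩ ↦ ⟨d - j, by linear_combination hd⟩⟩
  have hsum := sum_dihedralGroup fun x : DihedralGroup (2 * n) ↦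
    if x * sr i * x⁻¹ = sr j then 1 else 0
  simp only [hr, hsr, Finset.sum_boole, card_filter_two_mul_eq, heven] at hsum
  apply Nat.cast_injective (R := ℂ)
  rw [hsum]
  split_ifs <;> norm_num

theorem exists_dihedralGroup_mem_inducedCone [NeZero n] (ε : ℕ) {σ : ℂ} (hσ : σ ^ 2 = 1) :
    ∃ J ∈ inducedCone (DihedralGroup (2 * n)) (2 * n),
      (∀ i : ℕ, J (r i) = if 2 * n ∣ i then (2 * n : ℂ) else 0) ∧
        ∀ i : ℕ, J (sr i) = if Even (i + ε) then 2 * σ else 0 := by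
  have hσ0 : σ ≠ 0 := by rintro rfl; simp at hσ
  have horder : orderOf (sr (ε : ZMod (2 * n))) = 2 := orderOf_sr _
  obtain ⟨lam, hlam⟩ := exists_monoidHom_zpowers hσ0 (horder.symm ▸ hσ)
  have hlamσ : lam ⟨_, Subgroup.mem_zpowers _⟩ = σ := by
    simpa using hlam ⟨_, Subgroup.mem_zpowers _⟩ 1 (zpow_one _).symm
  have hindex : (Subgroup.zpowers (sr (ε : ZMod (2 * n)))).index = 2 * n := by
    have hcard := (Subgroup.zpowers (sr (ε : ZMod (2 * n)))).card_mul_index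
    rw [Nat.card_zpowers, horder, DihedralGroup.nat_card] at hcard
    exact Nat.eq_of_mul_eq_mul_left two_pos hcard
  have hmem := inducedChar_mem_inducedCone _ lam
  rw [hindex] at hmem
  refine ⟨inducedChar _ lam, hmem, fun i ↦ ?_, fun i ↦ ?_⟩
  · rw [inducedChar_zpowers_of_orderOf_eq_two horder, card_filter_conj_r_eq_one,
      Finset.filter_eq_empty_iff.mpr fun x _ ↦ conj_r_ne_sr x _ _, Finset.card_empty]
    simp only [ZMod.natCast_eq_zero_iff]
    split_ifs <;> push_cast <;> ring
  · have hone (x : DihedralGroup (2 * n)) : x * sr (i : ZMod (2 * n)) * x⁻¹ ≠ 1 := by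
      rw [Ne, conj_eq_one_iff]
      exact nofun
    rw [inducedChar_zpowers_of_orderOf_eq_two horder, card_filter_conj_sr_eq, hlamσ,
      Finset.filter_eq_empty_iff.mpr fun x _ ↦ hone x, Finset.card_empty, ← Nat.cast_add,
      even_natCast_zmod_two_mul]
    split_ifs <;> push_cast <;> ring

end

section

open QuaternionGroup

variable {m D h : ℕ}

/-- The reduction of `QuaternionGroup m` modulo `a (2 * D)`, a dihedral group when `2 * D` divides
`m`. -/
def quaternionToDihedral (hD : 2 * D ∣ m) : QuaternionGroup m →* DihedralGroup (2 * D) where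
  toFun x := match x with
    | a i => .r (ZMod.castHom (hD.mul_left 2) (ZMod (2 * D)) i)
    | xa i => .sr (ZMod.castHom (hD.mul_left 2) (ZMod (2 * D)) i)
  map_one' := congrArg DihedralGroup.r (map_zero _)
  map_mul' := by
    have hm : (m : ZMod (2 * D)) = 0 := (ZMod.natCast_eq_zero_iff m (2 * D)).mpr hD
    rintro (i | i) (j | j)
    · exact congrArg DihedralGroup.r (map_add _ i j)
    · exact congrArg DihedralGroup.sr (map_sub _ j i)
    · exact congrArg DihedralGroup.sr (map_add _ i j)
    · refine congrArg DihedralGroup.r ?_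
      rw [map_sub, map_add, map_natCast, hm, zero_add]

theorem quaternionToDihedral_surjective (hD : 2 * D ∣ m) :
    Function.Surjective (quaternionToDihedral hD) := by
  have hcast := ZMod.castHom_surjective (hD.mul_left 2)
  rintro (i | i)
  · exact (hcast i).elim fun j hj ↦ ⟨a j, congrArg DihedralGroup.r hj⟩
  · exact (hcast i).elim fun j hj ↦ ⟨xa j, congrArg DihedralGroup.sr hj⟩

theorem exists_mem_inducedCone_of_sq_eq_one [NeZero m] (hD : 2 * D ∣ m) (ε : ℕ) {σ : ℂ}
    (hσ : σ ^ 2 = 1) :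
    ∃ J ∈ inducedCone (QuaternionGroup m) (2 * D),
      (∀ i : ℕ, J (a i) = if 2 * D ∣ i then (2 * D : ℂ) else 0) ∧
        ∀ i : ℕ, J (xa i) = if Even (i + ε) then 2 * σ else 0 := by
  have : NeZero D := ⟨by rintro rfl; exact NeZero.ne m (by simpa using hD)⟩
  obtain ⟨J, hJ, hr, hsr⟩ := exists_dihedralGroup_mem_inducedCone (n := D) ε hσ
  refine ⟨J ∘ quaternionToDihedral hD, comp_mem_inducedCone (quaternionToDihedral_surjective hD) hJ,
    fun i ↦ ?_, fun i ↦ ?_⟩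
  · exact (congrArg (J ∘ DihedralGroup.r) (map_natCast _ i)).trans (hr i)
  · exact (congrArg (J ∘ DihedralGroup.sr) (map_natCast _ i)).trans (hsr i)

end

theorem finrank_eigenspace_conj {G V : Type*} [Group G] [AddCommGroup V] [Module ℂ V]
    (ρ : Representation ℂ G V) (x g : G) (μ : ℂ) :
    finrank ℂ (End.eigenspace (ρ (x * g * x⁻¹)) μ) = finrank ℂ (End.eigenspace (ρ g) μ) := by
  let equiv : V ≃ₗ[ℂ] V := LinearEquiv.ofLinearMap (ρ x) (ρ x⁻¹)
    (LinearMap.ext (ρ.self_inv_apply x)) (LinearMap.ext (ρ.inv_self_apply x))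
  have hmap : (End.eigenspace (ρ g) μ).map (equiv : V →ₗ[ℂ] V) =
      End.eigenspace (ρ (x * g * x⁻¹)) μ := by
    rw [Submodule.map_equiv_eq_comap_symm]
    ext v
    rw [Submodule.mem_comap, End.mem_eigenspace_iff, End.mem_eigenspace_iff]
    change ρ g (ρ x⁻¹ v) = μ • ρ x⁻¹ v ↔ _
    rw [map_mul, map_mul, End.mul_apply, End.mul_apply, ← map_smul]
    constructor <;> intro h
    · rw [h, self_inv_apply]
    · rw [← h, inv_self_apply]
  rw [← hmap]
  exact equiv.finrank_map_eq _

theorem sum_zmod_eq_sum_range {n : ℕ} [NeZero n] (F : ZMod n → ℂ) :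
    ∑ i, F i = ∑ i ∈ Finset.range n, F i := by
  refine Finset.sum_nbij' ZMod.val (fun i ↦ (i : ZMod n)) ?_ ?_ ?_ ?_ ?_
  · exact fun i _ ↦ Finset.mem_range.mpr (ZMod.val_lt i)
  · exact fun i _ ↦ Finset.mem_univ _
  · exact fun i _ ↦ ZMod.natCast_zmod_val i
  · exact fun i hi ↦ ZMod.val_cast_of_lt (Finset.mem_range.mp hi)
  · exact fun i _ ↦ by rw [ZMod.natCast_zmod_val]

theorem sum_range_two_mul {M : Type*} [AddCommMonoid M] (F : ℕ → M) (n : ℕ) :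
    ∑ i ∈ Finset.range (2 * n), F i = ∑ j ∈ Finset.range n, (F (2 * j) + F (2 * j + 1)) := by
  induction n with
  | zero => rfl
  | succ n ih => rw [mul_add_one, Finset.sum_range_succ, Finset.sum_range_succ, ih,
      Finset.sum_range_succ, add_assoc]

section

open QuaternionGroup

variable {m D h : ℕ}

theorem exists_monoidHom_quaternionGroup (hm : Even m) {s t : ℂ} (hs : s * s = 1)
    (ht : t * t = 1) :
    ∃ lam : QuaternionGroup m →* ℂ,
      (∀ i : ℕ, lam (a i) = s ^ i) ∧ ∀ i : ℕ, lam (xa i) = t * s ^ i := by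
  have hunit {u : ℂ} (hu : u * u = 1) : ∃ v : ℤˣ, ((v : ℤ) : ℂ) = u :=
    (mul_self_eq_one_iff.mp hu).elim (fun h ↦ ⟨1, by simp [h]⟩) fun h ↦ ⟨-1, by simp [h]⟩
  obtain ⟨s, rfl⟩ := hunit hs
  obtain ⟨t, rfl⟩ := hunit ht
  let parity : ZMod (2 * m) →+* ZMod 2 := ZMod.castHom (dvd_mul_right 2 m) (ZMod 2)
  have hm0 : (m : ZMod 2) = 0 := (ZMod.natCast_eq_zero_iff_even).mpr hm
  let sign : QuaternionGroup m →* ℤˣ :=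
    { toFun x := match x with
        | a i => s ^ parity i
        | xa i => t * s ^ parity i
      map_one' := by
        change s ^ parity 0 = 1
        rw [map_zero, uzpow_zero]
      map_mul' := by
        rintro (i | i) (j | j)
        · change s ^ parity (i + j) = _
          rw [map_add, uzpow_add]
        · change t * s ^ parity (j - i) = s ^ parity i * (t * s ^ parity j)
          rw [map_sub, CharTwo.sub_eq_add, uzpow_add, mul_comm (s ^ parity j), mul_left_comm]
        · change t * s ^ parity (i + j) = t * s ^ parity i * s ^ parity j
          rw [map_add, uzpow_add, mul_assoc]
        · change s ^ parity (m + j - i) = t * s ^ parity i * (t * s ^ parity j)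
          rw [map_sub, map_add, map_natCast, hm0, zero_add, CharTwo.sub_eq_add, uzpow_add,
            mul_mul_mul_comm, Int.units_mul_self, one_mul, mul_comm] }
  refine ⟨((Int.castRingHom ℂ : ℤ →* ℂ).comp (Units.coeHom ℤ)).comp sign, fun i ↦ ?_, fun i ↦ ?_⟩
  · change (((s ^ parity i : ℤˣ) : ℤ) : ℂ) = _
    rw [map_natCast, uzpow_natCast]
    push_cast
    rfl
  · change (((t * s ^ parity i : ℤˣ) : ℤ) : ℂ) = _
    rw [map_natCast, uzpow_natCast]
    push_cast
    rfl

variable {W : Type} [AddCommGroup W] [Module ℂ W]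
  (τ : Representation ℂ (QuaternionGroup m) W)

theorem finrank_eigenspace_a_inv (i : ZMod (2 * m)) {μ : ℂ} (hμ : μ ≠ 0) :
    finrank ℂ (End.eigenspace (τ (a i)) μ⁻¹) = finrank ℂ (End.eigenspace (τ (a i)) μ) := by
  rw [← eigenspace_inv τ _ _ hμ, a_inv, ← xa_conj_a i 0, finrank_eigenspace_conj]

theorem character_xa_natCast (i : ℕ) :
    τ.character (xa i) = if Even i then τ.character (xa 0) else τ.character (xa 1) := by
  split_ifs with hi
  · obtain ⟨j, rfl⟩ := hi
    rw [← τ.char_conj (xa _) (a j), a_conj_xa]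
    congr 2
    push_cast
    ring
  · obtain ⟨j, rfl⟩ := Nat.not_even_iff_odd.mp hi
    rw [← τ.char_conj (xa _) (a j), a_conj_xa]
    congr 2
    push_cast
    ring

theorem sum_character_xa_mul_pow {s : ℂ} (hs : s * s = 1) :
    ∑ i ∈ Finset.range (2 * m), τ.character (xa i) * s ^ i =
      m * (τ.character (xa 0) + s * τ.character (xa 1)) := by
  have hpair (j : ℕ) : τ.character (xa (2 * j : ℕ)) * s ^ (2 * j) +
      τ.character (xa (2 * j + 1 : ℕ)) * s ^ (2 * j + 1) =
        τ.character (xa 0) + s * τ.character (xa 1) := by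
    rw [character_xa_natCast, character_xa_natCast, if_pos (even_two_mul j), if_neg (by simp),
      pow_succ, pow_mul, sq, hs, one_pow]
    ring
  rw [sum_range_two_mul, Finset.sum_congr rfl fun j _ ↦ hpair j, Finset.sum_const,
    Finset.card_range, nsmul_eq_mul]

variable [NeZero m] [FiniteDimensional ℂ W]

theorem a_natCast_pow_eq_one (hDh : D * h = m) : (a D : QuaternionGroup m) ^ (2 * h) = 1 :=
  orderOf_a_natCast hDh ▸ pow_orderOf_eq_one _

-- The multiplicity of a linear character in `τ` is an integer.
theorem exists_two_mul_finrank_add_character_xa (hm : Even m) {s t : ℂ} (hs : s * s = 1)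
    (ht : t * t = 1) :
    ∃ p : ℕ, 2 * finrank ℂ (End.eigenspace (τ (a 1)) s) +
      t * (τ.character (xa 0) + s * τ.character (xa 1)) = 4 * p := by
  obtain ⟨lam, hlam_a, hlam_xa⟩ := exists_monoidHom_quaternionGroup hm hs ht
  obtain ⟨p, hp⟩ := exists_sum_character_mul_eq_card_mul τ (isIrreducibleCharacter_of_monoidHom lam)
  have hinv (g : QuaternionGroup m) : lam g⁻¹ = lam g := by
    have hg : lam g * lam g = 1 := by
      rcases g with i | i <;> rw [← ZMod.natCast_zmod_val i]
      · rw [hlam_a, ← mul_pow, hs, one_pow]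
      · rw [hlam_xa, mul_mul_mul_comm, ← mul_pow, hs, ht, one_pow, one_mul]
    rw [← mul_one (lam g⁻¹), ← hg, ← mul_assoc, ← map_mul, inv_mul_cancel, map_one, one_mul]
  have hsum_a : ∑ i, τ.character (a i) * lam (a i) =
      2 * m * finrank ℂ (End.eigenspace (τ (a 1)) s) := by
    have hroot : s ^ (2 * m) = 1 := by rw [pow_mul, sq, hs, one_pow]
    have h := card_mul_finrank_eigenspace τ (NeZero.ne (2 * m)) a_one_pow_n hroot
    rw [inv_eq_of_mul_eq_one_left hs] at h
    simp only [sum_zmod_eq_sum_range, hlam_a]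
    simpa only [a_natCast, Nat.cast_mul, Nat.cast_two] using h.symm
  have hsum_xa : ∑ i, τ.character (xa i) * lam (xa i) =
      m * (t * (τ.character (xa 0) + s * τ.character (xa 1))) := by
    simp only [sum_zmod_eq_sum_range, hlam_xa, mul_left_comm _ t, ← Finset.mul_sum]
    rw [sum_character_xa_mul_pow τ hs, mul_left_comm]
  simp only [hinv, sum_quaternionGroup, hsum_a, hsum_xa, Nat.card_eq_fintype_card,
    QuaternionGroup.card] at hp
  have hm0 : (m : ℂ) ≠ 0 := NeZero.ne _
  refine ⟨p, mul_left_cancel₀ hm0 ?_⟩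
  push_cast at hp
  linear_combination hp

theorem finrank_eigenspace_a_pow (hDh : D * h = m)
    (hvan : ∀ i : ℕ, ¬ D ∣ i → τ.character (a i) = 0) {ν : ℂ} (hν : ν ^ (2 * m) = 1) :
    finrank ℂ (End.eigenspace (τ (a D)) (ν ^ D)) = D * finrank ℂ (End.eigenspace (τ (a 1)) ν) := by
  have hD : D ≠ 0 := by rintro rfl; exact NeZero.ne m (by simpa using hDh.symm)
  have hh : h ≠ 0 := by rintro rfl; exact NeZero.ne m (by simpa using hDh.symm)
  have hm : D * (2 * h) = 2 * m := by rw [← hDh]; ring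
  rw [a_natCast]
  refine finrank_eigenspace_pow_pow τ hD (h := 2 * h) (by positivity) ?_ (fun i hi ↦ ?_) (hm ▸ hν)
  · rw [hm, a_one_pow_n]
  · rw [← a_natCast]
    exact hvan i hi

theorem dvd_finrank_eigenspace_a (hDh : D * h = m)
    (hvan : ∀ i : ℕ, ¬ D ∣ i → τ.character (a i) = 0) {μ : ℂ} (hμ : μ ^ (2 * h) = 1) :
    D ∣ finrank ℂ (End.eigenspace (τ (a D)) μ) := by
  have hD : D ≠ 0 := by rintro rfl; exact NeZero.ne m (by simpa using hDh.symm)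
  obtain ⟨ν, rfl⟩ := IsAlgClosed.exists_pow_nat_eq μ (Nat.pos_of_ne_zero hD)
  rw [← pow_mul, mul_left_comm, hDh] at hμ
  exact ⟨_, finrank_eigenspace_a_pow τ hDh hvan hμ⟩

theorem character_a_natCast_mul (hDh : D * h = m) (i : ℕ) :
    τ.character (a (D * i : ℕ)) = finrank ℂ (End.eigenspace (τ (a D)) 1) +
      finrank ℂ (End.eigenspace (τ (a D)) (-1)) * (-1) ^ i +
      ∑ μ ∈ Polynomial.nthRootsFinset (2 * h) (1 : ℂ) with 0 < μ.im,
        finrank ℂ (End.eigenspace (τ (a D)) μ) * (μ ^ i + μ⁻¹ ^ i) := by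
  have hh : h ≠ 0 := by rintro rfl; exact NeZero.ne m (by simpa using hDh.symm)
  rw [a_natCast_mul, character_pow_eq_sum_nthRootsFinset τ (n := 2 * h) (by positivity)
    (a_natCast_pow_eq_one hDh), sum_nthRootsFinset_two_mul hh, one_pow, mul_one]
  refine congrArg _ (Finset.sum_congr rfl fun μ hμ ↦ ?_)
  have hμ0 : μ ≠ 0 := by rintro rfl; simp at hμ
  rw [finrank_eigenspace_a_inv τ _ hμ0, mul_add]

theorem character_mem_inducedCone_of_residual (hDh : D * h = m)
    (hvan : ∀ i : ℕ, ¬ D ∣ i → τ.character (a i) = 0) {f : QuaternionGroup m → ℂ}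
    (hf : f ∈ inducedCone (QuaternionGroup m) (2 * D))
    (hfa : ∀ i : ℕ, f (a (D * i : ℕ)) = finrank ℂ (End.eigenspace (τ (a D)) 1) +
      finrank ℂ (End.eigenspace (τ (a D)) (-1)) * (-1) ^ i)
    (hfa' : ∀ i : ℕ, ¬ D ∣ i → f (a i) = 0)
    (hfxa : ∀ i : ℕ, f (xa i) = τ.character (xa i)) :
    τ.character ∈ inducedCone (QuaternionGroup m) (2 * D) := by
  have hh : h ≠ 0 := by rintro rfl; exact NeZero.ne m (by simpa using hDh.symm)
  have hroot {μ : ℂ} (hμ : μ ∈ (Polynomial.nthRootsFinset (2 * h) (1 : ℂ)).filter (0 < ·.im)) :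
      μ ^ (2 * h) = 1 :=
    (Polynomial.mem_nthRootsFinset (by positivity) 1).mp (Finset.mem_filter.mp hμ).1
  choose! I hI hIa hIa' hIxa using fun (μ : ℂ) (hμ : μ ^ (2 * h) = 1) ↦
    exists_mem_inducedCone_of_pow_eq_one hDh hμ
  choose! c hc using fun (μ : ℂ) (hμ : μ ^ (2 * h) = 1) ↦ dvd_finrank_eigenspace_a τ hDh hvan hμ
  suffices heq : τ.character =
      f + ∑ μ ∈ Polynomial.nthRootsFinset (2 * h) (1 : ℂ) with 0 < μ.im, c μ • I μ by
    rw [heq]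
    exact add_mem hf (sum_mem fun μ hμ ↦ AddSubmonoid.nsmul_mem _ (hI μ (hroot hμ)) _)
  funext x
  rw [Pi.add_apply, Finset.sum_apply]
  simp only [Pi.smul_apply, nsmul_eq_mul]
  rcases x with i | i <;> rw [← ZMod.natCast_zmod_val i]
  · by_cases hi : D ∣ i.val
    · obtain ⟨j, hj⟩ := hi
      rw [hj, character_a_natCast_mul τ hDh, hfa]
      refine congrArg _ (Finset.sum_congr rfl fun μ hμ ↦ ?_)
      rw [hIa μ (hroot hμ), hc μ (hroot hμ), Nat.cast_mul]
      ring
    · rw [hvan _ hi, hfa' _ hi, Finset.sum_eq_zero, add_zero]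
      exact fun μ hμ ↦ by rw [hIa' μ (hroot hμ) _ hi, mul_zero]
  · rw [hfxa, Finset.sum_eq_zero, add_zero]
    exact fun μ hμ ↦ by rw [hIxa μ (hroot hμ), mul_zero]

theorem even_finrank_eigenspace_a_one (hm : Even m) (hxa : ∀ i, τ.character (xa i) = 0) :
    Even (finrank ℂ (End.eigenspace (τ (a 1)) 1)) := by
  obtain ⟨p, hp⟩ := exists_two_mul_finrank_add_character_xa τ hm (mul_one 1) (mul_one 1)
  rw [hxa, hxa, mul_zero, add_zero, mul_zero, add_zero] at hp
  have hp' : 2 * finrank ℂ (End.eigenspace (τ (a 1)) 1) = 4 * p := by exact_mod_cast hp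
  exact ⟨p, by lia⟩

theorem finrank_eq_finrank_eigenspace_add (hDh : D * h = m) :
    finrank ℂ W = finrank ℂ (End.eigenspace (τ (a D)) 1) +
      finrank ℂ (End.eigenspace (τ (a D)) (-1)) +
      2 * ∑ μ ∈ Polynomial.nthRootsFinset (2 * h) (1 : ℂ) with 0 < μ.im,
        finrank ℂ (End.eigenspace (τ (a D)) μ) := by
  have hchar := character_a_natCast_mul τ hDh 0
  rw [mul_zero, Nat.cast_zero, ← QuaternionGroup.one_def, char_one] at hchar
  simp only [pow_zero, mul_one, ← Finset.sum_mul] at hchar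
  apply Nat.cast_injective (R := ℂ)
  push_cast
  linear_combination hchar

theorem two_mul_dvd_finrank_eigenspace_add (hDh : D * h = m)
    (hvan : ∀ i : ℕ, ¬ D ∣ i → τ.character (a i) = 0) (hdim : 2 * D ∣ finrank ℂ W) :
    2 * D ∣ finrank ℂ (End.eigenspace (τ (a D)) 1) +
      finrank ℂ (End.eigenspace (τ (a D)) (-1)) := by
  have hsum : D ∣ ∑ μ ∈ Polynomial.nthRootsFinset (2 * h) (1 : ℂ) with 0 < μ.im,
      finrank ℂ (End.eigenspace (τ (a D)) μ) := by
    refine Finset.dvd_sum fun μ hμ ↦ dvd_finrank_eigenspace_a τ hDh hvan ?_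
    have hh : 0 < 2 * h := Nat.pos_of_ne_zero (by rintro h0; simp [h0] at hμ)
    exact (Polynomial.mem_nthRootsFinset hh 1).mp (Finset.mem_filter.mp hμ).1
  rw [finrank_eq_finrank_eigenspace_add τ hDh] at hdim
  exact (Nat.dvd_add_left (mul_dvd_mul_left 2 hsum)).mp hdim

theorem character_mem_inducedCone_of_xa_eq_zero (hDh : D * h = m) (hm : Even m)
    (hvan : ∀ i : ℕ, ¬ D ∣ i → τ.character (a i) = 0) (hxa : ∀ i, τ.character (xa i) = 0)
    (hdim : 2 * D ∣ finrank ℂ W) : τ.character ∈ inducedCone (QuaternionGroup m) (2 * D) := by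
  obtain ⟨p, hp⟩ : 2 * D ∣ finrank ℂ (End.eigenspace (τ (a D)) 1) := by
    obtain ⟨N, hN⟩ := even_finrank_eigenspace_a_one τ hm hxa
    have h := finrank_eigenspace_a_pow τ hDh hvan (one_pow _)
    rw [one_pow, hN] at h
    exact ⟨N, by rw [h]; ring⟩
  have hroot : (-1 : ℂ) ^ (2 * h) = 1 := (even_two_mul h).neg_one_pow
  obtain ⟨q, hq⟩ : 2 * D ∣ finrank ℂ (End.eigenspace (τ (a D)) (-1)) :=
    (Nat.dvd_add_right ⟨p, hp⟩).mp (two_mul_dvd_finrank_eigenspace_add τ hDh hvan hdim)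
  obtain ⟨I, hI, hIa, hIa', hIxa⟩ := exists_mem_inducedCone_of_pow_eq_one hDh (one_pow _)
  obtain ⟨J, hJ, hJa, hJa', hJxa⟩ := exists_mem_inducedCone_of_pow_eq_one hDh hroot
  refine character_mem_inducedCone_of_residual τ hDh hvan (f := p • I + q • J)
    (add_mem (AddSubmonoid.nsmul_mem _ hI p) (AddSubmonoid.nsmul_mem _ hJ q)) ?_ ?_ ?_
  · intro i
    rw [Pi.add_apply, Pi.smul_apply, Pi.smul_apply, hIa, hJa, hp, hq, inv_neg, inv_one, one_pow]
    push_cast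
    ring
  · intro i hi
    simp [hIa' i hi, hJa' i hi]
  · intro i
    simp [hIxa, hJxa, hxa]

theorem exists_nat_of_add_eq_add {A B C E : ℕ} (hABCE : A + B = C + E) :
    ∃ n₁ n₂ n₃ n₄ : ℕ, n₁ + n₂ + n₃ + n₄ = A + B ∧ n₁ + E = n₂ + A ∧ n₃ + C = n₄ + A := by
  rcases le_total A C with hAC | hCA
  · exact ⟨A, E, 0, C - A, by lia, by lia, by lia⟩
  · exact ⟨C, B, A - C, 0, by lia, by lia, by lia⟩

theorem exists_character_xa_eq (hDh : D * h = m) (hm : Even m)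
    (hvan : ∀ i : ℕ, ¬ D ∣ i → τ.character (a i) = 0)
    (heig : finrank ℂ (End.eigenspace (τ (a D)) 1) = finrank ℂ (End.eigenspace (τ (a D)) (-1))) :
    ∃ n₁ n₂ n₃ n₄ : ℕ, D * (n₁ + n₂ + n₃ + n₄) = finrank ℂ (End.eigenspace (τ (a D)) 1) ∧
      τ.character (xa 0) = 2 * (n₁ - n₂) ∧ τ.character (xa 1) = 2 * (n₃ - n₄) := by
  have hD : D ≠ 0 := by rintro rfl; exact NeZero.ne m (by simpa using hDh.symm)
  set c := finrank ℂ (End.eigenspace (τ (a 1)) 1) with hc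
  have hc1 : finrank ℂ (End.eigenspace (τ (a D)) 1) = D * c := by
    rw [hc, ← finrank_eigenspace_a_pow τ hDh hvan (one_pow _), one_pow]
  have hc2 : finrank ℂ (End.eigenspace (τ (a 1)) (-1)) = c := by
    have h := finrank_eigenspace_a_pow τ hDh hvan (even_two_mul m).neg_one_pow
    refine Nat.eq_of_mul_eq_mul_left (Nat.pos_of_ne_zero hD) (h.symm.trans ?_)
    rcases neg_one_pow_eq_or ℂ D with hs | hs <;> rw [hs]
    · exact hc1
    · exact heig.symm.trans hc1
  have hone : (1 : ℂ) * 1 = 1 := one_mul 1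
  have hneg : (-1 : ℂ) * -1 = 1 := by norm_num
  obtain ⟨A, hA⟩ := exists_two_mul_finrank_add_character_xa τ hm hone hone
  obtain ⟨B, hB⟩ := exists_two_mul_finrank_add_character_xa τ hm hone hneg
  obtain ⟨C, hC⟩ := exists_two_mul_finrank_add_character_xa τ hm hneg hone
  obtain ⟨E, hE⟩ := exists_two_mul_finrank_add_character_xa τ hm hneg hneg
  rw [← hc] at hA hB
  rw [hc2] at hC hE
  have hAB : (A + B : ℂ) = c := by linear_combination -(hA + hB) / 4
  have hCE : (C + E : ℂ) = c := by linear_combination -(hC + hE) / 4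
  obtain ⟨n₁, n₂, n₃, n₄, hsum, hx0, hx1⟩ :=
    exists_nat_of_add_eq_add (show A + B = C + E by exact_mod_cast hAB.trans hCE.symm)
  refine ⟨n₁, n₂, n₃, n₄, ?_, ?_, ?_⟩
  · rw [hsum, hc1, show A + B = c by exact_mod_cast hAB]
  · have hx0' : (n₁ + E : ℂ) = n₂ + A := by exact_mod_cast hx0
    linear_combination (hA - hE) / 2 - 2 * hx0'
  · have hx1' : (n₃ + C : ℂ) = n₄ + A := by exact_mod_cast hx1
    linear_combination (hA - hC) / 2 - 2 * hx1'

theorem character_mem_inducedCone_of_finrank_eigenspace_eq (hDh : D * h = m) (hh : Even h)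
    (hvan : ∀ i : ℕ, ¬ D ∣ i → τ.character (a i) = 0)
    (heig : finrank ℂ (End.eigenspace (τ (a D)) 1) = finrank ℂ (End.eigenspace (τ (a D)) (-1))) :
    τ.character ∈ inducedCone (QuaternionGroup m) (2 * D) := by
  have hD : D ≠ 0 := by rintro rfl; exact NeZero.ne m (by simpa using hDh.symm)
  have hDm : 2 * D ∣ m := by
    rw [← hDh, mul_comm 2]
    exact mul_dvd_mul_left D hh.two_dvd
  obtain ⟨n₁, n₂, n₃, n₄, hsum, hx0, hx1⟩ :=
    exists_character_xa_eq τ hDh (hDh ▸ hh.mul_left D) hvan heig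
  obtain ⟨J₁, hJ₁, ha₁, hxa₁⟩ := exists_mem_inducedCone_of_sq_eq_one hDm 0 (one_pow 2)
  obtain ⟨J₂, hJ₂, ha₂, hxa₂⟩ := exists_mem_inducedCone_of_sq_eq_one hDm 0 (neg_one_sq (R := ℂ))
  obtain ⟨J₃, hJ₃, ha₃, hxa₃⟩ := exists_mem_inducedCone_of_sq_eq_one hDm 1 (one_pow 2)
  obtain ⟨J₄, hJ₄, ha₄, hxa₄⟩ := exists_mem_inducedCone_of_sq_eq_one hDm 1 (neg_one_sq (R := ℂ))
  have hmem : n₁ • J₁ + n₂ • J₂ + n₃ • J₃ + n₄ • J₄ ∈ inducedCone (QuaternionGroup m) (2 * D) :=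
    add_mem (add_mem (add_mem (AddSubmonoid.nsmul_mem _ hJ₁ n₁) (AddSubmonoid.nsmul_mem _ hJ₂ n₂))
      (AddSubmonoid.nsmul_mem _ hJ₃ n₃)) (AddSubmonoid.nsmul_mem _ hJ₄ n₄)
  refine character_mem_inducedCone_of_residual τ hDh hvan hmem ?_ ?_ ?_
  all_goals
    intro i
    simp only [Pi.add_apply, Pi.smul_apply, ha₁, ha₂, ha₃, ha₄, hxa₁, hxa₂, hxa₃, hxa₄]
    simp only [nsmul_eq_mul]
  · have hdvd : 2 * D ∣ D * i ↔ Even i := by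
      rw [mul_comm 2, Nat.mul_dvd_mul_iff_left (Nat.pos_of_ne_zero hD), even_iff_two_dvd]
    rw [← heig, ← hsum]
    simp only [hdvd]
    rcases Nat.even_or_odd i with hi | hi
    · simp only [if_pos hi, hi.neg_one_pow]
      push_cast
      ring
    · simp only [if_neg (Nat.not_even_iff_odd.mpr hi), hi.neg_one_pow]
      ring
  · intro hi
    have hi' : ¬ 2 * D ∣ i := fun h ↦ hi (dvd_of_mul_left_dvd h)
    simp only [if_neg hi', mul_zero, add_zero]
  · rw [character_xa_natCast, hx0, hx1]
    rcases Nat.even_or_odd i with hi | hi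
    · simp only [add_zero, Nat.even_add_one, hi, not_true_eq_false, if_true, if_false]
      ring
    · simp only [add_zero, Nat.even_add_one, Nat.not_even_iff_odd.mpr hi, not_false_eq_true,
        if_true, if_false]
      ring

end

/-! ### Isotypic projections -/

section IsotypicProjection

variable {K : Type} [Group K]

/-- The set `Irr(K)` of irreducible complex characters of `K`. -/
abbrev IrreducibleCharacters (K : Type) [Group K] : Type :=
  {φ : K → ℂ // IsIrreducibleCharacter φ}

section Finite

variable [Finite K]

theorem isIrreducibleCharacter_conj {φ : K → ℂ} (hφ : IsIrreducibleCharacter φ) (k l : K) :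
    φ (l * k * l⁻¹) = φ k := by
  obtain ⟨V, _, _, _, ρ, -, rfl⟩ := exists_isIrreducible_of_isIrreducibleCharacter hφ
  exact ρ.char_conj k l

theorem isIntegral_of_isIrreducibleCharacter {φ : K → ℂ} (hφ : IsIrreducibleCharacter φ) (k : K) :
    IsIntegral ℤ (φ k) := by
  obtain ⟨V, _, _, _, ρ, -, rfl⟩ := exists_isIrreducible_of_isIrreducibleCharacter hφ
  exact isIntegral_character ρ k

theorem isIrreducibleCharacter_inv {φ : K → ℂ} (hφ : IsIrreducibleCharacter φ) (k : K) :
    φ k⁻¹ = star (φ k) := by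
  obtain ⟨V, _, _, _, ρ, -, rfl⟩ := exists_isIrreducible_of_isIrreducibleCharacter hφ
  exact character_inv ρ k

theorem isIrreducibleCharacter_one_ne_zero {φ : K → ℂ} (hφ : IsIrreducibleCharacter φ) :
    φ 1 ≠ 0 := by
  obtain ⟨V, _, _, _, ρ, hρ, rfl⟩ := exists_isIrreducible_of_isIrreducibleCharacter hφ
  rw [char_one]
  exact_mod_cast finrank_ne_zero_of_isIrreducible hρ

theorem exists_odd_eq_isIrreducibleCharacter_one (hK : Odd (Nat.card K)) {φ : K → ℂ}
    (hφ : IsIrreducibleCharacter φ) : ∃ d : ℕ, Odd d ∧ φ 1 = d := by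
  obtain ⟨V, _, _, _, ρ, hρ, rfl⟩ := exists_isIrreducible_of_isIrreducibleCharacter hφ
  refine ⟨finrank ℂ V, ?_, ρ.char_one⟩
  by_contra heven
  obtain ⟨d, hd⟩ := even_iff_two_dvd.mp (Nat.not_odd_iff_even.mp heven)
  have hd0 : (d : ℂ) ≠ 0 := fun h ↦
    finrank_ne_zero_of_isIrreducible hρ (by rw [hd, Nat.cast_eq_zero.mp h, mul_zero])
  have hdiv : (Nat.card K : ℂ) / (2 : ℕ) ^ 1 ∈ pIntegers 2 := by
    convert mul_mem (card_div_finrank_mem_pIntegers (p := 2) hρ)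
      (mem_pIntegers_of_isIntegral (isIntegral_natCast d)) using 1
    rw [hd]
    push_cast
    field_simp
  have htwo : 2 ^ 1 ∣ Nat.card K := pow_dvd_of_natCast_div_mem_pIntegers two_ne_zero hdiv
  exact Nat.not_even_iff_odd.mpr hK (even_iff_two_dvd.mpr htwo)

theorem linearIndependent_irreducibleCharacters :
    LinearIndependent ℂ (Subtype.val : IrreducibleCharacters K → K → ℂ) := by
  have := Fintype.ofFinite K
  rw [linearIndependent_iff']
  intro s c hc φ hφ
  have hpair : ∑ g, (∑ ψ ∈ s, c ψ • ψ.1) g * φ.1 g⁻¹ = c φ * Nat.card K := by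
    simp only [Finset.sum_apply, Pi.smul_apply, smul_eq_mul, Finset.sum_mul, mul_assoc]
    rw [Finset.sum_comm]
    simp only [← Finset.mul_sum, sum_mul_inv_of_isIrreducibleCharacter (Subtype.prop _) φ.2,
      Subtype.val_inj]
    rw [Finset.sum_eq_single φ (fun ψ _ hne ↦ by rw [if_neg hne, mul_zero])
      (fun h ↦ absurd hφ h), if_pos rfl]
  rw [hc] at hpair
  have hcard : (Nat.card K : ℂ) ≠ 0 := by exact_mod_cast Nat.card_pos.ne'
  exact (mul_eq_zero.mp (hpair.symm.trans (by simp))).resolve_right hcard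

noncomputable instance fintypeIrreducibleCharacters : Fintype (IrreducibleCharacters K) :=
  have := linearIndependent_irreducibleCharacters.finite (R := ℂ) (M := K → ℂ)
  Fintype.ofFinite _

theorem character_ofMulAction_self (k : K) :
    (ofMulAction ℂ K K).character k = if k = 1 then (Nat.card K : ℂ) else 0 := by
  have := Fintype.ofFinite K
  rw [Representation.character, LinearMap.trace_eq_matrix_trace ℂ (MonoidAlgebra.basis K ℂ),
    Matrix.trace]
  have hdiag (x : K) : (LinearMap.toMatrix (MonoidAlgebra.basis K ℂ) (MonoidAlgebra.basis K ℂ)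
      (ofMulAction ℂ K K k)).diag x = if k = 1 then 1 else 0 := by
    rw [Matrix.diag_apply, LinearMap.toMatrix_apply, MonoidAlgebra.basis_apply, ofMulAction_single]
    simp [MonoidAlgebra.basis, Finsupp.single_apply]
  rw [Finset.sum_congr rfl fun x _ ↦ hdiag x]
  simp

end Finite

theorem eq_sum_irreducibleCharacters [Fintype K] {f : K → ℂ}
    (hf : f ∈ AddSubmonoid.closure {φ : K → ℂ | IsIrreducibleCharacter φ}) :
    f = ∑ φ : IrreducibleCharacters K, ((Nat.card K : ℂ)⁻¹ * ∑ g, f g * φ.1 g⁻¹) • φ.1 := by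
  have hcard : (Nat.card K : ℂ) ≠ 0 := by exact_mod_cast Nat.card_pos.ne'
  induction hf using AddSubmonoid.closure_induction with
  | mem φ hφ =>
    simp only [sum_mul_inv_of_isIrreducibleCharacter hφ (Subtype.prop _)]
    rw [Finset.sum_eq_single ⟨φ, hφ⟩
      (fun ψ _ hne ↦ by rw [if_neg fun h ↦ hne (Subtype.ext h.symm), mul_zero, zero_smul])
      (fun h ↦ absurd (Finset.mem_univ _) h), if_pos rfl, inv_mul_cancel₀ hcard, one_smul]
  | zero => simp
  | add f₁ f₂ _ _ h₁ h₂ =>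
    simp only [Pi.add_apply, add_mul, Finset.sum_add_distrib, mul_add, add_smul, ← h₁, ← h₂]

theorem sum_irreducibleCharacters_one_mul [Finite K] (k : K) :
    ∑ φ : IrreducibleCharacters K, φ.1 1 * φ.1 k = if k = 1 then (Nat.card K : ℂ) else 0 := by
  have := Fintype.ofFinite K
  have h := congrFun (eq_sum_irreducibleCharacters
    (character_mem_closure_isIrreducibleCharacter (ofMulAction ℂ K K))) k
  rw [character_ofMulAction_self, Finset.sum_apply] at h
  rw [h]
  refine Finset.sum_congr rfl fun φ _ ↦ ?_
  simp [character_ofMulAction_self]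

variable [Fintype K]

theorem sum_inv_mul_mul (φ ψ : IrreducibleCharacters K) (g : K) :
    ∑ h, φ.1 h⁻¹ * ψ.1 (h * g) = if φ = ψ then (Nat.card K : ℂ) / ψ.1 1 * ψ.1 g else 0 := by
  have horth : ∑ h, φ.1 h⁻¹ * ψ.1 h = if φ = ψ then (Nat.card K : ℂ) else 0 := by
    simp only [mul_comm (φ.1 _), sum_mul_inv_of_isIrreducibleCharacter ψ.2 φ.2, Subtype.val_inj,
      eq_comm (a := ψ)]
  obtain ⟨ψ, hψ⟩ := ψ
  obtain ⟨V, _, _, _, ρ, hρ, rfl⟩ := exists_isIrreducible_of_isIrreducibleCharacter hψ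
  obtain ⟨c, hc, hcdim⟩ := exists_sum_smul_eq_smul_one hρ (B := fun h ↦ φ.1 h⁻¹) fun g h ↦ by
    simpa [mul_assoc] using isIrreducibleCharacter_conj φ.2 g⁻¹ h
  have hdim : ρ.character 1 ≠ 0 := isIrreducibleCharacter_one_ne_zero hψ
  rw [← ρ.char_one, horth] at hcdim
  have htrace : ∑ h, φ.1 h⁻¹ * ρ.character (h * g) = c * ρ.character g := by
    have h := congrArg (fun T ↦ LinearMap.trace ℂ V (T * ρ g)) hc
    simp only [Finset.sum_mul, map_sum, smul_mul_assoc, map_smul, ← map_mul, one_mul,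
      smul_eq_mul] at h
    exact h
  rw [htrace, eq_div_of_mul_eq hdim hcdim]
  split_ifs <;> simp

/-- The coefficient at `k` of the central idempotent of `ℂ[K]` attached to the set `O` of
irreducible characters. -/
noncomputable def isotypicCoeff (O : Finset (IrreducibleCharacters K)) (k : K) : ℂ :=
  (Nat.card K : ℂ)⁻¹ * ∑ φ ∈ O, φ.1 1 * φ.1 k⁻¹

variable {V : Type*} [AddCommGroup V] [Module ℂ V]

/-- The projection of `τ` onto the sum of its isotypic components of types in `O`. -/
noncomputable def isotypicProjection (τ : Representation ℂ K V)
    (O : Finset (IrreducibleCharacters K)) : V →ₗ[ℂ] V :=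
  ∑ k, isotypicCoeff O k • τ k

theorem sum_isotypicCoeff_mul (O O' : Finset (IrreducibleCharacters K)) (g : K) :
    ∑ k, isotypicCoeff O k * isotypicCoeff O' (k⁻¹ * g) = isotypicCoeff (O ∩ O') g := by
  have hcard : (Nat.card K : ℂ) ≠ 0 := by exact_mod_cast Nat.card_pos.ne'
  have hpair (φ ψ : IrreducibleCharacters K) :
      ∑ k, φ.1 1 * φ.1 k⁻¹ * (ψ.1 1 * ψ.1 (k⁻¹ * g)⁻¹) =
        if φ = ψ then Nat.card K * (ψ.1 1 * ψ.1 g⁻¹) else 0 := by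
    have hcyc (k : K) : ψ.1 (k⁻¹ * g)⁻¹ = ψ.1 (k * g⁻¹) := by
      rw [← isIrreducibleCharacter_conj ψ.2 (k⁻¹ * g)⁻¹ g]
      group
    simp only [hcyc, mul_mul_mul_comm _ _ (ψ.1 1), ← Finset.mul_sum, sum_inv_mul_mul]
    have hdim := isIrreducibleCharacter_one_ne_zero ψ.2
    split_ifs with h
    · subst h; field_simp
    · rw [mul_zero]
  calc ∑ k, isotypicCoeff O k * isotypicCoeff O' (k⁻¹ * g)
      = (Nat.card K : ℂ)⁻¹ ^ 2 * ∑ φ ∈ O, ∑ ψ ∈ O',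
          ∑ k, φ.1 1 * φ.1 k⁻¹ * (ψ.1 1 * ψ.1 (k⁻¹ * g)⁻¹) := by
        simp only [isotypicCoeff, mul_mul_mul_comm (Nat.card K : ℂ)⁻¹, ← Finset.mul_sum,
          Finset.sum_mul, sq]
        rw [Finset.sum_comm]
        simp only [Finset.mul_sum, Finset.sum_comm (s := Finset.univ) (t := O')]
    _ = isotypicCoeff (O ∩ O') g := by
        simp only [hpair, Finset.sum_ite_eq, ← Finset.sum_filter, Finset.filter_mem_eq_inter,
          ← Finset.mul_sum, isotypicCoeff]
        field_simp

variable (τ : Representation ℂ K V)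

theorem isotypicProjection_mul (O O' : Finset (IrreducibleCharacters K)) :
    isotypicProjection τ O * isotypicProjection τ O' = isotypicProjection τ (O ∩ O') := by
  simp only [isotypicProjection, ← sum_isotypicCoeff_mul O O', Finset.sum_smul, Finset.sum_mul]
  rw [Finset.sum_comm]
  refine Finset.sum_congr rfl fun k _ ↦ ?_
  rw [Finset.mul_sum]
  refine Fintype.sum_equiv (Equiv.mulLeft k) _ _ fun l ↦ ?_
  rw [Equiv.coe_mulLeft, inv_mul_cancel_left, smul_mul_smul_comm, ← map_mul]

theorem isIdempotentElem_isotypicProjection (O : Finset (IrreducibleCharacters K)) :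
    IsIdempotentElem (isotypicProjection τ O) := by
  rw [IsIdempotentElem, isotypicProjection_mul, Finset.inter_self]

theorem isotypicProjection_univ : isotypicProjection τ Finset.univ = 1 := by
  have hcard : (Nat.card K : ℂ) ≠ 0 := by exact_mod_cast Nat.card_pos.ne'
  have hcoeff (k : K) : isotypicCoeff Finset.univ k = if k = 1 then 1 else 0 := by
    simp only [isotypicCoeff, sum_irreducibleCharacters_one_mul, inv_eq_one, mul_ite, mul_zero,
      inv_mul_cancel₀ hcard]
  simp [isotypicProjection, hcoeff]

theorem sum_isotypicProjection {ι : Type*} [Fintype ι] [DecidableEq ι]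
    (f : IrreducibleCharacters K → ι) (O : Finset (IrreducibleCharacters K)) :
    ∑ i, isotypicProjection τ {φ ∈ O | f φ = i} = isotypicProjection τ O := by
  simp only [isotypicProjection]
  rw [Finset.sum_comm]
  simp only [← Finset.sum_smul, isotypicCoeff, ← Finset.mul_sum, Finset.sum_fiberwise]

theorem isotypicProjection_eq_sum_singleton (O : Finset (IrreducibleCharacters K)) :
    isotypicProjection τ O = ∑ φ ∈ O, isotypicProjection τ {φ} := by
  simp only [isotypicProjection]
  rw [Finset.sum_comm]
  simp only [← Finset.sum_smul, isotypicCoeff, ← Finset.mul_sum, Finset.sum_singleton]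

theorem sum_norm_isotypicCoeff_sq {O : Finset (IrreducibleCharacters K)} {d : ℕ}
    (hd : ∀ φ ∈ O, φ.1 1 = d) :
    ∑ k, ‖isotypicCoeff O k‖ ^ 2 = O.card * d ^ 2 / Nat.card K := by
  have hcard : (Nat.card K : ℂ) ≠ 0 := by exact_mod_cast Nat.card_pos.ne'
  have hstar (k : K) : starRingEnd ℂ (isotypicCoeff O k) = isotypicCoeff O k⁻¹ := by
    simp only [isotypicCoeff, map_mul, map_inv₀, map_natCast, map_sum]
    congr 1
    refine Finset.sum_congr rfl fun φ hφ ↦ ?_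
    rw [isIrreducibleCharacter_inv φ.2 k⁻¹, hd φ hφ, map_natCast, Complex.star_def]
  have hone : isotypicCoeff O 1 = O.card * d ^ 2 / Nat.card K := by
    rw [isotypicCoeff, Finset.sum_congr rfl fun φ hφ ↦ by rw [inv_one, hd φ hφ], Finset.sum_const,
      nsmul_eq_mul]
    field_simp
  have hsum := sum_isotypicCoeff_mul O O 1
  simp only [mul_one, ← hstar, Complex.mul_conj', Finset.inter_self, hone] at hsum
  rw [← Complex.ofReal_inj]
  push_cast
  exact hsum

end IsotypicProjection

section ConjugationAction

open scoped Pointwise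

/-- Automorphisms of `K` act on `Irr(K)` by `σ • φ = φ ∘ σ⁻¹`. -/
instance mulActionIrreducibleCharacters {K : Type} [Group K] [Finite K] :
    MulAction (MulAut K) (IrreducibleCharacters K) where
  smul σ φ := ⟨φ.1 ∘ (σ⁻¹ : MulAut K),
    isIrreducibleCharacter_comp_of_surjective (φ := (σ⁻¹ : MulAut K).toMonoidHom)
      (σ⁻¹ : MulAut K).surjective φ.2⟩
  one_smul _ := rfl
  mul_smul _ _ _ := rfl

section Coefficients

variable {K : Type} [Group K] [Finite K]

theorem smul_irreducibleCharacters_apply (σ : MulAut K) (φ : IrreducibleCharacters K)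
    (k : K) : (σ • φ).1 (σ k) = φ.1 k :=
  congrArg φ.1 (σ.symm_apply_apply k)

theorem smul_irreducibleCharacters_one (σ : MulAut K) (φ : IrreducibleCharacters K) :
    (σ • φ).1 1 = φ.1 1 := by
  simpa using smul_irreducibleCharacters_apply σ φ 1

theorem isotypicCoeff_smul [DecidableEq (IrreducibleCharacters K)] (σ : MulAut K)
    (O : Finset (IrreducibleCharacters K)) (k : K) :
    isotypicCoeff (σ • O) (σ k) = isotypicCoeff O k := by
  have hinj : Set.InjOn (σ • · : IrreducibleCharacters K → _) O := (MulAction.injective σ).injOn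
  rw [isotypicCoeff, isotypicCoeff, ← Finset.image_smul, Finset.sum_image hinj, ← map_inv]
  simp only [smul_irreducibleCharacters_apply, smul_irreducibleCharacters_one]

theorem isotypicCoeff_mem_pIntegers {p : ℕ} (hp : p.Coprime (Nat.card K))
    (O : Finset (IrreducibleCharacters K)) (k : K) : isotypicCoeff O k ∈ pIntegers p :=
  mul_mem (natCast_inv_mem_pIntegers hp) (sum_mem fun φ _ ↦ mul_mem
    (mem_pIntegers_of_isIntegral (isIntegral_of_isIrreducibleCharacter φ.2 1))
    (mem_pIntegers_of_isIntegral (isIntegral_of_isIrreducibleCharacter φ.2 k⁻¹)))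

end Coefficients

variable {G : Type} [Group G] [Fintype G] {K : Subgroup G}

section Projection

variable {V : Type*} [AddCommGroup V] [Module ℂ V] (ρ : Representation ℂ G V) {g : G}
  {σ : MulAut K}

theorem mul_isotypicProjection (hσ : ∀ κ : K, (σ κ : G) = g * κ * g⁻¹)
    (O : Finset (IrreducibleCharacters K)) :
    ρ g * isotypicProjection (ρ.comp K.subtype) O =
      isotypicProjection (ρ.comp K.subtype) (σ • O) * ρ g := by
  rw [isotypicProjection, isotypicProjection, Finset.mul_sum, Finset.sum_mul]
  refine Fintype.sum_equiv σ.toEquiv _ _ fun κ ↦ ?_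
  rw [MulEquiv.toEquiv_eq_coe, MulEquiv.coe_toEquiv, isotypicCoeff_smul, mul_smul_comm,
    smul_mul_assoc]
  simp only [MonoidHom.comp_apply, Subgroup.subtype_apply, hσ, ← map_mul, inv_mul_cancel_right]

theorem commute_isotypicProjection (hσ : ∀ κ : K, (σ κ : G) = g * κ * g⁻¹)
    {O : Finset (IrreducibleCharacters K)} (hO : σ • O = O) :
    Commute (ρ g) (isotypicProjection (ρ.comp K.subtype) O) := by
  have h := mul_isotypicProjection ρ hσ O
  rwa [hO] at h

theorem trace_mul_isotypicProjection (g : G) (O : Finset (IrreducibleCharacters K)) :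
    LinearMap.trace ℂ V (ρ g * isotypicProjection (ρ.comp K.subtype) O) =
      ∑ κ : K, isotypicCoeff O κ * ρ.character (g * κ) := by
  rw [isotypicProjection, Finset.mul_sum, map_sum]
  refine Finset.sum_congr rfl fun κ _ ↦ ?_
  rw [mul_smul_comm, map_smul, smul_eq_mul, MonoidHom.comp_apply, ← map_mul]
  rfl

theorem trace_mul_isotypicProjection_eq_zero [FiniteDimensional ℂ V]
    (hσ : ∀ κ : K, (σ κ : G) = g * κ * g⁻¹)
    {O : Finset (IrreducibleCharacters K)} (hO : ∀ φ ∈ O, σ • φ ≠ φ) :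
    LinearMap.trace ℂ V (ρ g * isotypicProjection (ρ.comp K.subtype) O) = 0 := by
  rw [isotypicProjection_eq_sum_singleton, Finset.mul_sum, map_sum]
  refine Finset.sum_eq_zero fun φ hφ ↦ ?_
  have hdisj : ({φ} : Finset (IrreducibleCharacters K)) ∩ {σ • φ} = ∅ :=
    Finset.disjoint_iff_inter_eq_empty.mp (Finset.disjoint_singleton.mpr (hO φ hφ).symm)
  rw [← (isIdempotentElem_isotypicProjection _ {φ}).eq, ← mul_assoc, mul_isotypicProjection ρ hσ,
    Finset.smul_finset_singleton, mul_assoc, LinearMap.trace_mul_comm, mul_assoc,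
    isotypicProjection_mul, hdisj]
  simp [isotypicProjection, isotypicCoeff]

end Projection

variable {V : Type*} [AddCommGroup V] [Module ℂ V] [FiniteDimensional ℂ V]
  {ρ : Representation ℂ G V}

theorem trace_isotypicProjection_mul_index_div_mem_pIntegers (hρ : ρ.IsIrreducible) {p : ℕ}
    (hp : p.Coprime (Nat.card K)) (O : Finset (IrreducibleCharacters K)) (Q : Subgroup G)
    (hQ : ∀ g ∈ Q, ∃ σ : MulAut K, (∀ κ : K, (σ κ : G) = g * κ * g⁻¹) ∧ σ • O = O) :
    LinearMap.trace ℂ V (isotypicProjection (ρ.comp K.subtype) O) * Q.index / finrank ℂ V ∈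
      pIntegers p := by
  let b : G → ℂ := fun g ↦ if hg : g ∈ K then isotypicCoeff O ⟨g, hg⟩ else 0
  have hsum : ∑ g, b g * ρ.character g =
      LinearMap.trace ℂ V (isotypicProjection (ρ.comp K.subtype) O) := by
    have h := trace_mul_isotypicProjection ρ 1 O
    simp only [map_one, one_mul] at h
    have hb (κ : K) : isotypicCoeff O κ * ρ.character κ = b κ * ρ.character κ := by simp [b]
    rw [h, Finset.sum_congr rfl fun κ _ ↦ hb κ,
      ← Finset.sum_subtype (Finset.univ.filter (· ∈ K)) (by simp) (fun g ↦ b g * ρ.character g)]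
    exact (Finset.sum_subset (Finset.subset_univ _) fun g _ hg ↦ by simp_all [b]).symm
  rw [← hsum]
  refine sum_mul_character_mul_index_div_finrank_mem_pIntegers hρ Q (fun g ↦ ?_)
    fun g hg x ↦ ?_
  · simp only [b]
    split_ifs
    exacts [isotypicCoeff_mem_pIntegers hp O _, zero_mem _]
  obtain ⟨σ, hσ, hO⟩ := hQ g hg
  have hmem : g * x * g⁻¹ ∈ K ↔ x ∈ K := by
    refine ⟨fun h ↦ ?_, fun h ↦ hσ ⟨x, h⟩ ▸ (σ ⟨x, h⟩).2⟩
    have hx := hσ (σ⁻¹ ⟨_, h⟩)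
    rw [MulAut.apply_inv_self, mul_left_inj, mul_right_inj] at hx
    exact hx ▸ (σ⁻¹ ⟨_, h⟩).2
  simp only [b, hmem]
  split_ifs with hx
  · rw [← isotypicCoeff_smul σ O ⟨x, hx⟩, hO]
    exact congrArg (isotypicCoeff O) (Subtype.ext (hσ ⟨x, hx⟩).symm)
  · rfl

end ConjugationAction

/-! ### Orbits on the irreducible characters of a normalized subgroup -/

section NormalizedSubgroup

open scoped Pointwise
open QuaternionGroup

theorem orderOf_dvd_orderOf_mul {G : Type*} [Group G] {K : Subgroup G} {g κ : G}
    (hg : g ∈ Subgroup.normalizer (K : Set G)) (hκ : κ ∈ K)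
    (hcop : (orderOf g).Coprime (Nat.card K)) : orderOf g ∣ orderOf (g * κ) := by
  let N := Subgroup.normalizer (K : Set G)
  let π := QuotientGroup.mk' (K.subgroupOf N)
  let n : N := ⟨κ, Subgroup.le_normalizer hκ⟩
  have hπ : π (⟨g, hg⟩ * n) = π ⟨g, hg⟩ := QuotientGroup.mk_mul_of_mem ⟨g, hg⟩ (b := n) hκ
  have hpow : π (⟨g, hg⟩ ^ orderOf (g * κ)) = 1 := by
    rw [map_pow, ← hπ, ← map_pow]
    exact (congrArg π (Subtype.ext (pow_orderOf_eq_one (g * κ)))).trans (map_one π)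
  have hmem : g ^ orderOf (g * κ) ∈ K := (QuotientGroup.eq_one_iff (N := K.subgroupOf N) _).mp hpow
  have hcard : orderOf (g ^ orderOf (g * κ)) ∣ Nat.card K :=
    Subgroup.orderOf_mk _ hmem ▸ orderOf_dvd_natCard _
  exact orderOf_dvd_of_pow_eq_one (orderOf_eq_one_iff.mp
    (Nat.eq_one_of_dvd_coprimes hcop (orderOf_pow_dvd _) hcard))

theorem two_pow_dvd_orderOf_a {k b j i : ℕ} (hbj : b + j = k) (hi : ¬ 2 ^ b ∣ i) :
    2 ^ (j + 2) ∣ orderOf (a i : QuaternionGroup (2 ^ k)) := by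
  obtain ⟨s, t, ht, rfl⟩ := Nat.exists_eq_two_pow_mul_odd (n := i) (by rintro rfl; simp at hi)
  have hs : s < b := not_le.mp fun h ↦ hi (dvd_mul_of_dvd_left (pow_dvd_pow 2 h) t)
  have hdvd : 2 ^ s * 2 ^ (k + 1 - s) ∣
      2 ^ s * (t * orderOf (a (2 ^ s * t : ℕ) : QuaternionGroup (2 ^ k))) := by
    have h := pow_orderOf_eq_one (a (2 ^ s * t : ℕ) : QuaternionGroup (2 ^ k))
    rw [a_natCast, ← pow_mul, ← orderOf_dvd_iff_pow_eq_one, orderOf_a_one, ← a_natCast] at h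
    rwa [← pow_add, Nat.add_sub_cancel' (by lia), pow_succ', ← mul_assoc]
  have hcop : (2 ^ (k + 1 - s)).Coprime t := (Nat.coprime_two_left.mpr ht).pow_left _
  exact (pow_dvd_pow 2 (by lia)).trans
    (hcop.dvd_of_dvd_mul_left (Nat.dvd_of_mul_dvd_mul_left (by positivity) hdvd))

theorem mem_normalizer_of_mem_iff {G : Type*} [Group G] {K : Subgroup G} {v w : G}
    (hmem : ∀ g, g ∈ K ↔ Commute g v ∧ Odd (orderOf g))
    (hw : w * v * w⁻¹ = v ∨ w * v * w⁻¹ = v⁻¹) : w ∈ Subgroup.normalizer (K : Set G) := by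
  refine Subgroup.mem_normalizer_iff.mpr fun g ↦ ?_
  have horder : orderOf (w * g * w⁻¹) = orderOf g := (MulAut.conj w).orderOf_eq g
  have hcomm : Commute (w * g * w⁻¹) v ↔ Commute g v := by
    rw [← Commute.conj_iff (a := g) w]
    rcases hw with hw | hw <;> simp only [hw, Commute.inv_right_iff]
  rw [hmem, hmem, horder, hcomm]

theorem card_le_of_xa_smul_eq {M X : Type*} [Group M] [MulAction M X] {m D : ℕ} [NeZero m]
    (hD : D ≠ 0) (α : QuaternionGroup m →* M) {x : X} (ha : α (a D) • x = x) {i : ZMod (2 * m)}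
    (hxa : α (xa i) • x = x) {O : Finset X} (hO : ∀ y ∈ O, ∃ p, α p • x = y) : O.card ≤ D := by
  have hsub : O ⊆ (Finset.range D).image fun t : ℕ ↦ α (a t) • x := fun y hy ↦ by
    obtain ⟨l, rfl⟩ : ∃ l : ZMod (2 * m), α (a l) • x = y := by
      obtain ⟨l | l, rfl⟩ := hO y hy
      · exact ⟨l, rfl⟩
      · refine ⟨i - l, ?_⟩
        nth_rewrite 1 [← hxa]
        rw [smul_smul, ← map_mul, a_mul_xa, sub_sub_cancel]
    refine Finset.mem_image.mpr
      ⟨l.val % D, Finset.mem_range.mpr (Nat.mod_lt _ (Nat.pos_of_ne_zero hD)), ?_⟩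
    have hl : (a l : QuaternionGroup m) = a (l.val % D : ℕ) * a D ^ (l.val / D) := by
      rw [← a_natCast_mul, a_natCast, a_natCast (D * _), ← pow_add, Nat.mod_add_div, ← a_natCast,
        ZMod.natCast_zmod_val]
    have hfix : α (a D) ^ (l.val / D) • x = x :=
      pow_mem (S := MulAction.stabilizer M x) ha _
    rw [hl, map_mul, map_pow, mul_smul, hfix]
  exact (Finset.card_le_card hsub).trans (Finset.card_image_le.trans (Finset.card_range D).le)

variable {G Q : Type} [Group G] [Group Q] {K : Subgroup G}

/-- The action on `K` by conjugation, for a group mapping to the normalizer of `K`. -/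
noncomputable def conjHom (π : Q →* G) (hπ : ∀ p, π p ∈ Subgroup.normalizer (K : Set G)) :
    Q →* MulAut K :=
  K.normalizerMonoidHom.comp (π.codRestrict _ hπ)

theorem conjHom_apply (π : Q →* G) (hπ : ∀ p, π p ∈ Subgroup.normalizer (K : Set G)) (p : Q)
    (κ : K) : (conjHom π hπ p κ : G) = π p * κ * (π p)⁻¹ := rfl

theorem conjHom_eq_one {π : Q →* G} {hπ : ∀ p, π p ∈ Subgroup.normalizer (K : Set G)} {p : Q}
    (hK : K ≤ .centralizer {π p}) : conjHom π hπ p = 1 := by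
  ext κ
  rw [conjHom_apply, ← Subgroup.mem_centralizer_singleton_iff.mp (hK κ.2), mul_inv_cancel_right]
  rfl

variable [Fintype G] {V : Type} [AddCommGroup V] [Module ℂ V] (ρ : Representation ℂ G V)
  (π : Q →* G) (hπ : ∀ p, π p ∈ Subgroup.normalizer (K : Set G))
  {O : Finset (IrreducibleCharacters K)} (hO : ∀ p, conjHom π hπ p • O = O)

/-- The representation of `Q` on the sum of the `K`-isotypic components of `ρ` of types in the
`Q`-stable set `O`. -/
noncomputable def isotypicRepresentation :
    Representation ℂ Q (LinearMap.range (isotypicProjection (ρ.comp K.subtype) O)) :=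
  (rangeSubrepresentation (ρ.comp π) (isotypicProjection (ρ.comp K.subtype) O) fun p ↦
    commute_isotypicProjection ρ (conjHom_apply π hπ p) (hO p)).toRepresentation

variable [FiniteDimensional ℂ V]

theorem character_isotypicRepresentation (p : Q) :
    (isotypicRepresentation ρ π hπ hO).character p =
      LinearMap.trace ℂ V (ρ (π p) * isotypicProjection (ρ.comp K.subtype) O) :=
  character_rangeSubrepresentation _ _ (isIdempotentElem_isotypicProjection _ O) p

theorem pow_dvd_finrank_range_isotypicProjection {ρ : Representation ℂ G V}
    (hρ : ρ.IsIrreducible) {π : Q →* G} {hπ : ∀ p, π p ∈ Subgroup.normalizer (K : Set G)}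
    {O : Finset (IrreducibleCharacters K)} (hO : ∀ p, conjHom π hπ p • O = O) {q c : ℕ}
    (hq : q ≠ 0) (hK : q.Coprime (Nat.card K)) (hindex : q.Coprime π.range.index)
    (hdim : q ^ c ∣ finrank ℂ V) :
    q ^ c ∣ finrank ℂ (LinearMap.range (isotypicProjection (ρ.comp K.subtype) O)) := by
  have hmem := trace_isotypicProjection_mul_index_div_mem_pIntegers hρ hK O π.range (by
    rintro _ ⟨p, rfl⟩
    exact ⟨_, conjHom_apply π hπ p, hO p⟩)
  have htrace := (isotypicRepresentation ρ π hπ hO).char_one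
  rw [character_isotypicRepresentation, map_one, map_one, one_mul] at htrace
  rw [htrace] at hmem
  have hindex0 : (π.range.index : ℂ) ≠ 0 := by exact_mod_cast π.range.index_ne_zero_of_finite
  have hdim0 := finrank_ne_zero_of_isIrreducible hρ
  obtain ⟨d, hd⟩ := hdim
  have hd0 : (d : ℂ) ≠ 0 := fun h ↦ hdim0 (by rw [hd, Nat.cast_eq_zero.mp h, mul_zero])
  refine pow_dvd_of_natCast_div_mem_pIntegers hq ?_
  convert mul_mem (mul_mem hmem (natCast_inv_mem_pIntegers hindex))
    (mem_pIntegers_of_isIntegral (isIntegral_natCast d)) using 1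
  rw [hd]
  push_cast
  field_simp

end NormalizedSubgroup

section IsotypicSums

variable {G V : Type} [Group G] [Fintype G] [AddCommGroup V] [Module ℂ V]
  {K : Subgroup G} {v : G} {O : Finset (IrreducibleCharacters K)} {d : ℕ}

theorem norm_sum_trace_sq_le (ρ : Representation ℂ G V) (hd : ∀ φ ∈ O, φ.1 1 = d)
    (S : Finset ℕ) :
    ‖∑ i ∈ S, LinearMap.trace ℂ V (ρ (v ^ i) * isotypicProjection (ρ.comp K.subtype) O)‖ ^ 2 ≤
      S.card * O.card * d ^ 2 *
        ∑ i ∈ S, (Nat.card K : ℝ)⁻¹ * ∑ κ : K, ‖ρ.character (v ^ i * κ)‖ ^ 2 := by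
  have htriangle :
      ‖∑ i ∈ S, LinearMap.trace ℂ V (ρ (v ^ i) * isotypicProjection (ρ.comp K.subtype) O)‖ ≤
        ∑ x ∈ S ×ˢ (Finset.univ : Finset K),
          ‖isotypicCoeff O x.2‖ * ‖ρ.character (v ^ x.1 * x.2)‖ := by
    rw [Finset.sum_product]
    refine (norm_sum_le _ _).trans (Finset.sum_le_sum fun i _ ↦ ?_)
    rw [trace_mul_isotypicProjection]
    exact (norm_sum_le _ _).trans_eq (Finset.sum_congr rfl fun κ _ ↦ norm_mul _ _)
  calc _ ≤ (∑ x ∈ S ×ˢ (Finset.univ : Finset K),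
          ‖isotypicCoeff O x.2‖ * ‖ρ.character (v ^ x.1 * x.2)‖) ^ 2 := by gcongr
    _ ≤ _ := Finset.sum_mul_sq_le_sq_mul_sq _ _ _
    _ = _ := by
      rw [Finset.sum_product, Finset.sum_product]
      simp only [sum_norm_isotypicCoeff_sq hd, Finset.sum_const, nsmul_eq_mul, ← Finset.mul_sum]
      ring

variable [FiniteDimensional ℂ V]

theorem exists_character_eq_inv_card_mul_sum_mul {φ : K → ℂ} (hφ : IsIrreducibleCharacter φ)
    (ρ : Representation ℂ G V) :
    ∃ (W : Type) (_ : AddCommGroup W) (_ : Module ℂ W) (_ : FiniteDimensional ℂ W)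
      (σ : Representation ℂ (Subgroup.centralizer (K : Set G)) W), ∀ c,
        σ.character c = (Nat.card K : ℂ)⁻¹ * ∑ κ : K, φ κ⁻¹ * ρ.character (c * κ) := by
  obtain ⟨U, _, _, _, σ, -, rfl⟩ := exists_isIrreducible_of_isIrreducibleCharacter hφ
  obtain ⟨p, hp⟩ := exists_character_eq_inv_card_mul_sum
    (linHom (σ.comp (MonoidHom.fst K (Subgroup.centralizer (K : Set G))))
      (ρ.comp (mulCentralizerHom K)))
  refine ⟨p.toSubmodule, _, _, inferInstance, p.toRepresentation, fun c ↦ ?_⟩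
  rw [hp]
  congr! 2 with κ
  rw [char_linHom, ← Subgroup.mem_centralizer_iff.mp c.2 κ κ.2]
  rfl

theorem exists_sum_odd_trace_eq_mul (ρ : Representation ℂ G V) {h : ℕ} (hh : h ≠ 0)
    (hv : v ^ (2 * h) = 1) (hK : K ≤ .centralizer {v}) (hd : ∀ φ ∈ O, φ.1 1 = d) :
    ∃ z : ℤ, ∑ i ∈ Finset.range (2 * h) with Odd i,
      LinearMap.trace ℂ V (ρ (v ^ i) * isotypicProjection (ρ.comp K.subtype) O) = h * (d * z) := by
  have hvK : v ∈ Subgroup.centralizer (K : Set G) := Subgroup.mem_centralizer_iff.mpr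
    fun κ hκ ↦ Subgroup.mem_centralizer_singleton_iff.mp (hK hκ)
  have hsingle (φ : IrreducibleCharacters K) (hφ : φ ∈ O) :
      ∃ z : ℤ, ∑ i ∈ Finset.range (2 * h) with Odd i,
        LinearMap.trace ℂ V (ρ (v ^ i) * isotypicProjection (ρ.comp K.subtype) {φ}) =
          h * (d * z) := by
    obtain ⟨W, _, _, _, σ, hσ⟩ := exists_character_eq_inv_card_mul_sum_mul φ.2 ρ
    have hodd := sum_odd_character_pow σ (g := ⟨v, hvK⟩) hh (Subtype.ext hv)
    refine ⟨finrank ℂ (End.eigenspace (σ ⟨v, hvK⟩) 1) -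
      finrank ℂ (End.eigenspace (σ ⟨v, hvK⟩) (-1)), ?_⟩
    push_cast
    rw [mul_left_comm, ← hodd, Finset.mul_sum]
    refine Finset.sum_congr rfl fun i _ ↦ ?_
    rw [trace_mul_isotypicProjection, hσ, Finset.mul_sum, Finset.mul_sum]
    refine Finset.sum_congr rfl fun κ _ ↦ ?_
    rw [isotypicCoeff, Finset.sum_singleton, hd φ hφ, SubmonoidClass.mk_pow]
    ring
  choose! z hz using hsingle
  refine ⟨∑ φ ∈ O, z φ, ?_⟩
  simp only [isotypicProjection_eq_sum_singleton _ O, Finset.mul_sum, map_sum]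
  rw [Finset.sum_comm, Finset.sum_congr rfl hz]
  push_cast
  simp only [Finset.mul_sum]

theorem norm_sum_odd_trace_sq_lt {ρ : Representation ℂ G V} (hρ : ρ.IsIrreducible)
    {P : Sylow 2 G} {k j q : ℕ} (e : P ≃* QuaternionGroup (2 ^ k))
    (hv : orderOf v = 2 ^ (j + 1)) (hK : K ≤ .centralizer {v}) (hKodd : Odd (Nat.card K))
    (hcard : Nat.card (Subgroup.centralizer {v}) = Nat.card K * 2 ^ q) (hO : O.Nonempty)
    (hd0 : d ≠ 0) (hd : ∀ φ ∈ O, φ.1 1 = d) :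
    ‖∑ i ∈ Finset.range (2 * 2 ^ j) with Odd i,
        LinearMap.trace ℂ V (ρ (v ^ i) * isotypicProjection (ρ.comp K.subtype) O)‖ ^ 2 <
      2 ^ j * O.card * d ^ 2 * 2 ^ (q + 1) := by
  have hfilter : (Finset.range (2 * 2 ^ j)).filter Odd =
      {i ∈ Finset.range (2 ^ (j + 1)) | (2 ^ (j + 1)).Coprime i} := by
    rw [← pow_succ']
    simp only [Nat.coprime_pow_left_iff j.succ_pos, Nat.coprime_two_left]
  have htotient : {i ∈ Finset.range (2 ^ (j + 1)) | (2 ^ (j + 1)).Coprime i}.card = 2 ^ j := by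
    rw [← Nat.totient_eq_card_coprime, Nat.totient_prime_pow_succ Nat.prime_two]
    simp
  have hpos : (0 : ℝ) < 2 ^ j * O.card * d ^ 2 := by
    have := hO.card_pos
    have := Nat.pos_of_ne_zero hd0
    positivity
  rw [hfilter]
  refine (norm_sum_trace_sq_le ρ hd _).trans_lt ?_
  rw [htotient]
  push_cast
  exact mul_lt_mul_of_pos_left
    (sum_average_norm_character_sq_lt hρ e j.succ_ne_zero hv hK hKodd hcard) hpos

end IsotypicSums

theorem eq_of_two_pow_mul_sub_eq_mul {b d m n : ℕ} {z : ℤ} (hd : Odd d) (hmn : Even (m + n))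
    (hz : 2 ^ b * (m - n : ℤ) = d * z) (hlt : (m - n : ℤ) ^ 2 < (2 * d) ^ 2) : m = n := by
  have hodd : (d : ℤ) ∣ m - n := by
    have hcop : IsCoprime (d : ℤ) (2 ^ b) :=
      (Nat.isCoprime_iff_coprime.mpr (Nat.coprime_two_right.mpr hd)).pow_right
    exact hcop.dvd_of_dvd_mul_left ⟨z, hz⟩
  have heven : (2 : ℤ) ∣ m - n := by
    obtain ⟨x, hx⟩ := hmn
    lia
  have hdvd : (2 * d : ℤ) ∣ m - n :=
    (Nat.isCoprime_iff_coprime.mpr (Nat.coprime_two_left.mpr hd)).mul_dvd heven hodd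
  have hzero := Int.eq_zero_of_abs_lt_dvd hdvd (by
    rwa [sq_lt_sq, abs_of_nonneg (by positivity : (0 : ℤ) ≤ 2 * d)] at hlt)
  lia

section QuaternionSylow

open scoped Pointwise
open QuaternionGroup

/-- The embedding of `Q` in `G` given by an isomorphism of `Q` with a Sylow subgroup of `G`. -/
def sylowHom {G Q : Type*} [Group G] [Group Q] {p : ℕ} {P : Sylow p G} (e : P ≃* Q) : Q →* G :=
  (P : Subgroup G).subtype.comp e.symm.toMonoidHom

theorem sylowHom_injective {G Q : Type*} [Group G] [Group Q] {p : ℕ} {P : Sylow p G}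
    (e : P ≃* Q) : Function.Injective (sylowHom e) :=
  (P : Subgroup G).subtype_injective.comp e.symm.injective

theorem range_sylowHom {G Q : Type*} [Group G] [Group Q] {p : ℕ} {P : Sylow p G} (e : P ≃* Q) :
    (sylowHom e).range = P := by
  rw [sylowHom, MonoidHom.range_comp, MonoidHom.range_eq_top.mpr e.symm.surjective,
    ← MonoidHom.range_eq_map, Subgroup.range_subtype]

theorem map_mem_normalizer_of_mem_iff {G : Type*} [Group G] {m : ℕ} (π : QuaternionGroup m →* G)
    {K : Subgroup G} {i : ZMod (2 * m)}
    (hmem : ∀ g, g ∈ K ↔ Commute g (π (a i)) ∧ Odd (orderOf g)) (p : QuaternionGroup m) :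
    π p ∈ Subgroup.normalizer (K : Set G) := by
  refine mem_normalizer_of_mem_iff hmem ?_
  simp only [← map_inv, ← map_mul]
  rcases p with l | l
  · exact Or.inl (congrArg π (a_conj_a i l))
  · exact Or.inr (congrArg π ((xa_conj_a i l).trans (a_inv i).symm))

theorem orderOf_sylowHom_a_two_pow {G : Type*} [Group G] {P : Sylow 2 G} {k b j : ℕ}
    (e : P ≃* QuaternionGroup (2 ^ k)) (hbj : b + j = k) :
    orderOf (sylowHom e (a (2 ^ b : ℕ))) = 2 ^ (j + 1) := by
  rw [orderOf_injective _ (sylowHom_injective e), pow_succ']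
  exact orderOf_a_natCast (by rw [← pow_add, hbj])

variable {G V : Type} [Group G] [Fintype G] [AddCommGroup V] [Module ℂ V] [FiniteDimensional ℂ V]
  {ρ : Representation ℂ G V} {P : Sylow 2 G} {k b j q : ℕ} {e : P ≃* QuaternionGroup (2 ^ k)}
  {K : Subgroup G} {hπ : ∀ p, sylowHom e p ∈ Subgroup.normalizer (K : Set G)}
  {O : Finset (IrreducibleCharacters K)}

theorem character_isotypicRepresentation_a_eq_zero (hρ : ρ.IsIrreducible) (hk : k ≠ 0)
    (hbj : b + j = k) (hdim : 2 ^ (b + 1) ∣ finrank ℂ V) (hKodd : Odd (Nat.card K))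
    (hO : ∀ p, conjHom (sylowHom e) hπ p • O = O) {i : ℕ} (hi : ¬ 2 ^ b ∣ i) :
    (isotypicRepresentation ρ (sylowHom e) hπ hO).character (a i) = 0 := by
  have horder : orderOf (sylowHom e (a i)) ∣ 2 ^ (k + 2) := by
    rw [orderOf_injective _ (sylowHom_injective e)]
    refine (orderOf_dvd_natCard _).trans (dvd_of_eq ?_)
    rw [Nat.card_eq_fintype_card, QuaternionGroup.card]
    ring
  have hcop : (orderOf (sylowHom e (a i))).Coprime (Nat.card K) :=
    ((Nat.coprime_two_left.mpr hKodd).pow_left _).coprime_dvd_left horder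
  rw [character_isotypicRepresentation, trace_mul_isotypicProjection]
  refine Finset.sum_eq_zero fun κ _ ↦ mul_eq_zero_of_right _ ?_
  refine character_eq_zero_of_two_pow_dvd_orderOf hρ e hk le_add_self ?_ hdim
    (r := j + 2) (by lia)
  refine ((two_pow_dvd_orderOf_a hbj hi).trans (dvd_of_eq ?_)).trans
    (orderOf_dvd_orderOf_mul (hπ _) κ.2 hcop)
  rw [orderOf_injective _ (sylowHom_injective e)]

theorem two_pow_dvd_finrank_range_isotypicProjection (hρ : ρ.IsIrreducible) {c : ℕ}
    (hdim : 2 ^ c ∣ finrank ℂ V) (hKodd : Odd (Nat.card K))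
    (hO : ∀ p, conjHom (sylowHom e) hπ p • O = O) :
    2 ^ c ∣ finrank ℂ (LinearMap.range (isotypicProjection (ρ.comp K.subtype) O)) :=
  pow_dvd_finrank_range_isotypicProjection hρ hO two_ne_zero (Nat.coprime_two_left.mpr hKodd)
    (Nat.coprime_two_left.mpr (range_sylowHom e ▸ odd_index P)) hdim

theorem exists_finrank_eigenspace_isotypicRepresentation (hρ : ρ.IsIrreducible) (hk : k ≠ 0)
    (hbj : b + j = k) (hdim : 2 ^ (b + 1) ∣ finrank ℂ V) (hKodd : Odd (Nat.card K))
    (hO : ∀ p, conjHom (sylowHom e) hπ p • O = O) :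
    ∃ m n : ℕ, Even (m + n) ∧
      finrank ℂ (End.eigenspace (isotypicRepresentation ρ (sylowHom e) hπ hO (a (2 ^ b : ℕ))) 1) =
        2 ^ b * m ∧
      finrank ℂ
        (End.eigenspace (isotypicRepresentation ρ (sylowHom e) hπ hO (a (2 ^ b : ℕ))) (-1)) =
        2 ^ b * n := by
  have hDh : 2 ^ b * 2 ^ j = 2 ^ k := by rw [← pow_add, hbj]
  have hvan (i : ℕ) (hi : ¬ 2 ^ b ∣ i) :=
    character_isotypicRepresentation_a_eq_zero hρ hk hbj hdim hKodd hO hi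
  obtain ⟨m, hm⟩ := dvd_finrank_eigenspace_a _ hDh hvan (one_pow _)
  obtain ⟨n, hn⟩ := dvd_finrank_eigenspace_a _ hDh hvan (even_two_mul (2 ^ j)).neg_one_pow
  have hsum := two_mul_dvd_finrank_eigenspace_add _ hDh hvan
    (pow_succ' 2 b ▸ two_pow_dvd_finrank_range_isotypicProjection hρ hdim hKodd hO)
  rw [hm, hn, ← mul_add, mul_comm 2] at hsum
  exact ⟨m, n, even_iff_two_dvd.mpr (Nat.dvd_of_mul_dvd_mul_left (by positivity) hsum), hm, hn⟩

theorem sum_odd_trace_eq_mul_finrank_sub (ρ : Representation ℂ G V) (hbj : b + j = k)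
    (hO : ∀ p, conjHom (sylowHom e) hπ p • O = O) :
    ∑ i ∈ Finset.range (2 * 2 ^ j) with Odd i, LinearMap.trace ℂ V
        (ρ (sylowHom e (a (2 ^ b : ℕ)) ^ i) * isotypicProjection (ρ.comp K.subtype) O) =
      2 ^ j * (
        finrank ℂ
          (End.eigenspace (isotypicRepresentation ρ (sylowHom e) hπ hO (a (2 ^ b : ℕ))) 1) -
        finrank ℂ
          (End.eigenspace (isotypicRepresentation ρ (sylowHom e) hπ hO (a (2 ^ b : ℕ))) (-1))) := by
  have hpow : (a (2 ^ b : ℕ) : QuaternionGroup (2 ^ k)) ^ (2 * 2 ^ j) = 1 := by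
    rw [← orderOf_a_natCast (D := 2 ^ b) (h := 2 ^ j) (by rw [← pow_add, hbj]), pow_orderOf_eq_one]
  have h := sum_odd_character_pow (isotypicRepresentation ρ (sylowHom e) hπ hO)
    (h := 2 ^ j) (by positivity) hpow
  simpa only [character_isotypicRepresentation, map_pow, Nat.cast_pow, Nat.cast_ofNat] using h

theorem sq_lt_of_norm_sq_lt {b j q t d : ℕ} {x : ℤ} (ht : t ≤ 2 ^ b) (hq : q ≤ b + j + 1)
    (h : ‖(2 ^ j * (2 ^ b * x) : ℂ)‖ ^ 2 < 2 ^ j * t * d ^ 2 * 2 ^ (q + 1)) :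
    x ^ 2 < (2 * d) ^ 2 := by
  have hnorm : ‖(2 ^ j * (2 ^ b * x) : ℂ)‖ ^ 2 = ((2 : ℝ) ^ j * 2 ^ b) ^ 2 * (x : ℝ) ^ 2 := by
    rw [norm_mul, norm_mul, norm_pow, norm_pow, Complex.norm_ofNat, Complex.norm_intCast,
      ← mul_assoc, mul_pow, sq_abs]
  have ht' : (t : ℝ) ≤ 2 ^ b := by exact_mod_cast ht
  have hreal : (x : ℝ) ^ 2 < (2 * d) ^ 2 := by
    refine lt_of_mul_lt_mul_left ?_ (by positivity : (0 : ℝ) ≤ (2 ^ j * 2 ^ b) ^ 2)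
    calc ((2 : ℝ) ^ j * 2 ^ b) ^ 2 * x ^ 2 < (2 : ℝ) ^ j * t * d ^ 2 * 2 ^ (q + 1) := hnorm ▸ h
      _ ≤ (2 : ℝ) ^ j * 2 ^ b * d ^ 2 * 2 ^ (b + j + 1 + 1) := by
        gcongr
        norm_num
      _ = _ := by ring
  exact_mod_cast hreal

-- Integrality and parity make the difference of the two dimensions a multiple of `2 * D * d`, where
-- `D = 2 ^ b` and `d` is the odd degree of the characters in `O`; since the orbit has at most `D`
-- elements, the Cauchy–Schwarz bound is too small for a nonzero multiple.
theorem finrank_eigenspace_isotypicRepresentation_eq (hρ : ρ.IsIrreducible) (hk : k ≠ 0)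
    (hbj : b + j = k) (hdim : 2 ^ (b + 1) ∣ finrank ℂ V) (hKodd : Odd (Nat.card K))
    (hK : K ≤ .centralizer {sylowHom e (a (2 ^ b : ℕ))})
    (hcard : Nat.card (Subgroup.centralizer {sylowHom e (a (2 ^ b : ℕ))}) = Nat.card K * 2 ^ q)
    (hq : q ≤ k + 1) (hO : ∀ p, conjHom (sylowHom e) hπ p • O = O)
    {φ : IrreducibleCharacters K} (hφ : φ ∈ O)
    (htrans : ∀ ψ ∈ O, ∃ p, conjHom (sylowHom e) hπ p • φ = ψ)
    {i : ZMod (2 * 2 ^ k)} (hfix : conjHom (sylowHom e) hπ (xa i) • φ = φ) :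
    finrank ℂ (End.eigenspace (isotypicRepresentation ρ (sylowHom e) hπ hO (a (2 ^ b : ℕ))) 1) =
      finrank ℂ
        (End.eigenspace (isotypicRepresentation ρ (sylowHom e) hπ hO (a (2 ^ b : ℕ))) (-1)) := by
  obtain ⟨d, hd, hφd⟩ := exists_odd_eq_isIrreducibleCharacter_one hKodd φ.2
  have hOd (ψ) (hψ : ψ ∈ O) : ψ.1 1 = d := by
    obtain ⟨p, rfl⟩ := htrans ψ hψ
    rw [smul_irreducibleCharacters_one, hφd]
  have hOcard : O.card ≤ 2 ^ b :=
    card_le_of_xa_smul_eq (by positivity) (conjHom (sylowHom e) hπ)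
      (by rw [conjHom_eq_one hK, one_smul]) hfix
      htrans
  have horder := orderOf_sylowHom_a_two_pow e hbj
  have hpow : sylowHom e (a (2 ^ b : ℕ)) ^ (2 * 2 ^ j) = 1 := by
    rw [← orderOf_dvd_iff_pow_eq_one, horder, pow_succ']
  obtain ⟨m, n, heven, hm, hn⟩ :=
    exists_finrank_eigenspace_isotypicRepresentation hρ hk hbj hdim hKodd hO
  have hsum := sum_odd_trace_eq_mul_finrank_sub ρ hbj hO
  rw [hm, hn, Nat.cast_mul, Nat.cast_mul, ← mul_sub] at hsum
  obtain ⟨z, hz⟩ := exists_sum_odd_trace_eq_mul ρ (O := O) (by positivity) hpow hK hOd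
  have hlt := norm_sum_odd_trace_sq_lt hρ e horder hK hKodd hcard ⟨φ, hφ⟩ hd.pos.ne' hOd
  rw [hsum] at hlt hz
  have hdz : (2 ^ b * (m - n : ℤ)) = d * z := by
    rw [Nat.cast_pow 2 j, Nat.cast_ofNat] at hz
    exact_mod_cast mul_left_cancel₀ (by simp) hz
  have hmn : m = n := eq_of_two_pow_mul_sub_eq_mul hd heven hdz
    (sq_lt_of_norm_sq_lt hOcard (hbj ▸ hq) (by exact_mod_cast hlt))
  rw [hm, hn, hmn]

theorem character_isotypicRepresentation_mem_inducedCone (hρ : ρ.IsIrreducible)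
    (hbj : b + j = k) (hj : j ≠ 0) (hdim : 2 ^ (b + 1) ∣ finrank ℂ V) (hKodd : Odd (Nat.card K))
    (hK : K ≤ .centralizer {sylowHom e (a (2 ^ b : ℕ))})
    (hcard : Nat.card (Subgroup.centralizer {sylowHom e (a (2 ^ b : ℕ))}) = Nat.card K * 2 ^ q)
    (hq : q ≤ k + 1) (hO : ∀ p, conjHom (sylowHom e) hπ p • O = O)
    (htrans : ∀ φ ∈ O, ∀ ψ ∈ O, ∃ p, conjHom (sylowHom e) hπ p • φ = ψ) :
    (isotypicRepresentation ρ (sylowHom e) hπ hO).character ∈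
      inducedCone (QuaternionGroup (2 ^ k)) (2 ^ (b + 1)) := by
  have hk : k ≠ 0 := by lia
  have hDh : 2 ^ b * 2 ^ j = 2 ^ k := by rw [← pow_add, hbj]
  have hvan (i : ℕ) (hi : ¬ 2 ^ b ∣ i) :=
    character_isotypicRepresentation_a_eq_zero hρ hk hbj hdim hKodd hO hi
  rw [pow_succ']
  by_cases hfix : ∃ φ ∈ O, ∃ i, conjHom (sylowHom e) hπ (xa i) • φ = φ
  · obtain ⟨φ, hφ, i, hi⟩ := hfix
    exact character_mem_inducedCone_of_finrank_eigenspace_eq _ hDh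
      (even_two.pow_of_ne_zero hj) hvan
      (finrank_eigenspace_isotypicRepresentation_eq hρ hk hbj hdim hKodd hK hcard hq hO hφ
        (htrans φ hφ) hi)
  · push Not at hfix
    refine character_mem_inducedCone_of_xa_eq_zero _ hDh (even_two.pow_of_ne_zero hk) hvan
      (fun i ↦ ?_)
      (pow_succ' 2 b ▸ two_pow_dvd_finrank_range_isotypicProjection hρ hdim hKodd hO)
    rw [character_isotypicRepresentation]
    exact trace_mul_isotypicProjection_eq_zero ρ (conjHom_apply _ hπ (xa i))
      fun φ hφ ↦ hfix φ hφ i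

end QuaternionSylow

section SylowRestriction

open scoped Pointwise
open QuaternionGroup

theorem natCast_div_card_mem_pIntegers {G : Type*} [Group G] [Finite G] {P : Sylow 2 G} {k d : ℕ}
    (e : P ≃* QuaternionGroup (2 ^ k)) (hd : 2 ^ (k + 2) ∣ d) :
    (d / Nat.card G : ℂ) ∈ pIntegers 2 := by
  obtain ⟨w, rfl⟩ := hd
  convert mul_mem (mem_pIntegers_of_isIntegral (isIntegral_natCast w))
    (natCast_inv_mem_pIntegers (Nat.coprime_two_left.mpr (odd_index P))) using 1
  rw [card_eq_two_pow_mul_index e]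
  push_cast
  field_simp

variable {G V : Type} [Group G] [Finite G] [AddCommGroup V] [Module ℂ V] [FiniteDimensional ℂ V]
  {ρ : Representation ℂ G V} {P : Sylow 2 G} {k c : ℕ}

theorem character_comp_sylowHom_mem_inducedCone_of_le (hρ : ρ.IsIrreducible)
    (e : P ≃* QuaternionGroup (2 ^ k)) {b j : ℕ} (hbj : b + j = k) (hj : j ≠ 0)
    (hdim : 2 ^ (b + 1) ∣ finrank ℂ V) :
    ρ.character ∘ sylowHom e ∈ inducedCone (QuaternionGroup (2 ^ k)) (2 ^ (b + 1)) := by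
  have := Fintype.ofFinite G
  obtain ⟨K, q, hmem, hcard, -, hq⟩ := exists_normal_complement_centralizer e (by lia)
    (by lia : 2 ≤ j + 1) (orderOf_sylowHom_a_two_pow e hbj)
  have hπ := map_mem_normalizer_of_mem_iff (sylowHom e) hmem
  let α := conjHom (sylowHom e) hπ
  let orbit (φ : IrreducibleCharacters K) : MulAction.orbitRel.Quotient α.range _ := ⟦φ⟧
  have horbit (p) (φ) : orbit (α p • φ) = orbit φ :=
    Quotient.sound (MulAction.mem_orbit φ (⟨α p, p, rfl⟩ : α.range))
  let O (ω) : Finset (IrreducibleCharacters K) := {φ | orbit φ = ω}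
  have hstable (ω) (p) : α p • O ω = O ω := by
    ext φ
    rw [← Finset.inv_smul_mem_iff, ← map_inv]
    simp only [O, Finset.mem_filter_univ, horbit]
  have hsum : ρ.character ∘ sylowHom e =
      ∑ ω, (isotypicRepresentation ρ (sylowHom e) hπ (hstable ω)).character := by
    funext p
    simp only [Finset.sum_apply, character_isotypicRepresentation, ← map_sum, ← Finset.mul_sum]
    rw [sum_isotypicProjection, isotypicProjection_univ, mul_one]
    rfl
  rw [hsum]
  refine sum_mem fun ω _ ↦ character_isotypicRepresentation_mem_inducedCone hρ hbj hj hdim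
    (odd_card_of_mem_iff hmem) (le_centralizer_of_mem_iff hmem) hcard hq (hstable ω) ?_
  intro φ hφ ψ hψ
  rw [Finset.mem_filter_univ] at hφ hψ
  obtain ⟨⟨_, p, rfl⟩, hp⟩ := Quotient.exact (hψ.trans hφ.symm)
  exact ⟨p, hp⟩

theorem le_of_two_pow_dvd_finrank (hρ : ρ.IsIrreducible) (e : P ≃* QuaternionGroup (2 ^ k))
    (hdim : 2 ^ c ∣ finrank ℂ V) : c ≤ k + 2 := by
  have hdvd : 2 ^ c ∣ Nat.card G := by
    have hdim0 := finrank_ne_zero_of_isIrreducible hρ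
    obtain ⟨w, hw⟩ := hdim
    have hw0 : (w : ℂ) ≠ 0 := fun h ↦ hdim0 (by rw [hw, Nat.cast_eq_zero.mp h, mul_zero])
    refine pow_dvd_of_natCast_div_mem_pIntegers two_ne_zero ?_
    convert mul_mem (card_div_finrank_mem_pIntegers (p := 2) hρ)
      (mem_pIntegers_of_isIntegral (isIntegral_natCast w)) using 1
    rw [hw]
    push_cast
    field_simp
  rw [card_eq_two_pow_mul_index e] at hdvd
  have hcop : (2 ^ c).Coprime P.index := (Nat.coprime_two_left.mpr (odd_index P)).pow_left c
  exact (Nat.pow_dvd_pow_iff_le_right one_lt_two).mp (hcop.dvd_of_dvd_mul_right hdvd)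

theorem character_eq_zero_of_orderOf_eq_two_pow (hρ : ρ.IsIrreducible)
    (e : P ≃* QuaternionGroup (2 ^ k)) (hk : k ≠ 0) (hdim : 2 ^ (k + 2) ∣ finrank ℂ V) {g : G}
    {t : ℕ} (ht : t ≠ 0) (hg : orderOf g = 2 ^ t) : ρ.character g = 0 := by
  obtain rfl | ht2 : t = 1 ∨ 2 ≤ t := by lia
  · exact character_eq_zero_of_orderOf_eq_two hρ (natCast_div_card_mem_pIntegers e hdim) hg
  · exact character_eq_zero_of_two_pow_dvd_orderOf hρ e hk ht2 hg.symm.dvd hdim (by lia)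

theorem character_comp_sylowHom_mem_inducedCone_card (hρ : ρ.IsIrreducible)
    (e : P ≃* QuaternionGroup (2 ^ k)) (hk : k ≠ 0) (hdim : 2 ^ (k + 2) ∣ finrank ℂ V) :
    ρ.character ∘ sylowHom e ∈ inducedCone (QuaternionGroup (2 ^ k)) (2 ^ (k + 2)) := by
  have hcard : Nat.card (QuaternionGroup (2 ^ k)) = 2 ^ (k + 2) := by
    rw [Nat.card_eq_fintype_card, QuaternionGroup.card]
    ring
  have hvan (x : QuaternionGroup (2 ^ k)) (hx : x ≠ 1) : ρ.character (sylowHom e x) = 0 := by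
    obtain ⟨t, -, ht⟩ := (Nat.dvd_prime_pow Nat.prime_two).mp (hcard ▸ orderOf_dvd_natCard x)
    refine character_eq_zero_of_orderOf_eq_two_pow hρ e hk hdim (t := t) ?_ ?_
    · rintro rfl
      exact hx (orderOf_eq_one_iff.mp ht)
    · rw [orderOf_injective _ (sylowHom_injective e), ht]
  obtain ⟨w, hw⟩ := hdim
  rw [← hcard]
  refine mem_inducedCone_card (w := w) ?_ hvan
  rw [Function.comp_apply, map_one, char_one, hw, hcard]
  push_cast
  rfl

theorem character_comp_sylowHom_mem_inducedCone_of_succ (hρ : ρ.IsIrreducible)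
    (e : P ≃* QuaternionGroup (2 ^ k)) (hk : k ≠ 0) (hdim : 2 ^ (k + 1) ∣ finrank ℂ V) :
    ρ.character ∘ sylowHom e ∈ inducedCone (QuaternionGroup (2 ^ k)) (2 ^ (k + 1)) := by
  have hvan (x : QuaternionGroup (2 ^ k)) (hx : 2 ^ 2 ∣ orderOf x) :
      ρ.character (sylowHom e x) = 0 :=
    character_eq_zero_of_two_pow_dvd_orderOf hρ e hk le_rfl
      (by rwa [orderOf_injective _ (sylowHom_injective e)]) hdim (by lia)
  rw [pow_succ'] at hdim ⊢
  exact character_mem_inducedCone_of_xa_eq_zero (ρ.comp (sylowHom e)) (mul_one _)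
    (even_two.pow_of_ne_zero hk) (fun i hi ↦ hvan _ (two_pow_dvd_orderOf_a (add_zero k) hi))
    (fun i ↦ hvan _ (orderOf_xa i).symm.dvd) hdim

theorem character_comp_sylowHom_mem_inducedCone (hρ : ρ.IsIrreducible)
    (e : P ≃* QuaternionGroup (2 ^ k)) (hk : k ≠ 0) (hdim : 2 ^ c ∣ finrank ℂ V) :
    ρ.character ∘ sylowHom e ∈ inducedCone (QuaternionGroup (2 ^ k)) (2 ^ c) := by
  have hc := le_of_two_pow_dvd_finrank hρ e hdim
  obtain rfl | ⟨b, rfl, hb⟩ | rfl | rfl :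
      c = 0 ∨ (∃ b, c = b + 1 ∧ b < k) ∨ c = k + 1 ∨ c = k + 2 := by
    cases c with
    | zero => exact Or.inl rfl
    | succ b => exact Or.inr (if hb : b < k then Or.inl ⟨b, rfl, hb⟩ else Or.inr (by lia))
  · exact character_mem_inducedCone_one (ρ.comp (sylowHom e))
  · exact character_comp_sylowHom_mem_inducedCone_of_le hρ e (Nat.add_sub_cancel' hb.le)
      (Nat.sub_ne_zero_of_lt hb) hdim
  · exact character_comp_sylowHom_mem_inducedCone_of_succ hρ e hk hdim
  · exact character_comp_sylowHom_mem_inducedCone_card hρ e hk hdim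

end SylowRestriction

theorem strong_form_of_quaternion_sylow
    (G : Type) [Group G] [Fintype G]
    (P : Sylow 2 G)
    (hquaternion : ∃ n : ℕ, 3 ≤ n ∧
      Nonempty (↥(P : Subgroup G) ≃* QuaternionGroup (2 ^ (n - 2)))) :
    ∀ (V : FDRep ℂ G), CategoryTheory.Simple V →
      SumInducedProperty 2 (P : Subgroup G) V.character (Module.finrank ℂ V) := by
  intro V _
  obtain ⟨n, hn, ⟨e⟩⟩ := hquaternion
  have hquaternionCone := character_comp_sylowHom_mem_inducedCone (isIrreducible_of_simple V) e
    (by lia) (Nat.ordProj_dvd (finrank ℂ V) 2)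
  have hcone : V.character ∘ (P : Subgroup G).subtype ∈
      inducedCone P (2 ^ (finrank ℂ V).factorization 2) := by
    convert comp_mem_inducedCone (φ := e.toMonoidHom) e.surjective hquaternionCone using 1
    funext x
    exact congrArg (fun y : P ↦ V.character y) (e.symm_apply_apply x).symm
  exact exists_fin_sum_of_mem_inducedCone hcone
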